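/- arXiv:1206.4541 — 7 statements merged into one kernel-verified Lean document; each statement's English description precedes it below -/
import Mathlib

section
/- Let c > 0 be a real number, let δ be a real number with 3 < δ < (5π/4)·c, and let n be a positive even integer with 2c/π < n ≤ 2c/π + (2/π²)·δ·log(4·e·π·c/δ) − 3. Let ψ be the n-th PSWF with band limit c, with ODE eigenvalue χ_n, and assume ψ(0) ≠ 0. Then (7/(2·|ψ(0)|)) · ((4·χ_n/c² − 2)⁴ / (3·χ_n/c² − 1)) · (χ_n − c²)^{1/4} < (448/3)·(8/π)^{1/4}·δ^{1/4}·c^{3/4}·(1 + 6δ/(π·c))·(1 + 16δ/(π·c))³. -/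
open Real

/-- `IsPSWF c n ψ χ lam` : `ψ` is the `n`-th prolate spheroidal wave function with
band limit `c`, ODE eigenvalue `χ` and integral eigenvalue `lam`. -/
def IsPSWF (c : ℝ) (n : ℕ) (ψ : ℝ → ℝ) (χ : ℝ) (lam : ℂ) : Prop :=
  ContinuousOn ψ (Set.Icc (-1) 1) ∧
  (∀ x ∈ Set.Ioo (-1 : ℝ) 1, DifferentiableAt ℝ ψ x ∧ DifferentiableAt ℝ (deriv ψ) x) ∧
  (∀ x ∈ Set.Ioo (-1 : ℝ) 1,
    (1 - x ^ 2) * deriv (deriv ψ) x - 2 * x * deriv ψ x + (χ - c ^ 2 * x ^ 2) * ψ x = 0) ∧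
  {x | x ∈ Set.Ioo (-1 : ℝ) 1 ∧ ψ x = 0}.Finite ∧
  {x | x ∈ Set.Ioo (-1 : ℝ) 1 ∧ ψ x = 0}.ncard = n ∧
  (∫ t in (-1 : ℝ)..1, (ψ t) ^ 2) = 1 ∧
  ∀ x ∈ Set.Icc (-1 : ℝ) 1,
    lam * (ψ x : ℂ) =
      ∫ t in (-1 : ℝ)..1, (ψ t : ℂ) * Complex.exp (Complex.I * (c : ℂ) * (x : ℂ) * (t : ℂ))

lemma hd_congr {f g : ℝ → ℝ} {f' g' x : ℝ} (h : HasDerivAt f f' x) (hfg : ∀ t, g t = f t)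
    (h' : g' = f') : HasDerivAt g g' x := by
  have : g = f := funext hfg
  rw [this, h']; exact h

/-- Working form of the ODE: `d` is the derivative of `ψ`. -/
structure PSol (c χ : ℝ) (ψ d : ℝ → ℝ) : Prop where
  cont : ContinuousOn ψ (Set.Icc (-1) 1)
  h1 : ∀ x ∈ Set.Ioo (-1 : ℝ) 1, HasDerivAt ψ (d x) x
  h2 : ∀ x ∈ Set.Ioo (-1 : ℝ) 1,
    HasDerivAt (fun t => (1 - t ^ 2) * d t) (-((χ - c ^ 2 * x ^ 2) * ψ x)) x

lemma PSol.neg {c χ : ℝ} {ψ d : ℝ → ℝ} (h : PSol c χ ψ d) :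
    PSol c χ (fun x => -ψ x) (fun x => -d x) := by
  refine ⟨h.cont.neg, fun x hx => (h.h1 x hx).neg, fun x hx => ?_⟩
  exact hd_congr (h.h2 x hx).neg (fun t => by simp) (by ring)

lemma PSol.refl {c χ : ℝ} {ψ d : ℝ → ℝ} (h : PSol c χ ψ d) :
    PSol c χ (fun x => ψ (-x)) (fun x => -d (-x)) := by
  have hm : ∀ x ∈ Set.Ioo (-1 : ℝ) 1, -x ∈ Set.Ioo (-1 : ℝ) 1 := by
    intro x hx; constructor <;> linarith [hx.1, hx.2]
  refine ⟨?_, fun x hx => ?_, fun x hx => ?_⟩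
  · refine h.cont.comp continuous_neg.continuousOn ?_
    intro x hx; constructor <;> linarith [hx.1, hx.2]
  · exact hd_congr ((h.h1 (-x) (hm x hx)).comp x (hasDerivAt_neg x)) (fun t => rfl) (by ring)
  · exact hd_congr ((h.h2 (-x) (hm x hx)).comp x (hasDerivAt_neg x)).neg (fun t => by simp)
      (by ring)

lemma PSol.of_isPSWF_aux {c χ : ℝ} {ψ : ℝ → ℝ} (hc : ContinuousOn ψ (Set.Icc (-1) 1))
    (hd : ∀ x ∈ Set.Ioo (-1 : ℝ) 1, DifferentiableAt ℝ ψ x ∧ DifferentiableAt ℝ (deriv ψ) x)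
    (ho : ∀ x ∈ Set.Ioo (-1 : ℝ) 1,
    (1 - x ^ 2) * deriv (deriv ψ) x - 2 * x * deriv ψ x + (χ - c ^ 2 * x ^ 2) * ψ x = 0) :
    PSol c χ ψ (deriv ψ) := by
  refine ⟨hc, fun x hx => (hd x hx).1.hasDerivAt, fun x hx => ?_⟩
  have h1 : HasDerivAt (fun t : ℝ => 1 - t ^ 2) (-(2 * x)) x := by
    exact hd_congr (((hasDerivAt_id x).pow 2).const_sub 1) (fun t => by simp) (by simp)
  exact hd_congr (h1.mul (hd x hx).2.hasDerivAt) (fun t => rfl) (by linarith [ho x hx])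

lemma PSol.bound {c χ : ℝ} {ψ d : ℝ → ℝ} (h : PSol c χ ψ d) :
    ∃ B : ℝ, 0 ≤ B ∧ ∀ x ∈ Set.Icc (-1 : ℝ) 1, |ψ x| ≤ B := by
  obtain ⟨B, hB⟩ := isCompact_Icc.exists_bound_of_continuousOn h.cont
  refine ⟨B, ?_, fun x hx => by simpa using hB x hx⟩
  exact (norm_nonneg _).trans (hB 0 (by norm_num))

lemma PSol.G_le {c χ : ℝ} {ψ d : ℝ → ℝ} (h : PSol c χ ψ d) {B M : ℝ} (hB0 : 0 ≤ B)
    (hB : ∀ x ∈ Set.Icc (-1 : ℝ) 1, |ψ x| ≤ B)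
    (hM : ∀ x ∈ Set.Icc (-1 : ℝ) 1, |(χ - c ^ 2 * x ^ 2) * ψ x| ≤ M) :
    ∀ x ∈ Set.Ioo (-1 : ℝ) 1, (1 - x ^ 2) * d x ≤ M * (1 - x) := by
  intro x hx
  by_contra hcon
  push Not at hcon
  set η := (1 - x ^ 2) * d x - M * (1 - x) with hη
  have hηpos : 0 < η := by rw [hη]; linarith
  have hsub : ∀ t ∈ Set.Ico x 1, t ∈ Set.Ioo (-1 : ℝ) 1 := fun t ht =>
    ⟨lt_of_lt_of_le hx.1 ht.1, ht.2⟩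
  have hmono : MonotoneOn (fun t => (1 - t ^ 2) * d t + M * t) (Set.Ico x 1) := by
    apply monotoneOn_of_hasDerivWithinAt_nonneg (convex_Ico _ _)
      (f' := fun t => -((χ - c ^ 2 * t ^ 2) * ψ t) + M * 1)
    · intro t ht
      exact (((h.h2 t (hsub t ht)).add ((hasDerivAt_id t).const_mul M)).continuousAt).continuousWithinAt
    · intro t ht
      rw [interior_Ico] at ht
      exact ((h.h2 t (hsub t ⟨ht.1.le, ht.2⟩)).add ((hasDerivAt_id t).const_mul M)).hasDerivWithinAt
    · intro t ht
      rw [interior_Ico] at ht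
      have := hM t ⟨by linarith [hx.1, ht.1], ht.2.le⟩
      have := (abs_le.mp this).2
      linarith
  have hGge : ∀ t ∈ Set.Ico x 1, η ≤ (1 - t ^ 2) * d t := by
    intro t ht
    have h3 := hmono ⟨le_refl x, hx.2⟩ ht ht.1
    simp only at h3
    have hM0 : 0 ≤ M := (abs_nonneg _).trans (hM 0 (by norm_num))
    have : M * t ≤ M * 1 := mul_le_mul_of_nonneg_left ht.2.le hM0
    rw [hη]; linarith
  have hmono2 : MonotoneOn (fun t => ψ t + η / 2 * Real.log (1 - t)) (Set.Ico x 1) := by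
    have hder : ∀ t ∈ Set.Ico x 1, HasDerivAt (fun t => ψ t + η / 2 * Real.log (1 - t))
        (d t + η / 2 * (-1 / (1 - t))) t := by
      intro t ht
      have h5 : HasDerivAt (fun t : ℝ => 1 - t) (-1) t := by
        simpa using (hasDerivAt_id t).const_sub 1
      exact (h.h1 t (hsub t ht)).add ((h5.log (by linarith [ht.2])).const_mul _)
    apply monotoneOn_of_hasDerivWithinAt_nonneg (convex_Ico _ _)
      (f' := fun t => d t + η / 2 * (-1 / (1 - t)))
    · intro t ht
      exact (hder t ht).continuousAt.continuousWithinAt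
    · intro t ht
      rw [interior_Ico] at ht
      exact (hder t ⟨ht.1.le, ht.2⟩).hasDerivWithinAt
    · intro t ht
      rw [interior_Ico] at ht
      have hg := hGge t ⟨ht.1.le, ht.2⟩
      have h1t : 0 < 1 - t := by linarith [ht.2]
      have hp : 0 < 1 - t ^ 2 := by nlinarith [ht.1, hx.1, ht.2]
      have hd : 0 < d t := by
        by_contra hneg; push Not at hneg
        nlinarith
      have : η ≤ 2 * (1 - t) * d t := by nlinarith [ht.2, mul_pos (mul_pos h1t h1t) hd]
      have h6 : d t + η / 2 * (-1 / (1 - t)) = (2 * (1 - t) * d t - η) / (2 * (1 - t)) := by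
        field_simp; ring
      rw [h6]
      apply div_nonneg <;> linarith
  -- contradiction
  set k := (4 * B + 1) / η with hk
  have hkpos : 0 < k := by positivity
  have h1x : 0 < 1 - x := by linarith [hx.2]
  set t := 1 - (1 - x) * Real.exp (-k) with ht
  have hexp : Real.exp (-k) < 1 := by rw [Real.exp_lt_one_iff]; linarith
  have htI : t ∈ Set.Ico x 1 := by
    constructor
    · rw [ht]; nlinarith
    · rw [ht]; nlinarith [Real.exp_pos (-k), mul_pos h1x (Real.exp_pos (-k))]
  have h7 := hmono2 ⟨le_refl x, hx.2⟩ htI htI.1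
  simp only at h7
  have h8 : Real.log (1 - t) = Real.log (1 - x) - k := by
    have : 1 - t = (1 - x) * Real.exp (-k) := by rw [ht]; ring
    rw [this, Real.log_mul h1x.ne' (Real.exp_pos _).ne', Real.log_exp]; ring
  rw [h8] at h7
  have h9 := (abs_le.mp (hB x ⟨hx.1.le, hx.2.le⟩)).1
  have h10 := (abs_le.mp (hB t ⟨by linarith [hx.1, htI.1], htI.2.le⟩)).2
  have h11 : η * k = 4 * B + 1 := by rw [hk]; field_simp
  nlinarith

lemma PSol.G_tendsto {c χ : ℝ} {ψ d : ℝ → ℝ} (h : PSol c χ ψ d) :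
    ∃ M : ℝ, ∀ x ∈ Set.Ioo (-1 : ℝ) 1, |(1 - x ^ 2) * d x| ≤ M * (1 - x) := by
  obtain ⟨B, hB0, hB⟩ := h.bound
  have hc : ContinuousOn (fun x => (χ - c ^ 2 * x ^ 2) * ψ x) (Set.Icc (-1) 1) :=
    ContinuousOn.mul (by fun_prop) h.cont
  obtain ⟨M, hM⟩ := isCompact_Icc.exists_bound_of_continuousOn hc
  refine ⟨M, fun x hx => abs_le.mpr ⟨?_, ?_⟩⟩
  · have := h.neg.G_le hB0 (M := M) (by simpa using hB)
      (by intro x hx; simpa [abs_mul] using hM x hx) x hx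
    linarith
  · exact h.G_le hB0 hB (by simpa using hM) x hx

lemma PSol.G_lim {c χ : ℝ} {ψ d : ℝ → ℝ} (h : PSol c χ ψ d) :
    Filter.Tendsto (fun x => (1 - x ^ 2) * d x) (nhdsWithin 1 (Set.Iio 1)) (nhds 0) := by
  obtain ⟨M, hM⟩ := h.G_tendsto
  have h0 : Filter.Tendsto (fun x : ℝ => M * (1 - x)) (nhdsWithin 1 (Set.Iio 1)) (nhds 0) := by
    have : Filter.Tendsto (fun x : ℝ => M * (1 - x)) (nhds 1) (nhds (M * (1 - 1))) :=
      Continuous.tendsto (by fun_prop) 1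
    simp only [sub_self, mul_zero] at this
    exact this.mono_left nhdsWithin_le_nhds
  refine squeeze_zero_norm' ?_ h0
  have : Set.Ioo (-1 : ℝ) 1 ∈ nhdsWithin (1 : ℝ) (Set.Iio 1) := Ioo_mem_nhdsLT (by norm_num)
  filter_upwards [this] with x hx
  exact hM x hx

lemma PSol.psiG_lim {c χ : ℝ} {ψ d φ : ℝ → ℝ} (h : PSol c χ ψ d) {B : ℝ}
    (hB : ∀ x ∈ Set.Icc (-1 : ℝ) 1, |φ x| ≤ B) :
    Filter.Tendsto (fun x => φ x * ((1 - x ^ 2) * d x)) (nhdsWithin 1 (Set.Iio 1)) (nhds 0) := by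
  have h0 := (h.G_lim.norm.const_mul B)
  simp only [norm_zero, mul_zero] at h0
  refine squeeze_zero_norm' ?_ h0
  have : Set.Ioo (-1 : ℝ) 1 ∈ nhdsWithin (1 : ℝ) (Set.Iio 1) := Ioo_mem_nhdsLT (by norm_num)
  filter_upwards [this] with x hx
  rw [norm_mul]
  exact mul_le_mul_of_nonneg_right (hB x ⟨hx.1.le, hx.2.le⟩) (norm_nonneg _)

lemma PSol.d_zero {c χ : ℝ} {ψ d : ℝ → ℝ} (h : PSol c χ ψ d) (h0 : ψ 0 ≠ 0) : d 0 = 0 := by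
  obtain ⟨B, hB0, hB⟩ := h.bound
  have hr := h.refl
  have hB' : ∀ x ∈ Set.Icc (-1 : ℝ) 1, |ψ (-x)| ≤ B := fun x hx =>
    hB (-x) ⟨by linarith [hx.2], by linarith [hx.1]⟩
  set W : ℝ → ℝ := fun t => ψ (-t) * ((1 - t ^ 2) * d t) - ψ t * ((1 - t ^ 2) * (-d (-t))) with hW
  have hlim : Filter.Tendsto W (nhdsWithin 1 (Set.Iio 1)) (nhds 0) := by
    have := (h.psiG_lim hB').sub (hr.psiG_lim hB)
    rw [sub_zero] at this
    exact this
  have hder : ∀ t ∈ Set.Ioo (-1 : ℝ) 1, HasDerivAt W 0 t := by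
    intro t ht
    exact hd_congr (((hr.h1 t ht).mul (h.h2 t ht)).sub ((h.h1 t ht).mul (hr.h2 t ht)))
      (fun t => rfl) (by ring)
  have hconst : ∀ t ∈ Set.Ioo (-1 : ℝ) 1, W t = W 0 := by
    intro t ht
    refine (convex_Ioo (-1 : ℝ) 1).is_const_of_fderivWithin_eq_zero (𝕜 := ℝ) (f := W) ?_ ?_ ht
      (by norm_num)
    · intro x hx; exact (hder x hx).differentiableAt.differentiableWithinAt
    · intro x hx
      rw [fderivWithin_of_isOpen isOpen_Ioo hx]
      have := (hder x hx).hasFDerivAt.fderiv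
      rw [this]; ext; simp
  have hlim2 : Filter.Tendsto W (nhdsWithin 1 (Set.Iio 1)) (nhds (W 0)) := by
    refine Filter.Tendsto.congr' ?_ tendsto_const_nhds
    have : Set.Ioo (-1 : ℝ) 1 ∈ nhdsWithin (1 : ℝ) (Set.Iio 1) := Ioo_mem_nhdsLT (by norm_num)
    filter_upwards [this] with x hx
    exact (hconst x hx).symm
  have hW0 : W 0 = 0 := tendsto_nhds_unique hlim2 hlim
  simp only [hW] at hW0
  norm_num at hW0
  rcases hW0 with h | h
  · exact absurd h h0
  · exact h

lemma hd_one_sub_sq (x : ℝ) : HasDerivAt (fun t : ℝ => 1 - t ^ 2) (-(2 * x)) x :=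
  hd_congr (((hasDerivAt_id x).pow 2).const_sub 1) (fun t => by simp) (by simp)

lemma hd_q (χ c x : ℝ) : HasDerivAt (fun t : ℝ => χ - c ^ 2 * t ^ 2) (-(2 * c ^ 2 * x)) x :=
  hd_congr ((((hasDerivAt_id x).pow 2).const_mul (c ^ 2)).const_sub χ) (fun t => by simp)
    (by simp; ring)

lemma PSol.V_deriv {c χ : ℝ} {ψ d : ℝ → ℝ} (h : PSol c χ ψ d) {t : ℝ}
    (ht : t ∈ Set.Ioo (-1 : ℝ) 1) :
    HasDerivAt (fun t => (1 - t ^ 2) * (χ - c ^ 2 * t ^ 2) * ψ t ^ 2 + ((1 - t ^ 2) * d t) ^ 2)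
      (-(2 * t * ((χ - c ^ 2 * t ^ 2) + c ^ 2 * (1 - t ^ 2)) * ψ t ^ 2)) t := by
  have h1 := ((hd_one_sub_sq t).mul (hd_q χ c t)).mul ((h.h1 t ht).pow 2)
  have h2 := (h.h2 t ht).pow 2
  refine hd_congr (h1.add h2) (fun t => by simp) ?_
  simp
  ring

lemma PSol.V_le {c χ : ℝ} {ψ d : ℝ → ℝ} (h : PSol c χ ψ d) (hd0 : d 0 = 0)
    (hχ : c ^ 2 < χ) {t : ℝ} (ht : t ∈ Set.Ico (0 : ℝ) 1) :
    (1 - t ^ 2) * (χ - c ^ 2 * t ^ 2) * ψ t ^ 2 + ((1 - t ^ 2) * d t) ^ 2 ≤ χ * ψ 0 ^ 2 := by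
  have hanti : AntitoneOn (fun t => (1 - t ^ 2) * (χ - c ^ 2 * t ^ 2) * ψ t ^ 2 +
      ((1 - t ^ 2) * d t) ^ 2) (Set.Ico 0 1) := by
    apply antitoneOn_of_hasDerivWithinAt_nonpos (convex_Ico _ _)
      (f' := fun t => -(2 * t * ((χ - c ^ 2 * t ^ 2) + c ^ 2 * (1 - t ^ 2)) * ψ t ^ 2))
    · intro x hx
      exact (h.V_deriv ⟨by linarith [hx.1], hx.2⟩).continuousAt.continuousWithinAt
    · intro x hx
      rw [interior_Ico] at hx
      exact (h.V_deriv ⟨by linarith [hx.1], hx.2⟩).hasDerivWithinAt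
    · intro x hx
      rw [interior_Ico] at hx
      have hp : 0 ≤ 1 - x ^ 2 := by nlinarith [hx.1, hx.2]
      have hq : 0 ≤ χ - c ^ 2 * x ^ 2 := by nlinarith [mul_nonneg (sq_nonneg c) hp]
      have hx0 := hx.1.le
      have : 0 ≤ 2 * x * ((χ - c ^ 2 * x ^ 2) + c ^ 2 * (1 - x ^ 2)) * ψ x ^ 2 := by positivity
      linarith
  have := hanti ⟨le_refl 0, by norm_num⟩ ht ht.1
  simpa [hd0] using this

lemma PSol.half_norm {c χ : ℝ} {ψ d : ℝ → ℝ} (h : PSol c χ ψ d) (hd0 : d 0 = 0) (hc : 0 < c)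
    (hχ : c ^ 2 < χ) : ∫ t in (0 : ℝ)..1, ψ t ^ 2 ≤ ψ 0 ^ 2 * (1 + 3 * χ / c) := by
  set Φ : ℝ → ℝ := fun t => -((1 - t) * ψ t ^ 2) + ψ t * ((1 - t ^ 2) * d t) / c
    - ((1 - t ^ 2) * (χ - c ^ 2 * t ^ 2) * ψ t ^ 2 + ((1 - t ^ 2) * d t) ^ 2) / c
    + 2 * χ * ψ 0 ^ 2 / c * t with hΦ
  have hder : ∀ t ∈ Set.Ioo (-1 : ℝ) 1, HasDerivAt Φ
      (ψ t ^ 2 - 2 * (1 - t) * ψ t * d t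
        + (d t * ((1 - t ^ 2) * d t) - (χ - c ^ 2 * t ^ 2) * ψ t ^ 2) / c
        + 2 * t * ((χ - c ^ 2 * t ^ 2) + c ^ 2 * (1 - t ^ 2)) * ψ t ^ 2 / c
        + 2 * χ * ψ 0 ^ 2 / c) t := by
    intro t ht
    have h5 : HasDerivAt (fun t : ℝ => 1 - t) (-1) t := by
      simpa using (hasDerivAt_id t).const_sub 1
    have e1 := (h5.mul ((h.h1 t ht).pow 2)).neg
    have e2 := ((h.h1 t ht).mul (h.h2 t ht)).div_const c
    have e3 := (h.V_deriv ht).div_const c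
    have e4 := (hasDerivAt_id t).const_mul (2 * χ * ψ 0 ^ 2 / c)
    refine hd_congr (((e1.add e2).sub e3).add e4) (fun t => by simp [hΦ]) ?_
    simp
    ring
  have hge : ∀ t ∈ Set.Ico (0 : ℝ) 1, ψ t ^ 2 ≤ (ψ t ^ 2 - 2 * (1 - t) * ψ t * d t
        + (d t * ((1 - t ^ 2) * d t) - (χ - c ^ 2 * t ^ 2) * ψ t ^ 2) / c
        + 2 * t * ((χ - c ^ 2 * t ^ 2) + c ^ 2 * (1 - t ^ 2)) * ψ t ^ 2 / c
        + 2 * χ * ψ 0 ^ 2 / c) := by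
    intro t ht
    have hV := h.V_le hd0 hχ ht
    set p := 1 - t ^ 2 with hp
    set q := χ - c ^ 2 * t ^ 2 with hq
    have hp0 : 0 ≤ p := by rw [hp]; nlinarith [ht.1, ht.2]
    have hqp : c ^ 2 * p ≤ q := by rw [hp, hq]; nlinarith
    have hcp : 0 ≤ c ^ 2 * p := by positivity
    have hχ0 : 0 ≤ χ := by nlinarith [sq_nonneg c]
    have hk : (1 - 2 * t) * (q + c ^ 2 * p) * ψ t ^ 2 ≤ 2 * χ * ψ 0 ^ 2 := by
      rcases le_total (1 / 2) t with h2 | h2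
      · have a1 : 0 ≤ (2 * t - 1) * ((q + c ^ 2 * p) * ψ t ^ 2) := by
          apply mul_nonneg (by linarith)
          apply mul_nonneg (by linarith) (sq_nonneg _)
        have a2 : 0 ≤ 2 * χ * ψ 0 ^ 2 := by positivity
        nlinarith
      · have a1 : (1 - 2 * t) * (q + c ^ 2 * p) ≤ p * (2 * q) := by
          apply mul_le_mul
          · rw [hp]; nlinarith [ht.1, ht.2]
          · linarith
          · linarith
          · exact hp0
        have a2 := mul_le_mul_of_nonneg_right a1 (sq_nonneg (ψ t))
        nlinarith [sq_nonneg (p * d t)]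
    have hy : 2 * (1 - t) * ψ t * d t * c ≤ p * d t ^ 2 + c ^ 2 * p * ψ t ^ 2 := by
      have : p = (1 - t) * (1 + t) := by rw [hp]; ring
      have h1t : 0 ≤ 1 - t := by linarith [ht.2]
      have b1 : 0 ≤ (1 - t) * (d t - c * ψ t) ^ 2 := by positivity
      have b2 : 0 ≤ (1 - t) * t * (d t ^ 2 + c ^ 2 * ψ t ^ 2) := by
        have := ht.1; positivity
      rw [this]; nlinarith
    have hfin : (ψ t ^ 2 - 2 * (1 - t) * ψ t * d t
        + (d t * (p * d t) - q * ψ t ^ 2) / c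
        + 2 * t * (q + c ^ 2 * p) * ψ t ^ 2 / c
        + 2 * χ * ψ 0 ^ 2 / c) - ψ t ^ 2 = ((p * d t ^ 2 + c ^ 2 * p * ψ t ^ 2
          - 2 * (1 - t) * ψ t * d t * c) + (2 * χ * ψ 0 ^ 2 -
            (1 - 2 * t) * (q + c ^ 2 * p) * ψ t ^ 2)) / c := by
      field_simp; ring
    have : 0 ≤ ((p * d t ^ 2 + c ^ 2 * p * ψ t ^ 2
          - 2 * (1 - t) * ψ t * d t * c) + (2 * χ * ψ 0 ^ 2 -
            (1 - 2 * t) * (q + c ^ 2 * p) * ψ t ^ 2)) / c :=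
      div_nonneg (by linarith) hc.le
    linarith
  have hcont : ContinuousOn (fun t => ψ t ^ 2) (Set.Icc 0 1) :=
    (h.cont.mono (Set.Icc_subset_Icc (by norm_num) le_rfl)).pow 2
  have hnormI : MeasureTheory.IntegrableOn (fun t => ψ t ^ 2) (Set.Icc 0 1) :=
    hcont.integrableOn_Icc
  have hpart : ∀ b ∈ Set.Ioo (0 : ℝ) 1, ∫ t in (0 : ℝ)..b, ψ t ^ 2 ≤
      ψ b * ((1 - b ^ 2) * d b) / c + ψ 0 ^ 2 * (1 + 3 * χ / c) := by
    intro b hb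
    have h1 : ∫ t in (0 : ℝ)..b, ψ t ^ 2 ≤ Φ b - Φ 0 := by
      apply intervalIntegral.integral_le_sub_of_hasDeriv_right_of_le hb.1.le
        (g' := fun t => (ψ t ^ 2 - 2 * (1 - t) * ψ t * d t
        + (d t * ((1 - t ^ 2) * d t) - (χ - c ^ 2 * t ^ 2) * ψ t ^ 2) / c
        + 2 * t * ((χ - c ^ 2 * t ^ 2) + c ^ 2 * (1 - t ^ 2)) * ψ t ^ 2 / c
        + 2 * χ * ψ 0 ^ 2 / c))
      · intro x hx
        exact (hder x ⟨by linarith [hx.1], by linarith [hx.2, hb.2]⟩).continuousAt.continuousWithinAt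
      · intro x hx
        exact (hder x ⟨by linarith [hx.1], by linarith [hx.2, hb.2]⟩).hasDerivWithinAt
      · exact hnormI.mono_set (Set.Icc_subset_Icc le_rfl hb.2.le)
      · intro x hx
        exact hge x ⟨hx.1.le, by linarith [hx.2, hb.2]⟩
    have hΦ0 : Φ 0 = -ψ 0 ^ 2 - χ * ψ 0 ^ 2 / c := by simp [hΦ, hd0]
    have hp : 0 ≤ 1 - b ^ 2 := by nlinarith [hb.1, hb.2]
    have hq : 0 ≤ χ - c ^ 2 * b ^ 2 := by nlinarith [mul_nonneg (sq_nonneg c) hp]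
    have hχ0 : 0 ≤ χ := by nlinarith [sq_nonneg c]
    have hΦb : Φ b ≤ ψ b * ((1 - b ^ 2) * d b) / c + 2 * χ * ψ 0 ^ 2 / c := by
      have a1 : 0 ≤ (1 - b) * ψ b ^ 2 := mul_nonneg (by linarith [hb.2]) (sq_nonneg _)
      have a2 : 0 ≤ ((1 - b ^ 2) * (χ - c ^ 2 * b ^ 2) * ψ b ^ 2 + ((1 - b ^ 2) * d b) ^ 2) / c := by
        positivity
      have a3 : 2 * χ * ψ 0 ^ 2 / c * b ≤ 2 * χ * ψ 0 ^ 2 / c * 1 :=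
        mul_le_mul_of_nonneg_left hb.2.le (by positivity)
      simp only [hΦ]; linarith
    rw [hΦ0] at h1
    have : ψ 0 ^ 2 * (1 + 3 * χ / c) = ψ 0 ^ 2 + χ * ψ 0 ^ 2 / c + 2 * χ * ψ 0 ^ 2 / c := by
      ring
    linarith
  obtain ⟨B, hB0, hB⟩ := h.bound
  have hl1 : Filter.Tendsto (fun b => ψ b * ((1 - b ^ 2) * d b) / c + ψ 0 ^ 2 * (1 + 3 * χ / c))
      (nhdsWithin 1 (Set.Iio 1)) (nhds (0 / c + ψ 0 ^ 2 * (1 + 3 * χ / c))) :=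
    ((h.psiG_lim hB).div_const c).add tendsto_const_nhds
  rw [zero_div, zero_add] at hl1
  have hl2 : Filter.Tendsto (fun b => ∫ t in (0 : ℝ)..b, ψ t ^ 2)
      (nhdsWithin 1 (Set.Iio 1)) (nhds (∫ t in (0 : ℝ)..1, ψ t ^ 2)) := by
    have hcp : ContinuousOn (fun b => ∫ t in (0 : ℝ)..b, ψ t ^ 2) (Set.uIcc 0 1) := by
      apply intervalIntegral.continuousOn_primitive_interval
      rw [Set.uIcc_of_le (by norm_num)]; exact hnormI
    rw [Set.uIcc_of_le (by norm_num)] at hcp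
    have := hcp 1 (by norm_num)
    refine Filter.Tendsto.mono_left this ?_
    rw [nhdsWithin_le_iff]
    exact Filter.mem_of_superset (Ioo_mem_nhdsLT (a := (0 : ℝ)) (by norm_num)) Set.Ioo_subset_Icc_self
  refine le_of_tendsto_of_tendsto hl2 hl1 ?_
  filter_upwards [Ioo_mem_nhdsLT (a := (0 : ℝ)) (b := 1) (by norm_num)] with b hb
  exact hpart b hb

lemma PSol.norm_bound {c χ : ℝ} {ψ d : ℝ → ℝ} (h : PSol c χ ψ d) (h0 : ψ 0 ≠ 0) (hc : 0 < c)
    (hχ : c ^ 2 < χ) : ∫ t in (-1 : ℝ)..1, ψ t ^ 2 ≤ 2 * (ψ 0 ^ 2 * (1 + 3 * χ / c)) := by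
  have h1 := h.half_norm (h.d_zero h0) hc hχ
  have h2 := h.refl.half_norm (by simp [h.d_zero h0]) hc hχ
  have h3 : ∫ t in (0 : ℝ)..1, ψ (-t) ^ 2 = ∫ t in (-1 : ℝ)..0, ψ t ^ 2 := by
    have := intervalIntegral.integral_comp_neg (a := 0) (b := 1) (fun t => ψ t ^ 2)
    simpa using this
  have hc2 : ContinuousOn (fun t => ψ t ^ 2) (Set.Icc (-1) 1) := h.cont.pow 2
  have h4 : (∫ t in (-1 : ℝ)..0, ψ t ^ 2) + ∫ t in (0 : ℝ)..1, ψ t ^ 2 =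
      ∫ t in (-1 : ℝ)..1, ψ t ^ 2 := by
    apply intervalIntegral.integral_add_adjacent_intervals
    · apply ContinuousOn.intervalIntegrable
      rw [Set.uIcc_of_le (by norm_num)]
      exact hc2.mono (Set.Icc_subset_Icc le_rfl (by norm_num))
    · apply ContinuousOn.intervalIntegrable
      rw [Set.uIcc_of_le (by norm_num)]
      exact hc2.mono (Set.Icc_subset_Icc (by norm_num) le_rfl)
  simp only [neg_zero] at h2
  rw [h3] at h2
  linarith

lemma PSol.gap {c χ : ℝ} {ψ d : ℝ → ℝ} (h : PSol c χ ψ d) (hc : 0 < c) (hχ : χ < c ^ 2)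
    {y z ξ : ℝ} (hy : y ∈ Set.Ioo (-1 : ℝ) 1) (hz : z ∈ Set.Ioo (-1 : ℝ) 1) (hyξ : y < ξ)
    (hξz : ξ < z) (hdy : d y = 0) (hdz : d z = 0)
    (hq : ∀ t ∈ Set.Icc y z, 0 < χ - c ^ 2 * t ^ 2) (hξ : ψ ξ ≠ 0) : π / c ≤ z - y := by
  by_contra hcon
  push Not at hcon
  rw [lt_div_iff₀ hc] at hcon
  set m := (y + z) / 2 with hm
  have hcos : ∀ t ∈ Set.Icc y z, 0 < Real.cos (c * (t - m)) := by
    intro t ht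
    apply Real.cos_pos_of_mem_Ioo
    constructor
    · have : c * (y - m) ≤ c * (t - m) := mul_le_mul_of_nonneg_left (by linarith [ht.1]) hc.le
      rw [hm] at this ⊢
      nlinarith
    · have : c * (t - m) ≤ c * (z - m) := mul_le_mul_of_nonneg_left (by linarith [ht.2]) hc.le
      rw [hm] at this ⊢
      nlinarith
  have hsub : ∀ t ∈ Set.Icc y z, t ∈ Set.Ioo (-1 : ℝ) 1 := fun t ht =>
    ⟨by linarith [hy.1, ht.1], by linarith [hz.2, ht.2]⟩
  set W : ℝ → ℝ := fun t => -(ψ t * ((1 - t ^ 2) * d t))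
    + c ^ 2 * t * ((1 - t ^ 2) * d t) ^ 2 / (χ - c ^ 2 * t ^ 2) ^ 2
    + c * Real.tan (c * (t - m)) * ((1 - t ^ 2) * d t) ^ 2 / (χ - c ^ 2 * t ^ 2) with hW
  set W' : ℝ → ℝ := fun t =>
    (χ - c ^ 2 * t ^ 2) * (ψ t - c * Real.tan (c * (t - m)) * ((1 - t ^ 2) * d t) / (χ - c ^ 2 * t ^ 2)
      - c ^ 2 * t * ((1 - t ^ 2) * d t) / (χ - c ^ 2 * t ^ 2) ^ 2) ^ 2
    + ((1 - t ^ 2) * d t) ^ 2 * ((c ^ 2 - χ) / ((1 - t ^ 2) * (χ - c ^ 2 * t ^ 2))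
      + c ^ 2 / (χ - c ^ 2 * t ^ 2) ^ 2 + 3 * c ^ 4 * t ^ 2 / (χ - c ^ 2 * t ^ 2) ^ 3) with hW'
  have hder : ∀ t ∈ Set.Icc y z, HasDerivAt W (W' t) t := by
    intro t ht
    have hqt := hq t ht
    have hp : 0 < 1 - t ^ 2 := by nlinarith [(hsub t ht).1, (hsub t ht).2]
    have hin : HasDerivAt (fun t => c * (t - m)) c t :=
      hd_congr (((hasDerivAt_id t).sub_const m).const_mul c) (fun t => by simp) (by simp)
    have htan : HasDerivAt (fun t => Real.tan (c * (t - m)))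
        ((1 + Real.tan (c * (t - m)) ^ 2) * c) t := by
      have := (Real.hasDerivAt_tan (hcos t ht).ne').comp t hin
      refine hd_congr this (fun t => rfl) ?_
      rw [Real.tan_eq_sin_div_cos]
      have h1 := (hcos t ht).ne'
      have h2 := Real.sin_sq_add_cos_sq (c * (t - m))
      field_simp
      linarith
    have e1 := ((h.h1 t (hsub t ht)).mul (h.h2 t (hsub t ht))).neg
    have e2 := (((hasDerivAt_id t).const_mul (c ^ 2)).mul ((h.h2 t (hsub t ht)).pow 2)).div
      ((hd_q χ c t).pow 2) (pow_ne_zero 2 hqt.ne')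
    have e3 := ((htan.const_mul c).mul ((h.h2 t (hsub t ht)).pow 2)).div
      (hd_q χ c t) (by positivity)
    refine hd_congr ((e1.add e2).add e3) (fun t => by simp [hW]) ?_
    simp only [hW', Pi.mul_apply, Pi.pow_apply, id, Nat.cast_ofNat, Nat.add_one_sub_one, pow_one,
      mul_one]
    generalize Real.tan (c * (t - m)) = τ
    have hpd : ∃ G, G = (1 - t ^ 2) * d t := ⟨_, rfl⟩
    obtain ⟨G, hG⟩ := hpd
    have hdG : d t = G / (1 - t ^ 2) := by rw [hG]; field_simp
    have hpp : ∃ p, p = 1 - t ^ 2 := ⟨_, rfl⟩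
    obtain ⟨p, hpp⟩ := hpp
    have hqq : ∃ q, q = χ - c ^ 2 * t ^ 2 := ⟨_, rfl⟩
    obtain ⟨q, hqq⟩ := hqq
    have hrel : c ^ 2 - χ = c ^ 2 * p - q := by rw [hpp, hqq]; ring
    rw [hrel, ← hG, hdG, ← hpp, ← hqq]
    rw [← hpp] at hp; rw [← hqq] at hqt
    field_simp
    ring
  have hnn : ∀ t ∈ Set.Icc y z, 0 ≤ W' t := by
    intro t ht
    have hqt := hq t ht
    have hp : 0 < 1 - t ^ 2 := by nlinarith [(hsub t ht).1, (hsub t ht).2]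
    have hcχ : 0 < c ^ 2 - χ := by linarith
    simp only [hW']
    positivity
  have hmono : MonotoneOn W (Set.Icc y z) := by
    apply monotoneOn_of_hasDerivWithinAt_nonneg (convex_Icc _ _) (f' := W')
    · intro x hx; exact (hder x hx).continuousAt.continuousWithinAt
    · intro x hx; exact (hder x (interior_subset hx)).hasDerivWithinAt
    · intro x hx; exact hnn x (interior_subset hx)
  have hyz : y ≤ z := by linarith
  have hWy : W y = 0 := by simp [hW, hdy]
  have hWz : W z = 0 := by simp [hW, hdz]
  have hW0 : ∀ t ∈ Set.Icc y z, W t = 0 := by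
    intro t ht
    have a1 := hmono ⟨le_rfl, hyz⟩ ht ht.1
    have a2 := hmono ht ⟨hyz, le_rfl⟩ ht.2
    linarith
  have hξI : ξ ∈ Set.Icc y z := ⟨hyξ.le, hξz.le⟩
  have hd0 : HasDerivAt W 0 ξ := by
    refine (hasDerivAt_const ξ (0 : ℝ)).congr_of_eventuallyEq ?_
    filter_upwards [Icc_mem_nhds hyξ hξz] with t ht
    exact hW0 t ht
  have hW'0 : W' ξ = 0 := (hder ξ hξI).unique hd0
  have hqt := hq ξ hξI
  have hp : 0 < 1 - ξ ^ 2 := by nlinarith [(hsub ξ hξI).1, (hsub ξ hξI).2]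
  have hcχ : 0 < c ^ 2 - χ := by linarith
  have b1 : 0 < ((c ^ 2 - χ) / ((1 - ξ ^ 2) * (χ - c ^ 2 * ξ ^ 2))
      + c ^ 2 / (χ - c ^ 2 * ξ ^ 2) ^ 2 + 3 * c ^ 4 * ξ ^ 2 / (χ - c ^ 2 * ξ ^ 2) ^ 3) := by positivity
  simp only [hW'] at hW'0
  rw [add_eq_zero_iff_of_nonneg (by positivity) (by positivity)] at hW'0
  obtain ⟨c1, c2⟩ := hW'0
  have hG0 : (1 - ξ ^ 2) * d ξ = 0 := by
    rcases mul_eq_zero.mp c2 with h | h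
    · exact pow_eq_zero_iff (two_ne_zero) |>.mp h
    · exact absurd h b1.ne'
  rw [hG0] at c1
  simp at c1
  rcases c1 with h | h
  · exact hqt.ne' h
  · exact hξ h

lemma PSol.edge_pos {c χ : ℝ} {ψ d : ℝ → ℝ} (h : PSol c χ ψ d) (hc : 0 < c) (hχ : χ < c ^ 2)
    {x : ℝ} (hx : x ∈ Set.Ioo (-1 : ℝ) 1) (hx0 : ψ x = 0)
    (hpos : ∀ t ∈ Set.Ioo x 1, 0 < ψ t) :
    ∃ y ∈ Set.Ioo x 1, d y = 0 ∧ 0 < χ - c ^ 2 * y ^ 2 := by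
  set T := Real.sqrt (χ / c ^ 2) with hT
  have hT0 : 0 ≤ T := Real.sqrt_nonneg _
  have hT1 : T < 1 := by
    rw [hT, Real.sqrt_lt' (by norm_num), div_lt_iff₀ (by positivity)]
    linarith
  have hqneg : ∀ t, T < |t| → χ - c ^ 2 * t ^ 2 < 0 := by
    intro t ht
    rw [hT, Real.sqrt_lt' (by linarith), sq_abs, div_lt_iff₀ (by positivity)] at ht
    linarith
  have hI : ∀ t ∈ Set.Ico x 1, t ∈ Set.Ioo (-1 : ℝ) 1 := fun t ht => ⟨by linarith [hx.1, ht.1], ht.2⟩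
  have hp : ∀ t ∈ Set.Ico x 1, 0 < 1 - t ^ 2 := fun t ht => by
    nlinarith [(hI t ht).1, (hI t ht).2]
  have cG : ContinuousOn (fun t => (1 - t ^ 2) * d t) (Set.Ico x 1) := fun t ht =>
    (h.h2 t (hI t ht)).continuousAt.continuousWithinAt
  -- strict monotonicity where q < 0
  have hsm : ∀ a b, x ≤ a → b < 1 → (∀ t ∈ Set.Ioo a b, χ - c ^ 2 * t ^ 2 < 0) →
      StrictMonoOn (fun t => (1 - t ^ 2) * d t) (Set.Icc a b) := by
    intro a b ha hb hq
    apply strictMonoOn_of_hasDerivWithinAt_pos (convex_Icc _ _)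
      (f' := fun t => -((χ - c ^ 2 * t ^ 2) * ψ t))
    · exact cG.mono (fun t ht => ⟨by linarith [ht.1], by linarith [ht.2]⟩)
    · intro t ht
      rw [interior_Icc] at ht
      exact (h.h2 t (hI t ⟨by linarith [ht.1], by linarith [ht.2]⟩)).hasDerivWithinAt
    · intro t ht
      rw [interior_Icc] at ht
      have a1 := hq t ht
      have a2 := hpos t ⟨by linarith [ht.1], by linarith [ht.2]⟩
      nlinarith
  have claim1 : ∀ t ∈ Set.Ico x 1, T ≤ t → (1 - t ^ 2) * d t < 0 := by
    intro t ht hTt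
    have hmm : ∀ s s', t ≤ s → s < s' → s' < 1 → (1 - s ^ 2) * d s < (1 - s' ^ 2) * d s' := by
      intro s s' h1 h2 h3
      refine hsm s s' (by linarith [ht.1]) h3 ?_ ⟨le_rfl, h2.le⟩ ⟨h2.le, le_rfl⟩ h2
      intro r hr
      apply hqneg
      rw [abs_of_nonneg (by linarith [hr.1])]
      linarith [hr.1]
    set t' := (t + 1) / 2 with ht'
    have h1 : t < t' := by rw [ht']; linarith [ht.2]
    have h2 : t' < 1 := by rw [ht']; linarith [ht.2]
    have h3 := hmm t t' le_rfl h1 h2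
    have h4 : (1 - t' ^ 2) * d t' ≤ 0 := by
      refine ge_of_tendsto h.G_lim ?_
      filter_upwards [Ioo_mem_nhdsLT h2] with s hs
      exact (hmm t' s h1.le hs.1 hs.2).le
    linarith
  have hmvt : ∀ b, x < b → b < 1 → ∃ ξ ∈ Set.Ioo x b, 0 < (1 - ξ ^ 2) * d ξ := by
    intro b hb1 hb2
    obtain ⟨ξ, hξ, he⟩ := exists_hasDerivAt_eq_slope ψ d hb1
      (h.cont.mono (Set.Icc_subset_Icc hx.1.le hb2.le))
      (fun t ht => h.h1 t (hI t ⟨ht.1.le, by linarith [ht.2]⟩))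
    refine ⟨ξ, hξ, mul_pos (hp ξ ⟨hξ.1.le, by linarith [hξ.2]⟩) ?_⟩
    rw [he, hx0, sub_zero]
    exact div_pos (hpos b ⟨hb1, hb2⟩) (by linarith)
  have claim2 : ∃ ξ ∈ Set.Ioo x 1, -T ≤ ξ ∧ 0 < (1 - ξ ^ 2) * d ξ := by
    rcases le_or_gt (-T) x with h1 | h1
    · obtain ⟨ξ, hξ, he⟩ := hmvt ((x + 1) / 2) (by linarith [hx.2]) (by linarith [hx.2])
      exact ⟨ξ, ⟨hξ.1, by linarith [hξ.2, hx.2]⟩, by linarith [hξ.1], he⟩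
    · obtain ⟨ξ, hξ, he⟩ := hmvt (-T) h1 (by linarith)
      refine ⟨-T, ⟨h1, by linarith⟩, le_rfl, ?_⟩
      refine he.trans (hsm ξ (-T) hξ.1.le (by linarith) ?_ ⟨le_rfl, hξ.2.le⟩ ⟨hξ.2.le, le_rfl⟩ hξ.2)
      intro r hr
      apply hqneg
      rw [abs_of_neg (by linarith [hr.2])]
      linarith [hr.2]
  obtain ⟨ξ, hξ, hξT, hξG⟩ := claim2
  have hξlt : ξ < T := by
    by_contra hcon
    push Not at hcon
    have := claim1 ξ ⟨hξ.1.le, hξ.2⟩ hcon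
    linarith
  have hTG := claim1 T ⟨by linarith [hξ.1], hT1⟩ le_rfl
  have := intermediate_value_Icc' hξlt.le (cG.mono (fun t ht => ⟨by linarith [ht.1, hξ.1],
    by linarith [ht.2]⟩))
  obtain ⟨y, hy, hy0⟩ := this ⟨hTG.le, hξG.le⟩
  simp only at hy0
  have hyT : y ≠ T := by rintro rfl; linarith
  have hyξ : y ≠ ξ := by rintro rfl; linarith
  have hyT' : y < T := lt_of_le_of_ne hy.2 hyT
  have hyξ' : ξ < y := lt_of_le_of_ne hy.1 (Ne.symm hyξ)
  refine ⟨y, ⟨by linarith [hξ.1], by linarith⟩, ?_, ?_⟩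
  · rcases mul_eq_zero.mp hy0 with h | h
    · have := hp y ⟨by linarith [hξ.1], by linarith⟩
      linarith
    · exact h
  · have : |y| < T := abs_lt.mpr ⟨by linarith, hyT'⟩
    rw [hT, Real.lt_sqrt (abs_nonneg y), sq_abs, lt_div_iff₀ (by positivity)] at this
    linarith

lemma PSol.edge {c χ : ℝ} {ψ d : ℝ → ℝ} (h : PSol c χ ψ d) (hc : 0 < c) (hχ : χ < c ^ 2)
    {x : ℝ} (hx : x ∈ Set.Ioo (-1 : ℝ) 1) (hx0 : ψ x = 0)
    (hne : ∀ t ∈ Set.Ioo x 1, ψ t ≠ 0) :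
    ∃ y ∈ Set.Ioo x 1, d y = 0 ∧ 0 < χ - c ^ 2 * y ^ 2 := by
  have hcont : ContinuousOn ψ (Set.Ioo x 1) :=
    h.cont.mono (fun t ht => ⟨by linarith [hx.1, ht.1], ht.2.le⟩)
  set b := (x + 1) / 2 with hb
  have hbI : b ∈ Set.Ioo x 1 := ⟨by rw [hb]; linarith [hx.2], by rw [hb]; linarith [hx.2]⟩
  rcases lt_or_gt_of_ne (hne b hbI) with hneg | hpos
  · have : ∀ t ∈ Set.Ioo x 1, 0 < -ψ t := by
      intro t ht
      by_contra hcon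
      have hpt : 0 < ψ t := lt_of_le_of_ne (by linarith) (hne t ht).symm
      obtain ⟨s, hs, hs0⟩ := isPreconnected_Ioo.intermediate_value hbI ht hcont ⟨hneg.le, hpt.le⟩
      exact hne s hs hs0
    obtain ⟨y, hy, hy1, hy2⟩ := h.neg.edge_pos hc hχ hx (by simp [hx0]) this
    exact ⟨y, hy, by linarith, hy2⟩
  · refine h.edge_pos hc hχ hx hx0 ?_
    intro t ht
    by_contra hcon
    have hpt : ψ t < 0 := lt_of_le_of_ne (by linarith) (hne t ht)
    obtain ⟨s, hs, hs0⟩ := isPreconnected_Ioo.intermediate_value ht hbI hcont ⟨hpt.le, hpos.le⟩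
    exact hne s hs hs0

lemma finset_enum (S : Finset ℝ) : ∃ x : ℕ → ℝ, (∀ i < S.card, x i ∈ S) ∧
    (∀ i j, i < j → j < S.card → x i < x j) ∧ ∀ s ∈ S, ∃ i < S.card, x i = s := by
  refine ⟨fun i => if hi : i < S.card then S.orderEmbOfFin rfl ⟨i, hi⟩ else 0, ?_, ?_, ?_⟩
  · intro i hi
    simp only [hi, dite_true]
    exact S.orderEmbOfFin_mem rfl _
  · intro i j hij hj
    simp only [hj, hij.trans hj, dite_true]
    exact (S.orderEmbOfFin rfl).strictMono hij
  · intro s hs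
    have : s ∈ Set.range (S.orderEmbOfFin rfl) := by
      rw [S.range_orderEmbOfFin rfl]; exact hs
    obtain ⟨i, hi⟩ := this
    exact ⟨i, i.2, by simpa using hi⟩

lemma PSol.count_le {c χ : ℝ} {ψ d : ℝ → ℝ} (h : PSol c χ ψ d) (hc : 0 < c) (hχ : χ < c ^ 2)
    (hfin : {x | x ∈ Set.Ioo (-1 : ℝ) 1 ∧ ψ x = 0}.Finite) {n : ℕ} (hn : 0 < n)
    (hcard : {x | x ∈ Set.Ioo (-1 : ℝ) 1 ∧ ψ x = 0}.ncard = n) : n * π ≤ 2 * c := by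
  rw [Set.ncard_eq_toFinset_card _ hfin] at hcard
  obtain ⟨x, hx1, hx2, hx3⟩ := finset_enum hfin.toFinset
  rw [hcard] at hx1 hx2 hx3
  have hxm : ∀ i < n, x i ∈ Set.Ioo (-1 : ℝ) 1 ∧ ψ (x i) = 0 := fun i hi => by
    simpa using hx1 i hi
  have hx3' : ∀ s ∈ Set.Ioo (-1 : ℝ) 1, ψ s = 0 → ∃ i < n, x i = s := fun s hs h0 =>
    hx3 s (by simpa using ⟨hs, h0⟩)
  have hle : ∀ i j, i ≤ j → j < n → x i ≤ x j := fun i j hij hj => by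
    rcases hij.eq_or_lt with rfl | h
    · exact le_rfl
    · exact (hx2 i j h hj).le
  -- last
  obtain ⟨yn, hyn, hdn, hqn⟩ := h.edge hc hχ (hxm (n - 1) (by omega)).1 (hxm (n - 1) (by omega)).2
    (by
      intro t ht h0
      obtain ⟨i, hi, rfl⟩ := hx3' t ⟨by linarith [(hxm (n - 1) (by omega)).1.1, ht.1], ht.2⟩ h0
      have := hle i (n - 1) (by omega) (by omega)
      linarith [ht.1])
  -- first
  obtain ⟨w, hw, hdw, hqw⟩ := h.refl.edge hc hχ (x := -x 0)
    ⟨by linarith [(hxm 0 hn).1.2], by linarith [(hxm 0 hn).1.1]⟩ (by simp [(hxm 0 hn).2])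
    (by
      intro t ht h0
      obtain ⟨i, hi, hi2⟩ := hx3' (-t) ⟨by linarith [ht.2], by linarith [(hxm 0 hn).1.2, ht.1]⟩ h0
      have := hle 0 i (by omega) hi
      linarith [ht.1])
  set y0 := -w with hy0
  have hdy0 : d y0 = 0 := by linarith
  have hy0I : -1 < y0 ∧ y0 < x 0 := ⟨by rw [hy0]; linarith [hw.2], by rw [hy0]; linarith [hw.1]⟩
  have hqy0 : 0 < χ - c ^ 2 * y0 ^ 2 := by rw [hy0]; simpa using hqw
  have hxl : ∀ i < n, x i ≤ x (n - 1) := fun i hi => hle i (n - 1) (by omega) (by omega)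
  have hqI : ∀ t ∈ Set.Icc y0 yn, 0 < χ - c ^ 2 * t ^ 2 := by
    intro t ht
    have : t ^ 2 ≤ max (y0 ^ 2) (yn ^ 2) := by
      rw [le_max_iff]
      rcases le_total 0 t with h | h
      · right; nlinarith [ht.2]
      · left; nlinarith [ht.1]
    have hc2 : 0 < c ^ 2 := by positivity
    rcases le_max_iff.mp this with h | h
    · nlinarith
    · nlinarith
  have hnz : ∀ a b, a < b → -1 ≤ a → b ≤ 1 → ∃ ξ ∈ Set.Ioo a b, ψ ξ ≠ 0 := by
    intro a b hab ha hb
    by_contra hcon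
    push Not at hcon
    have : (Set.Ioo a b).Finite := hfin.subset (fun t ht =>
      ⟨⟨by linarith [ht.1], by linarith [ht.2]⟩, hcon t ht⟩)
    exact (Set.Ioo_infinite hab) this
  have step : ∀ k, k < n → ∃ y, x k < y ∧ y ≤ yn ∧ (k + 1 < n → y < x (k + 1)) ∧ d y = 0 ∧
      y0 + (k + 1) * (π / c) ≤ y := by
    intro k
    induction k with
    | zero =>
      intro hk
      have hy : ∃ y, x 0 < y ∧ y ≤ yn ∧ (0 + 1 < n → y < x (0 + 1)) ∧ d y = 0 := by
        by_cases h1 : 0 + 1 < n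
        · obtain ⟨y, hy, hy'⟩ := exists_hasDerivAt_eq_zero (f' := d) (hx2 0 (0 + 1) (by omega) h1)
            (h.cont.mono (Set.Icc_subset_Icc (hxm 0 hk).1.1.le (hxm _ h1).1.2.le))
            (by rw [(hxm 0 hk).2, (hxm _ h1).2])
            (fun t ht => h.h1 t ⟨by linarith [(hxm 0 hk).1.1, ht.1], by linarith [(hxm _ h1).1.2, ht.2]⟩)
          exact ⟨y, hy.1, by linarith [hy.2, hxl _ h1, hyn.1], fun _ => hy.2, hy'⟩
        · exact ⟨yn, by linarith [hxl 0 hk, hyn.1], le_rfl, fun h => absurd h h1, hdn⟩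
      obtain ⟨y, a1, a2, a3, a4⟩ := hy
      refine ⟨y, a1, a2, a3, a4, ?_⟩
      obtain ⟨ξ, hξ, hξ0⟩ := hnz y0 y (by linarith [hy0I.2]) hy0I.1.le (by linarith [hyn.2])
      have := h.gap hc hχ (y := y0) (z := y) ⟨hy0I.1, by linarith [hyn.2, hy0I.2]⟩
        ⟨by linarith [hy0I.1, hy0I.2], by linarith [hyn.2]⟩ hξ.1 hξ.2 hdy0 a4
        (fun t ht => hqI t ⟨ht.1, by linarith [ht.2]⟩) hξ0
      push_cast
      linarith
    | succ k ih =>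
      intro hk
      obtain ⟨z, b1, b2, b3, b4, b5⟩ := ih (by omega)
      have b3 := b3 hk
      have hy : ∃ y, x (k + 1) < y ∧ y ≤ yn ∧ (k + 1 + 1 < n → y < x (k + 1 + 1)) ∧ d y = 0 := by
        by_cases h1 : k + 1 + 1 < n
        · obtain ⟨y, hy, hy'⟩ := exists_hasDerivAt_eq_zero (f' := d)
            (hx2 (k + 1) (k + 1 + 1) (by omega) h1)
            (h.cont.mono (Set.Icc_subset_Icc (hxm _ hk).1.1.le (hxm _ h1).1.2.le))
            (by rw [(hxm _ hk).2, (hxm _ h1).2])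
            (fun t ht => h.h1 t ⟨by linarith [(hxm _ hk).1.1, ht.1], by linarith [(hxm _ h1).1.2, ht.2]⟩)
          exact ⟨y, hy.1, by linarith [hy.2, hxl _ h1, hyn.1], fun _ => hy.2, hy'⟩
        · exact ⟨yn, by linarith [hxl _ hk, hyn.1], le_rfl, fun h => absurd h h1, hdn⟩
      obtain ⟨y, a1, a2, a3, a4⟩ := hy
      refine ⟨y, a1, a2, a3, a4, ?_⟩
      have hy0z : y0 ≤ z := by
        have : 0 ≤ ((k : ℝ) + 1) * (π / c) := by positivity
        linarith
      have hzy : z < y := by linarith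
      obtain ⟨ξ, hξ, hξ0⟩ := hnz z y hzy (by linarith [hy0I.1]) (by linarith [hyn.2])
      have := h.gap hc hχ (y := z) (z := y) ⟨by linarith [hy0I.1], by linarith [hyn.2]⟩
        ⟨by linarith [hy0I.1], by linarith [hyn.2]⟩ hξ.1 hξ.2 b4 a4
        (fun t ht => hqI t ⟨by linarith [ht.1], by linarith [ht.2]⟩) hξ0
      push_cast
      linarith
  obtain ⟨y, -, a2, -, -, a5⟩ := step (n - 1) (by omega)
  have : ((n - 1 : ℕ) : ℝ) + 1 = n := by
    have : n - 1 + 1 = n := by omega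
    exact_mod_cast this
  rw [this] at a5
  have h6 : (n : ℝ) * (π / c) ≤ 2 := by linarith [hyn.2, hy0I.1]
  have h7 : (n : ℝ) * (π / c) = n * π / c := by ring
  rw [h7, div_le_iff₀ hc] at h6
  exact h6

lemma sturm_pos {z z1 K φ φ1 K0 : ℝ → ℝ} {α β : ℝ} (hαβ : α < β)
    (hz : ∀ t ∈ Set.Icc α β, HasDerivAt z (z1 t) t)
    (hz1 : ∀ t ∈ Set.Icc α β, HasDerivAt z1 (-(K t * z t)) t)
    (hφ : ∀ t ∈ Set.Icc α β, HasDerivAt φ (φ1 t) t)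
    (hφ1 : ∀ t ∈ Set.Icc α β, HasDerivAt φ1 (-(K0 t * φ t)) t)
    (hK : ∀ t ∈ Set.Icc α β, K0 t < K t) (hpos : ∀ t ∈ Set.Ioo α β, 0 < φ t)
    (hα : φ α = 0) (hβ : φ β = 0) (hα1 : 0 ≤ φ1 α) (hβ1 : φ1 β ≤ 0)
    (hzpos : ∀ t ∈ Set.Ioo α β, 0 < z t) : False := by
  have hcz : ContinuousOn z (Set.Icc α β) := fun t ht => (hz t ht).continuousAt.continuousWithinAt
  have hz0 : ∀ t ∈ Set.Icc α β, 0 ≤ z t := by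
    have hcl : closure (Set.Ioo α β) = Set.Icc α β := closure_Ioo hαβ.ne
    intro t ht
    have : t ∈ closure (Set.Ioo α β) := by rw [hcl]; exact ht
    refine le_on_closure (f := fun _ => (0 : ℝ)) (g := z) (fun s hs => (hzpos s hs).le)
      continuousOn_const (by rw [hcl]; exact hcz) this
  have hder : ∀ t ∈ Set.Icc α β, HasDerivAt (fun t => z1 t * φ t - z t * φ1 t)
      (-((K t - K0 t) * (z t * φ t))) t := by
    intro t ht
    exact hd_congr (((hz1 t ht).mul (hφ t ht)).sub ((hz t ht).mul (hφ1 t ht))) (fun t => rfl)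
      (by ring)
  have hanti : StrictAntiOn (fun t => z1 t * φ t - z t * φ1 t) (Set.Icc α β) := by
    apply strictAntiOn_of_hasDerivWithinAt_neg (convex_Icc _ _)
      (f' := fun t => -((K t - K0 t) * (z t * φ t)))
    · intro t ht; exact (hder t ht).continuousAt.continuousWithinAt
    · intro t ht; exact (hder t (interior_subset ht)).hasDerivWithinAt
    · intro t ht
      have h1 := hK t (interior_subset ht)
      rw [interior_Icc] at ht
      have := mul_pos (sub_pos.mpr h1) (mul_pos (hzpos t ht) (hpos t ht))
      linarith
  have h1 := hanti ⟨le_rfl, hαβ.le⟩ ⟨hαβ.le, le_rfl⟩ hαβ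
  simp only [hα, hβ, mul_zero, zero_sub] at h1
  have h2 := mul_nonneg (hz0 α ⟨le_rfl, hαβ.le⟩) hα1
  have h3 := mul_nonneg (hz0 β ⟨hαβ.le, le_rfl⟩) (neg_nonneg.mpr hβ1)
  linarith

lemma sturm_exists {z z1 K φ φ1 K0 : ℝ → ℝ} {α β : ℝ} (hαβ : α < β)
    (hz : ∀ t ∈ Set.Icc α β, HasDerivAt z (z1 t) t)
    (hz1 : ∀ t ∈ Set.Icc α β, HasDerivAt z1 (-(K t * z t)) t)
    (hφ : ∀ t ∈ Set.Icc α β, HasDerivAt φ (φ1 t) t)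
    (hφ1 : ∀ t ∈ Set.Icc α β, HasDerivAt φ1 (-(K0 t * φ t)) t)
    (hK : ∀ t ∈ Set.Icc α β, K0 t < K t) (hpos : ∀ t ∈ Set.Ioo α β, 0 < φ t)
    (hα : φ α = 0) (hβ : φ β = 0) (hα1 : 0 ≤ φ1 α) (hβ1 : φ1 β ≤ 0) :
    ∃ x ∈ Set.Ioo α β, z x = 0 := by
  by_contra hne
  push Not at hne
  have hcont : ContinuousOn z (Set.Ioo α β) := fun t ht =>
    (hz t ⟨ht.1.le, ht.2.le⟩).continuousAt.continuousWithinAt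
  set b := (α + β) / 2 with hb
  have hbI : b ∈ Set.Ioo α β := ⟨by rw [hb]; linarith, by rw [hb]; linarith⟩
  rcases lt_or_gt_of_ne (hne b hbI) with hneg | hp
  · refine sturm_pos (z := fun t => -z t) (z1 := fun t => -z1 t) hαβ
      (fun t ht => (hz t ht).neg)
      (fun t ht => hd_congr (hz1 t ht).neg (fun t => rfl) (by ring)) hφ hφ1 hK hpos hα hβ hα1 hβ1 ?_
    intro t ht
    by_contra hcon
    have hpt : 0 < z t := lt_of_le_of_ne (by linarith) (hne t ht).symm
    obtain ⟨s, hs, hs0⟩ := isPreconnected_Ioo.intermediate_value hbI ht hcont ⟨hneg.le, hpt.le⟩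
    exact hne s hs hs0
  · refine sturm_pos hαβ hz hz1 hφ hφ1 hK hpos hα hβ hα1 hβ1 ?_
    intro t ht
    by_contra hcon
    have hpt : z t < 0 := lt_of_le_of_ne (by linarith) (hne t ht)
    obtain ⟨s, hs, hs0⟩ := isPreconnected_Ioo.intermediate_value ht hbI hcont ⟨hpt.le, hp.le⟩
    exact hne s hs hs0

/-- phase function -/
noncomputable def phs (c a t : ℝ) : ℝ :=
  c * (√(1 - t) * √(1 - t + a) + a * Real.log (√(1 - t) + √(1 - t + a)))

/-- amplitude -/
noncomputable def amp (a t : ℝ) : ℝ := √(√(1 - t) / √(1 - t + a))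

lemma hd_sqrt1 {b t : ℝ} (h : 0 < 1 - t + b) :
    HasDerivAt (fun t : ℝ => √(1 - t + b)) (-1 / (2 * √(1 - t + b))) t := by
  have h5 : HasDerivAt (fun t : ℝ => 1 - t + b) (-1) t :=
    hd_congr (((hasDerivAt_id t).const_sub 1).add_const b) (fun t => by simp) (by simp)
  exact h5.sqrt h.ne'

lemma hd_sqrt0 {t : ℝ} (h : 0 < 1 - t) :
    HasDerivAt (fun t : ℝ => √(1 - t)) (-1 / (2 * √(1 - t))) t := by
  have h5 : HasDerivAt (fun t : ℝ => 1 - t) (-1) t :=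
    hd_congr (((hasDerivAt_id t).const_sub 1)) (fun t => by simp) (by simp)
  exact h5.sqrt h.ne'

lemma amp_pos {a t : ℝ} (ha : 0 < a) (h : 0 < 1 - t) : 0 < amp a t := by
  unfold amp; positivity

lemma amp_sq {a t : ℝ} : amp a t ^ 2 = √(1 - t) / √(1 - t + a) := by
  unfold amp; rw [Real.sq_sqrt]; positivity

lemma amp_four {a t : ℝ} (ha : 0 < a) (h : 0 < 1 - t) :
    amp a t ^ 4 = (1 - t) / (1 - t + a) := by
  have : amp a t ^ 4 = (amp a t ^ 2) ^ 2 := by ring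
  rw [this, amp_sq, div_pow, Real.sq_sqrt h.le, Real.sq_sqrt (by linarith)]

lemma phs_deriv {c a t : ℝ} (ha : 0 < a) (h : 0 < 1 - t) :
    HasDerivAt (phs c a) (-(c / amp a t ^ 2)) t := by
  have hA := hd_sqrt0 h
  have hB := hd_sqrt1 (b := a) (t := t) (by linarith)
  have pA : 0 < √(1 - t) := by positivity
  have pB : 0 < √(1 - t + a) := by positivity
  have e := ((hA.mul hB).add (((hA.add hB).log (by simp only [Pi.add_apply]; positivity)).const_mul a)).const_mul c
  refine hd_congr e (fun t => rfl) ?_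
  rw [amp_sq]
  have sA := Real.sq_sqrt h.le
  have sB := Real.sq_sqrt (show 0 ≤ 1 - t + a by linarith)
  have hab : a = √(1 - t + a) ^ 2 - √(1 - t) ^ 2 := by rw [sA, sB]; ring
  simp only [Pi.add_apply]
  generalize √(1 - t) = A at *
  generalize √(1 - t + a) = B at *
  rw [hab]
  field_simp
  ring

lemma amp_deriv {a t : ℝ} (ha : 0 < a) (h : 0 < 1 - t) :
    HasDerivAt (amp a) (-(amp a t * (a / (4 * ((1 - t) * (1 - t + a)))))) t := by
  have hA := hd_sqrt0 h
  have hB := hd_sqrt1 (b := a) (t := t) (by linarith)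
  have pA : 0 < √(1 - t) := by positivity
  have pB : 0 < √(1 - t + a) := by positivity
  have e := (hA.div hB pB.ne').sqrt (by simp only [Pi.div_apply]; positivity)
  refine hd_congr e (fun t => rfl) ?_
  have hg := amp_pos ha h
  have hg2 := amp_sq (a := a) (t := t)
  have sA := Real.sq_sqrt h.le
  have sB := Real.sq_sqrt (show 0 ≤ 1 - t + a by linarith)
  have hab : a = √(1 - t + a) ^ 2 - √(1 - t) ^ 2 := by rw [sA, sB]; ring
  have hfold : √(((fun t : ℝ => √(1 - t)) / fun t : ℝ => √(1 - t + a)) t) = amp a t := rfl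
  rw [hfold]
  generalize amp a t = g at *
  have hAA : (1 - t) * (1 - t + a) = (√(1 - t)) ^ 2 * (√(1 - t + a)) ^ 2 := by rw [sA, sB]
  rw [hAA]
  generalize √(1 - t) = A at *
  generalize √(1 - t + a) = B at *
  rw [hab]
  have hg2' : A = g ^ 2 * B := by rw [hg2]; field_simp
  rw [hg2']
  field_simp
  ring

lemma PSol.z_deriv {c χ : ℝ} {ψ d : ℝ → ℝ} (h : PSol c χ ψ d) {t : ℝ}
    (ht : t ∈ Set.Ioo (-1 : ℝ) 1) :
    HasDerivAt (fun t => √(1 - t ^ 2) * ψ t)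
      (((1 - t ^ 2) * d t - t * ψ t) / √(1 - t ^ 2)) t ∧
    HasDerivAt (fun t => ((1 - t ^ 2) * d t - t * ψ t) / √(1 - t ^ 2))
      (-(((χ - c ^ 2 * t ^ 2) / (1 - t ^ 2) + 1 / (1 - t ^ 2) ^ 2) * (√(1 - t ^ 2) * ψ t))) t := by
  have hp : 0 < 1 - t ^ 2 := by nlinarith [ht.1, ht.2]
  have hs : HasDerivAt (fun t : ℝ => √(1 - t ^ 2)) (-(2 * t) / (2 * √(1 - t ^ 2))) t :=
    (hd_one_sub_sq t).sqrt hp.ne'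
  have pS : 0 < √(1 - t ^ 2) := by positivity
  have sS := Real.sq_sqrt hp.le
  constructor
  · refine hd_congr (hs.mul (h.h1 t ht)) (fun t => rfl) ?_
    rw [← sS]
    generalize √(1 - t ^ 2) = σ at *
    simp only [Real.sqrt_sq pS.le]
    field_simp
    ring
  · refine hd_congr (((h.h2 t ht).sub ((hasDerivAt_id t).mul (h.h1 t ht))).div hs pS.ne')
      (fun t => rfl) ?_
    simp only [Pi.sub_apply, Pi.mul_apply, id]
    have hσ : ∃ σ, σ = √(1 - t ^ 2) := ⟨_, rfl⟩
    obtain ⟨σ, hσ⟩ := hσ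
    rw [← hσ] at pS sS ⊢
    have : t ^ 2 = 1 - σ ^ 2 := by linarith
    rw [← sS]
    generalize (χ - c ^ 2 * t ^ 2) = q
    field_simp
    have h4 : t ^ 2 = 1 - σ ^ 2 := this
    linear_combination (ψ t) * h4

lemma PSol.count_ge {c χ a : ℝ} {ψ d : ℝ → ℝ} (h : PSol c χ ψ d) (hc : 0 < c) (ha : 0 < a)
    (hχ : c ^ 2 * (1 + 2 * a) ≤ χ) {N : ℕ}
    (hN : N * π < c * (√(1 + a) + a * Real.log (1 + √(1 + a)) - a * Real.log (√a))) :
    ∃ f : ℕ → ℝ, (∀ k < N, f k ∈ Set.Ioo (0 : ℝ) 1 ∧ ψ (f k) = 0) ∧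
      ∀ j k, j < k → k < N → f j < f k := by
  have hcont : ContinuousOn (phs c a) (Set.Icc 0 1) := by
    unfold phs
    apply ContinuousOn.mul continuousOn_const
    apply ContinuousOn.add
    · fun_prop
    · apply ContinuousOn.mul continuousOn_const
      apply ContinuousOn.log
      · fun_prop
      · intro t ht
        have : 0 < 1 - t + a := by linarith [ht.2]
        positivity
  have hanti : StrictAntiOn (phs c a) (Set.Icc 0 1) := by
    apply strictAntiOn_of_hasDerivWithinAt_neg (convex_Icc _ _) (f' := fun t => -(c / amp a t ^ 2))
      hcont
    · intro t ht
      rw [interior_Icc] at ht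
      exact (phs_deriv ha (by linarith [ht.2])).hasDerivWithinAt
    · intro t ht
      rw [interior_Icc] at ht
      have := amp_pos ha (show 0 < 1 - t by linarith [ht.2])
      have : 0 < c / amp a t ^ 2 := by positivity
      linarith
  have hs0 : phs c a 0 = c * (√(1 + a) + a * Real.log (1 + √(1 + a))) := by simp [phs]
  have hs1 : phs c a 1 = c * (a * Real.log (√a)) := by simp [phs]
  have hgap : phs c a 1 < phs c a 0 - N * π := by rw [hs0, hs1]; linarith
  have hex : ∀ k : ℕ, ∃ τ, k ≤ N → τ ∈ Set.Ico (0 : ℝ) 1 ∧ phs c a τ = phs c a 0 - k * π := by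
    intro k
    by_cases hk : k ≤ N
    · have hkN : (k : ℝ) * π ≤ N * π :=
        mul_le_mul_of_nonneg_right (by exact_mod_cast hk) pi_pos.le
      have hk0 : 0 ≤ (k : ℝ) * π := by positivity
      obtain ⟨τ, hτ, hτ'⟩ := intermediate_value_Icc' (zero_le_one) hcont
        (show phs c a 0 - k * π ∈ Set.Icc (phs c a 1) (phs c a 0) from ⟨by linarith, by linarith⟩)
      refine ⟨τ, fun _ => ⟨⟨hτ.1, lt_of_le_of_ne hτ.2 ?_⟩, hτ'⟩⟩
      rintro rfl
      linarith
    · exact ⟨0, fun h => absurd h hk⟩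
  choose τ hτ using hex
  have hτlt : ∀ j k, j < k → k ≤ N → τ j < τ k := by
    intro j k hjk hk
    obtain ⟨a1, a2⟩ := hτ j (by omega)
    obtain ⟨b1, b2⟩ := hτ k hk
    by_contra hcon
    push Not at hcon
    have := hanti.antitoneOn ⟨b1.1, b1.2.le⟩ ⟨a1.1, a1.2.le⟩ hcon
    rw [a2, b2] at this
    have h3 : (j : ℝ) < k := by exact_mod_cast hjk
    nlinarith [pi_pos]
  have hzero : ∀ k, ∃ x, k < N → x ∈ Set.Ioo (τ k) (τ (k + 1)) ∧ ψ x = 0 := by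
    intro k
    by_cases hk : k < N
    swap
    · exact ⟨0, fun h => absurd h hk⟩
    obtain ⟨a1, a2⟩ := hτ k (by omega)
    obtain ⟨b1, b2⟩ := hτ (k + 1) (by omega)
    have hlt := hτlt k (k + 1) (by omega) (by omega)
    push_cast at b2
    have hsub : ∀ t ∈ Set.Icc (τ k) (τ (k + 1)), 0 ≤ t ∧ t < 1 := fun t ht =>
      ⟨by linarith [a1.1, ht.1], by linarith [b1.2, ht.2]⟩
    set σ := phs c a (τ (k + 1)) with hσ
    have := sturm_exists (α := τ k) (β := τ (k + 1)) hlt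
      (z := fun t => √(1 - t ^ 2) * ψ t) (z1 := fun t => ((1 - t ^ 2) * d t - t * ψ t) / √(1 - t ^ 2))
      (K := fun t => (χ - c ^ 2 * t ^ 2) / (1 - t ^ 2) + 1 / (1 - t ^ 2) ^ 2)
      (φ := fun t => amp a t * Real.sin (phs c a t - σ))
      (φ1 := fun t => -(amp a t * (a / (4 * ((1 - t) * (1 - t + a)))) * Real.sin (phs c a t - σ))
        - c / amp a t * Real.cos (phs c a t - σ))
      (K0 := fun t => c ^ 2 / amp a t ^ 4 - (a / (4 * ((1 - t) * (1 - t + a)))) ^ 2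
        + (1 / (1 - t) ^ 2 - 1 / (1 - t + a) ^ 2) / 4)
      (fun t ht => (h.z_deriv ⟨by linarith [(hsub t ht).1], (hsub t ht).2⟩).1)
      (fun t ht => (h.z_deriv ⟨by linarith [(hsub t ht).1], (hsub t ht).2⟩).2)
      ?_ ?_ ?_ ?_ ?_ ?_ ?_ ?_
    · obtain ⟨x, hx, hx0⟩ := this
      refine ⟨x, fun _ => ⟨hx, ?_⟩⟩
      have h1 := hsub x ⟨hx.1.le, hx.2.le⟩
      have : 0 < 1 - x ^ 2 := by nlinarith [h1.1, h1.2]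
      rcases mul_eq_zero.mp hx0 with h | h
      · exact absurd h (Real.sqrt_pos.mpr this).ne'
      · exact h
    · intro t ht
      have hu : 0 < 1 - t := by linarith [(hsub t ht).2]
      have hg := amp_pos ha hu
      refine hd_congr ((amp_deriv ha hu).mul (((phs_deriv (c := c) ha hu).sub_const σ).sin))
        (fun t => rfl) ?_
      generalize amp a t = g at *
      field_simp
      ring
    · intro t ht
      have hu : 0 < 1 - t := by linarith [(hsub t ht).2]
      have hg := amp_pos ha hu
      have h5 : HasDerivAt (fun t : ℝ => 1 - t) (-1) t :=
        hd_congr (((hasDerivAt_id t).const_sub 1)) (fun t => by simp) (by simp)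
      have h6 := h5.add_const a
      have hh : HasDerivAt (fun t => a / (4 * ((1 - t) * (1 - t + a))))
          ((1 / (1 - t) ^ 2 - 1 / (1 - t + a) ^ 2) / 4) t := by
        refine hd_congr (((h5.mul h6).const_mul 4).inv (by
          have : 0 < 4 * ((1 - t) * (1 - t + a)) := by positivity
          exact this.ne') |>.const_mul a) (fun t => by simp [div_eq_mul_inv]) ?_
        simp only [Pi.mul_apply]
        have : 0 < 1 - t + a := by linarith
        field_simp
        ring
      have hph := (phs_deriv (c := c) ha hu).sub_const σ
      have e1 := (((amp_deriv ha hu).mul hh).mul hph.sin).neg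
      have e2 := ((hasDerivAt_const t c).div (amp_deriv ha hu) hg.ne').mul hph.cos
      refine hd_congr (e1.sub e2) (fun t => rfl) ?_
      simp only [Pi.mul_apply, Pi.div_apply]
      generalize amp a t = g at *
      generalize (1 / (1 - t) ^ 2 - 1 / (1 - t + a) ^ 2) / 4 = h'
      generalize a / (4 * ((1 - t) * (1 - t + a))) = hh
      field_simp
      ring
    · intro t ht
      have hu : 0 < 1 - t := by linarith [(hsub t ht).2]
      have ht0 := (hsub t ht).1
      rw [amp_four ha hu]
      set u := 1 - t with hu'
      have hp : 1 - t ^ 2 = u * (2 - u) := by rw [hu']; ring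
      have hp0 : 0 < 1 - t ^ 2 := by nlinarith
      have hp2 : 1 - t ^ 2 ≤ 2 * u := by rw [hp]; nlinarith
      have k1 : c ^ 2 / (u / (u + a)) ≤ (χ - c ^ 2 * t ^ 2) / (1 - t ^ 2) := by
        have e1 : c ^ 2 / (u / (u + a)) = c ^ 2 * (1 + 2 * a / (2 * u)) := by field_simp
        have e2 : c ^ 2 * (1 + 2 * a / (1 - t ^ 2)) ≤ (χ - c ^ 2 * t ^ 2) / (1 - t ^ 2) := by
          rw [le_div_iff₀ hp0]
          have : c ^ 2 * (1 + 2 * a / (1 - t ^ 2)) * (1 - t ^ 2) = c ^ 2 * ((1 - t ^ 2) + 2 * a) := by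
            field_simp
          rw [this]; linarith
        rw [e1]
        refine le_trans ?_ e2
        gcongr
      have k2 : 1 / u ^ 2 / 4 ≤ 1 / (1 - t ^ 2) ^ 2 := by
        rw [div_div]
        apply one_div_le_one_div_of_le (by positivity)
        nlinarith
      have k3 : 0 < 1 / (u + a) ^ 2 := by positivity
      have k4 : 0 ≤ (a / (4 * (u * (u + a)))) ^ 2 := sq_nonneg _
      linarith
    · intro t ht
      have hI : t ∈ Set.Icc (τ k) (τ (k + 1)) := ⟨ht.1.le, ht.2.le⟩
      have hu : 0 < 1 - t := by linarith [(hsub t hI).2]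
      have hg := amp_pos ha hu
      refine mul_pos hg (Real.sin_pos_of_pos_of_lt_pi ?_ ?_)
      · have := hanti ⟨(hsub t hI).1, (hsub t hI).2.le⟩ ⟨b1.1, b1.2.le⟩ ht.2
        linarith
      · have := hanti ⟨a1.1, a1.2.le⟩ ⟨(hsub t hI).1, (hsub t hI).2.le⟩ ht.1
        linarith
    · have : phs c a (τ k) - σ = π := by rw [a2, b2]; ring
      simp [this]
    · simp [← hσ]
    · have h3 : phs c a (τ k) - σ = π := by rw [a2, b2]; ring
      have hg := amp_pos ha (show 0 < 1 - τ k by linarith [a1.2])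
      simp only [h3, Real.sin_pi, Real.cos_pi]
      have : 0 < c / amp a (τ k) := by positivity
      linarith
    · have hg := amp_pos ha (show 0 < 1 - τ (k + 1) by linarith [b1.2])
      have : 0 < c / amp a (τ (k + 1)) := by positivity
      simp only [← hσ, sub_self, Real.sin_zero, Real.cos_zero]
      linarith
  choose f hf using hzero
  refine ⟨f, fun k hk => ⟨⟨?_, ?_⟩, (hf k hk).2⟩, ?_⟩
  · linarith [(hf k hk).1.1, (hτ k (by omega)).1.1]
  · linarith [(hf k hk).1.2, (hτ (k + 1) (by omega)).1.2]
  · intro j k hjk hk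
    have h1 := (hf j (by omega)).1.2
    have h2 := (hf k hk).1.1
    have h3 : τ (j + 1) ≤ τ k := by
      rcases (show j + 1 ≤ k from hjk).eq_or_lt with h | h
      · rw [h]
      · exact (hτlt _ _ h hk.le).le
    linarith

lemma PSol.two_count {c χ a : ℝ} {ψ d : ℝ → ℝ} (h : PSol c χ ψ d) (hc : 0 < c) (ha : 0 < a)
    (hχ : c ^ 2 * (1 + 2 * a) ≤ χ) {N : ℕ}
    (hN : N * π < c * (√(1 + a) + a * Real.log (1 + √(1 + a)) - a * Real.log (√a)))
    (hfin : {x | x ∈ Set.Ioo (-1 : ℝ) 1 ∧ ψ x = 0}.Finite) :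
    2 * N ≤ {x | x ∈ Set.Ioo (-1 : ℝ) 1 ∧ ψ x = 0}.ncard := by
  obtain ⟨f, hf1, hf2⟩ := h.count_ge hc ha hχ hN
  obtain ⟨g, hg1, hg2⟩ := h.refl.count_ge hc ha hχ hN
  have hinj : ∀ f : ℕ → ℝ, (∀ j k, j < k → k < N → f j < f k) →
      Set.InjOn f (Finset.range N : Set ℕ) := by
    intro f hf j hj k hk he
    simp only [Finset.coe_range, Set.mem_Iio] at hj hk
    rcases lt_trichotomy j k with h | h | h
    · exact absurd he (hf j k h hk).ne
    · exact h
    · exact absurd he (hf k j h hj).ne'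
  have c1 : ((Finset.range N).image f).card = N := by
    rw [Finset.card_image_of_injOn (hinj f hf2), Finset.card_range]
  have c2 : ((Finset.range N).image (fun k => -g k)).card = N := by
    rw [Finset.card_image_of_injOn, Finset.card_range]
    intro j hj k hk he
    exact hinj g hg2 hj hk (by simpa using he)
  have hdisj : Disjoint ((Finset.range N).image f) ((Finset.range N).image (fun k => -g k)) := by
    rw [Finset.disjoint_left]
    intro x hx hx'
    simp only [Finset.mem_image, Finset.mem_range] at hx hx'
    obtain ⟨j, hj, rfl⟩ := hx
    obtain ⟨k, hk, he⟩ := hx'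
    linarith [(hf1 j hj).1.1, (hg1 k hk).1.1]
  rw [Set.ncard_eq_toFinset_card _ hfin]
  have : 2 * N = (((Finset.range N).image f) ∪ ((Finset.range N).image (fun k => -g k))).card := by
    rw [Finset.card_union_of_disjoint hdisj, c1, c2]; ring
  rw [this]
  apply Finset.card_le_card
  intro x hx
  simp only [Finset.mem_union, Finset.mem_image, Finset.mem_range] at hx
  simp only [Set.Finite.mem_toFinset, Set.mem_ofPred_eq]
  rcases hx with ⟨j, hj, rfl⟩ | ⟨j, hj, rfl⟩
  · exact ⟨⟨by linarith [(hf1 j hj).1.1], (hf1 j hj).1.2⟩, (hf1 j hj).2⟩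
  · exact ⟨⟨by linarith [(hg1 j hj).1.2], by linarith [(hg1 j hj).1.1]⟩, (hg1 j hj).2⟩

lemma I_ineq {a : ℝ} (ha : 0 < a) : 1 + a / 4 * Real.log (16 * Real.exp 1 / a) ≤
    √(1 + a) + a * Real.log (1 + √(1 + a)) - a * Real.log (√a) := by
  obtain ⟨s, hs⟩ : ∃ s, s = √(1 + a) := ⟨_, rfl⟩
  have hs2 : s ^ 2 = 1 + a := by rw [hs]; exact Real.sq_sqrt (by linarith)
  have hs0 : 0 ≤ s := by rw [hs]; positivity
  have hs1 : 1 < s := by nlinarith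
  rw [← hs]
  have haf : a = (s + 1) * (s - 1) := by linarith
  have h1 : 0 < 1 + s := by linarith
  have h2 : 0 < s - 1 := by linarith
  have hla : Real.log a = Real.log (1 + s) + Real.log (s - 1) := by
    rw [haf, add_comm s 1, Real.log_mul h1.ne' h2.ne']
  have hl16 : Real.log (16 * Real.exp 1 / a) = Real.log 16 + 1 - Real.log a := by
    rw [Real.log_div (by positivity) ha.ne', Real.log_mul (by norm_num) (by positivity),
      Real.log_exp]
  have hz : 0 < (1 + s) ^ 3 / (16 * (s - 1)) := by positivity
  have hlz := Real.one_sub_inv_le_log_of_pos hz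
  rw [Real.log_div (by positivity) (by positivity), Real.log_mul (by norm_num) h2.ne',
    Real.log_pow, inv_div] at hlz
  have h3 : 16 * (s - 1) / (1 + s) ^ 3 ≤ 4 / (1 + s) := by
    rw [div_le_div_iff₀ (by positivity) h1]
    nlinarith [mul_nonneg h1.le (sq_nonneg (s - 3)), mul_nonneg h1.le (sq_nonneg (s - 1))]
  have h4 : a * (4 / (1 + s)) = 4 * (s - 1) := by
    rw [haf]; field_simp; ring
  have h5 : a * (1 - 4 / (1 + s)) ≤ a * (3 * Real.log (1 + s) - (Real.log 16 + Real.log (s - 1))) := by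
    apply mul_le_mul_of_nonneg_left _ ha.le
    push_cast at hlz
    linarith
  rw [Real.log_sqrt ha.le, hl16, hla]
  nlinarith

lemma final_est {c δ χ p : ℝ} (hc : 0 < c) (hδ1 : 3 < δ) (hδ2 : δ < 5 * π / 4 * c)
    (hχ : c ^ 2 < χ) (hχ2 : χ < c ^ 2 + 8 * δ * c / π) (hp : 0 < p)
    (hN : 1 ≤ 2 * (p ^ 2 * (1 + 3 * χ / c))) :
    7 / (2 * p) * ((4 * χ / c ^ 2 - 2) ^ 4 / (3 * χ / c ^ 2 - 1)) *
        (χ - c ^ 2) ^ ((1 : ℝ) / 4) <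
      448 / 3 * (8 / π) ^ ((1 : ℝ) / 4) * δ ^ ((1 : ℝ) / 4) * c ^ ((3 : ℝ) / 4) *
        (1 + 6 * δ / (π * c)) * (1 + 16 * δ / (π * c)) ^ 3 := by
  have hπ := Real.pi_pos
  have hπ2 := Real.pi_lt_d2
  have hδ : 0 < δ := by linarith
  obtain ⟨r, hr⟩ : ∃ r, r = 8 * δ / (π * c) := ⟨_, rfl⟩
  obtain ⟨q, hq⟩ : ∃ q, q = χ / c ^ 2 - 1 := ⟨_, rfl⟩
  have hχq : χ = c ^ 2 * (1 + q) := by rw [hq]; field_simp; ring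
  have hq0 : 0 < q := by
    rw [hq, sub_pos, lt_div_iff₀ (by positivity)]; linarith
  have hrc : 8 * δ * c / π = c ^ 2 * r := by rw [hr]; field_simp
  have hqr : q < r := by
    have : c ^ 2 * q < c ^ 2 * r := by rw [← hrc]; rw [hχq] at hχ2; linarith
    exact lt_of_mul_lt_mul_left this (by positivity)
  have e1 : 6 * δ / (π * c) = 3 / 4 * r := by rw [hr]; ring
  have e2 : 16 * δ / (π * c) = 2 * r := by rw [hr]; ring
  have e3 : 4 * χ / c ^ 2 - 2 = 2 * (1 + 2 * q) := by rw [hχq]; field_simp; ring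
  have e4 : 3 * χ / c ^ 2 - 1 = 2 + 3 * q := by rw [hχq]; field_simp; ring
  have e5 : 3 * χ / c = 3 * c * (1 + q) := by rw [hχq]; field_simp
  have hc1 : 1 < 4 / 3 * c := by
    have : π * c ≤ 3.15 * c := by nlinarith
    linarith
  rw [e1, e2, e3, e4]
  rw [e5] at hN
  have hsc : 0 < √c := Real.sqrt_pos.2 hc
  have hsc2 : √c ^ 2 = c := Real.sq_sqrt hc.le
  have hr0 : 0 < r := by linarith
  have hp1 : 1 < p * (4 * √c * (1 + 3 / 4 * r)) := by
    have hk : 2 * (1 + 3 * c * (1 + q)) < 16 * c * (1 + 3 / 4 * r) ^ 2 := by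
      nlinarith [mul_pos hc hr0, mul_pos hc (mul_pos hr0 hr0), mul_lt_mul_of_pos_left hqr hc]
    have : 1 < (p * (4 * √c * (1 + 3 / 4 * r))) ^ 2 := by
      have e : (p * (4 * √c * (1 + 3 / 4 * r))) ^ 2 = p ^ 2 * (16 * c * (1 + 3 / 4 * r) ^ 2) := by
        rw [← hsc2]; rw [Real.sqrt_sq hsc.le]; ring
      rw [e]
      have := mul_lt_mul_of_pos_left hk (show 0 < p ^ 2 by positivity)
      linarith
    have hpos : 0 < p * (4 * √c * (1 + 3 / 4 * r)) := by positivity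
    nlinarith
  have hA : 7 / (2 * p) < 14 * √c * (1 + 3 / 4 * r) := by
    rw [div_lt_iff₀ (by positivity)]; linarith
  have hB : (2 * (1 + 2 * q)) ^ 4 / (2 + 3 * q) ≤ 32 / 3 * (1 + 2 * r) ^ 3 := by
    have h1 : (1 + 2 * q) ^ 3 ≤ (1 + 2 * r) ^ 3 := by gcongr
    calc (2 * (1 + 2 * q)) ^ 4 / (2 + 3 * q) ≤ 32 / 3 * (1 + 2 * q) ^ 3 := by
          rw [div_le_iff₀ (by positivity)]
          have : 0 < (1 + 2 * q) ^ 3 := by positivity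
          nlinarith
      _ ≤ _ := by linarith
  have hC : (χ - c ^ 2) ^ ((1 : ℝ) / 4) ≤
      (8 / π) ^ ((1 : ℝ) / 4) * δ ^ ((1 : ℝ) / 4) * c ^ ((1 : ℝ) / 4) := by
    rw [← Real.mul_rpow (by positivity) hδ.le, ← Real.mul_rpow (by positivity) hc.le]
    apply Real.rpow_le_rpow (by linarith) _ (by norm_num)
    have : 8 / π * δ * c = 8 * δ * c / π := by ring
    linarith
  have hC0 : 0 < (χ - c ^ 2) ^ ((1 : ℝ) / 4) := Real.rpow_pos_of_pos (by linarith) _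
  have hcc : c ^ ((3 : ℝ) / 4) = √c * c ^ ((1 : ℝ) / 4) := by
    rw [Real.sqrt_eq_rpow, ← Real.rpow_add hc]; norm_num
  have hB0 : 0 < (2 * (1 + 2 * q)) ^ 4 / (2 + 3 * q) := by positivity
  calc _ < 14 * √c * (1 + 3 / 4 * r) * ((2 * (1 + 2 * q)) ^ 4 / (2 + 3 * q)) *
        (χ - c ^ 2) ^ ((1 : ℝ) / 4) := by gcongr
    _ ≤ 14 * √c * (1 + 3 / 4 * r) * (32 / 3 * (1 + 2 * r) ^ 3) *
        ((8 / π) ^ ((1 : ℝ) / 4) * δ ^ ((1 : ℝ) / 4) * c ^ ((1 : ℝ) / 4)) := by gcongr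
    _ = _ := by rw [hcc]; ring

theorem stmt10 (c : ℝ) (hc : 0 < c) (δ : ℝ) (hδ1 : 3 < δ) (hδ2 : δ < 5 * π / 4 * c)
    (n : ℕ) (hn : 0 < n) (hev : Even n)
    (hnlow : 2 * c / π < (n : ℝ))
    (hnhigh : (n : ℝ) ≤ 2 * c / π + 2 / π ^ 2 * δ * Real.log (4 * Real.exp 1 * π * c / δ) - 3)
    (ψ : ℝ → ℝ) (χ : ℝ) (lam : ℂ)
    (hpswf : IsPSWF c n ψ χ lam) (hψ0 : ψ 0 ≠ 0) :
    7 / (2 * |ψ 0|) * ((4 * χ / c ^ 2 - 2) ^ 4 / (3 * χ / c ^ 2 - 1)) *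
        (χ - c ^ 2) ^ ((1 : ℝ) / 4) <
      448 / 3 * (8 / π) ^ ((1 : ℝ) / 4) * δ ^ ((1 : ℝ) / 4) * c ^ ((3 : ℝ) / 4) *
        (1 + 6 * δ / (π * c)) * (1 + 16 * δ / (π * c)) ^ 3 := by
  obtain ⟨hcont, hdiff, hode, hfin, hcard, hnormI, -⟩ := hpswf
  have h := PSol.of_isPSWF_aux hcont hdiff hode
  have hπ := Real.pi_pos
  have hδ : 0 < δ := by linarith
  rcases lt_trichotomy χ (c ^ 2) with hχ | hχ | hχ
  · exfalso
    have h1 := h.count_le hc hχ hfin hn hcard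
    rw [div_lt_iff₀ hπ] at hnlow
    linarith
  · have e : (χ - c ^ 2) ^ ((1 : ℝ) / 4) = 0 := by
      rw [hχ, sub_self, Real.zero_rpow (by norm_num)]
    rw [e, mul_zero]
    positivity
  · apply final_est hc hδ1 hδ2 hχ _ (abs_pos.2 hψ0)
    · rw [sq_abs]
      exact hnormI.symm.le.trans (h.norm_bound hψ0 hc hχ)
    · by_contra! hbig
      obtain ⟨a, haa⟩ : ∃ a, a = 4 * δ / (π * c) := ⟨_, rfl⟩
      have ha : 0 < a := by rw [haa]; positivity
      have hχa : c ^ 2 * (1 + 2 * a) ≤ χ := by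
        have : c ^ 2 * (1 + 2 * a) = c ^ 2 + 8 * δ * c / π := by
          rw [haa]; field_simp; ring
        linarith
      obtain ⟨m, hm⟩ := hev
      have hI := I_ineq ha
      have e1 : 16 * Real.exp 1 / a = 4 * Real.exp 1 * π * c / δ := by
        rw [haa]; field_simp; ring
      rw [e1] at hI
      have e2 : 2 * c / π + 2 / π ^ 2 * δ * Real.log (4 * Real.exp 1 * π * c / δ)
          = 2 * c / π * (1 + a / 4 * Real.log (4 * Real.exp 1 * π * c / δ)) := by
        rw [haa]; field_simp
      have hcI := mul_le_mul_of_nonneg_left hI (show 0 ≤ 2 * c / π by positivity)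
      rw [← e2] at hcI
      have hn3 : (n : ℝ) + 3 ≤ 2 * c / π * (√(1 + a) + a * Real.log (1 + √(1 + a))
          - a * Real.log (√a)) := by linarith
      have hmr : (n : ℝ) = m + m := by rw [hm]; push_cast; ring
      have hN : ((m + 1 : ℕ) : ℝ) * π < c * (√(1 + a) + a * Real.log (1 + √(1 + a))
          - a * Real.log (√a)) := by
        rw [div_mul_eq_mul_div, le_div_iff₀ hπ, hmr] at hn3
        push_cast
        linarith
      have h2 := h.two_count hc ha hχa hN hfin
      rw [hcard] at h2
      omega
end

section
/- Let c > 0 and χ be real numbers with χ > c². Then ∫_0^{√(χ − c²)/2} log(g(x)) dx = ((χ − c²)/c) · ∫_0^{π/2} sin²θ / √(1 + ((χ − c²)/c²)·cos²θ) dθ, and moreover ∫_0^{√(χ − c²)/2} log(g(x)) dx = √χ · ( F(√((χ − c²)/χ)) − E(√((χ − c²)/χ)) ). -/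
open Real

/-- The complete elliptic integral of the first kind. -/
noncomputable def EllipticF (k : ℝ) : ℝ :=
  ∫ θ in (0 : ℝ)..(π / 2), 1 / Real.sqrt (1 - k ^ 2 * Real.sin θ ^ 2)

/-- The complete elliptic integral of the second kind. -/
noncomputable def EllipticE (k : ℝ) : ℝ :=
  ∫ θ in (0 : ℝ)..(π / 2), Real.sqrt (1 - k ^ 2 * Real.sin θ ^ 2)

/-- The function `g(x)` from the paper, built from `c` and `χ`. -/
noncomputable def gFun (c χ x : ℝ) : ℝ :=
  1 + 2 * ((χ - c ^ 2) / c ^ 2 - (2 * x / c) ^ 2) +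
    Real.sqrt ((1 + 2 * ((χ - c ^ 2) / c ^ 2 - (2 * x / c) ^ 2)) ^ 2 - 1)

lemma log_g_aux (y : ℝ) (hy : 0 ≤ y) :
    Real.log (1 + 2 * y + Real.sqrt ((1 + 2 * y) ^ 2 - 1)) = 2 * Real.arsinh (Real.sqrt y) := by
  have h1 : Real.sqrt ((1 + 2 * y) ^ 2 - 1) = 2 * (Real.sqrt y * Real.sqrt (1 + y)) := by
    rw [← Real.sqrt_mul hy, Real.sqrt_eq_iff_mul_self_eq (by nlinarith) (by positivity)]
    have := Real.mul_self_sqrt (show 0 ≤ y * (1 + y) by positivity)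
    nlinarith
  have h2 : 1 + 2 * y + 2 * (Real.sqrt y * Real.sqrt (1 + y))
      = (Real.sqrt y + Real.sqrt (1 + y)) ^ 2 := by
    have e1 := Real.sq_sqrt hy
    have e2 := Real.sq_sqrt (show 0 ≤ 1 + y by positivity)
    nlinarith
  rw [h1, h2, Real.log_pow, Real.arsinh, Real.sq_sqrt hy]
  norm_num

lemma first_aux (c χ : ℝ) (hc : 0 < c) (hχ : χ > c ^ 2) :
    (∫ x in (0 : ℝ)..(Real.sqrt (χ - c ^ 2) / 2), Real.log (gFun c χ x)) =
      (χ - c ^ 2) / c *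
        ∫ θ in (0 : ℝ)..(π / 2),
          Real.sin θ ^ 2 / Real.sqrt (1 + (χ - c ^ 2) / c ^ 2 * Real.cos θ ^ 2) := by
  obtain ⟨a, ha⟩ : ∃ a, a = Real.sqrt (χ - c ^ 2) := ⟨_, rfl⟩
  have ha2 : χ - c ^ 2 = a ^ 2 := by rw [ha, Real.sq_sqrt (by linarith)]
  have hapos : 0 ≤ a := by rw [ha]; positivity
  rw [← ha, ha2]
  have s1 : (∫ x in (0 : ℝ)..(a / 2), Real.log (gFun c χ x)) =
      ∫ x in (0 : ℝ)..(a / 2), 2 * Real.arsinh (Real.sqrt (a ^ 2 / c ^ 2 - (2 * x / c) ^ 2)) := by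
    apply intervalIntegral.integral_congr
    intro x hx
    rw [Set.uIcc_of_le (by positivity)] at hx
    obtain ⟨hx0, hx1⟩ := hx
    simp only [gFun, ha2]
    apply log_g_aux
    rw [div_pow, ← sub_div]
    apply div_nonneg _ (by positivity)
    nlinarith
  have s2 := intervalIntegral.integral_comp_mul_deriv (a := 0) (b := π / 2)
    (f := fun θ => a / 2 * Real.sin θ) (f' := fun θ => a / 2 * Real.cos θ)
    (g := fun x => 2 * Real.arsinh (Real.sqrt (a ^ 2 / c ^ 2 - (2 * x / c) ^ 2)))
    (fun x _ => (Real.hasDerivAt_sin x).const_mul _)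
    (by fun_prop) (by
      refine continuous_const.mul (Real.continuous_arsinh.comp ?_)
      fun_prop)
  simp only [Real.sin_zero, Real.sin_pi_div_two, mul_zero, mul_one] at s2
  rw [s1, ← s2]
  have s3 : (∫ θ in (0 : ℝ)..(π / 2), ((fun x => 2 * Real.arsinh (Real.sqrt (a ^ 2 / c ^ 2 - (2 * x / c) ^ 2))) ∘
      fun θ => a / 2 * Real.sin θ) θ * (a / 2 * Real.cos θ)) =
      ∫ θ in (0 : ℝ)..(π / 2), (a * Real.arsinh (a / c * Real.cos θ)) * Real.cos θ := by
    apply intervalIntegral.integral_congr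
    intro x hx
    rw [Set.uIcc_of_le (by positivity)] at hx
    have hcos : 0 ≤ Real.cos x := Real.cos_nonneg_of_mem_Icc ⟨by linarith [hx.1, Real.pi_pos], hx.2⟩
    have : a ^ 2 / c ^ 2 - (2 * (a / 2 * Real.sin x) / c) ^ 2 = (a / c * Real.cos x) ^ 2 := by
      rw [mul_pow, Real.cos_sq']
      field_simp
    simp only [Function.comp, this]
    rw [Real.sqrt_sq (by positivity)]
    ring
  rw [s3]
  have hd : ∀ x : ℝ, HasDerivAt (fun θ => a * Real.arsinh (a / c * Real.cos θ))
      (a * ((Real.sqrt (1 + (a / c * Real.cos x) ^ 2))⁻¹ * (a / c * -Real.sin x))) x := by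
    intro x
    exact ((Real.hasDerivAt_arsinh _).comp x ((Real.hasDerivAt_cos x).const_mul (a / c))).const_mul a
  have hne : ∀ x : ℝ, Real.sqrt (1 + (a / c * Real.cos x) ^ 2) ≠ 0 := fun x => by positivity
  have s4 := intervalIntegral.integral_mul_deriv_eq_deriv_mul (a := 0) (b := π / 2)
    (fun x _ => hd x) (fun x _ => Real.hasDerivAt_sin x)
    (by
      apply Continuous.intervalIntegrable
      refine continuous_const.mul (Continuous.mul (Continuous.inv₀ (by fun_prop) hne) (by fun_prop)))
    (by apply Continuous.intervalIntegrable; fun_prop)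
  rw [s4]
  simp only [Real.sin_zero, Real.cos_pi_div_two, mul_zero, Real.arsinh_zero, zero_mul, sub_self,
    zero_sub]
  rw [← intervalIntegral.integral_neg, ← intervalIntegral.integral_const_mul]
  apply intervalIntegral.integral_congr
  intro x _
  simp only [mul_pow, div_pow]
  rw [div_eq_mul_inv (Real.sin x ^ 2)]
  ring

lemma second_aux (c χ : ℝ) (hc : 0 < c) (hχ : χ > c ^ 2) :
      (χ - c ^ 2) / c *
        (∫ θ in (0 : ℝ)..(π / 2),
          Real.sin θ ^ 2 / Real.sqrt (1 + (χ - c ^ 2) / c ^ 2 * Real.cos θ ^ 2)) =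
      Real.sqrt χ *
        (EllipticF (Real.sqrt ((χ - c ^ 2) / χ)) -
          EllipticE (Real.sqrt ((χ - c ^ 2) / χ))) := by
  have hχ0 : 0 < χ := lt_trans (by positivity) hχ
  have hk : Real.sqrt ((χ - c ^ 2) / χ) ^ 2 = (χ - c ^ 2) / χ :=
    Real.sq_sqrt (div_nonneg (by linarith) hχ0.le)
  have hpos : ∀ x : ℝ, 0 < 1 - (χ - c ^ 2) / χ * Real.sin x ^ 2 := by
    intro x
    have h1 : (χ - c ^ 2) / χ < 1 := by rw [div_lt_one hχ0]; nlinarith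
    have h0 : 0 ≤ (χ - c ^ 2) / χ := div_nonneg (by linarith) hχ0.le
    nlinarith [Real.sin_sq_le_one x, sq_nonneg (Real.sin x)]
  unfold EllipticF EllipticE
  rw [hk, ← intervalIntegral.integral_sub, ← intervalIntegral.integral_const_mul,
    ← intervalIntegral.integral_const_mul]
  · apply intervalIntegral.integral_congr
    intro x _
    have hp := hpos x
    have e : 1 + (χ - c ^ 2) / c ^ 2 * Real.cos x ^ 2 =
        (χ / c ^ 2) * (1 - (χ - c ^ 2) / χ * Real.sin x ^ 2) := by
      rw [Real.cos_sq']; field_simp; ring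
    simp only []
    rw [e, Real.sqrt_mul (by positivity), Real.sqrt_div hχ0.le, Real.sqrt_sq hc.le]
    have hs := Real.sq_sqrt hp.le
    have hs0 := Real.sqrt_pos.2 hp
    generalize Real.sqrt (1 - (χ - c ^ 2) / χ * Real.sin x ^ 2) = s at *
    have hr := Real.sq_sqrt hχ0.le
    have hr0 := Real.sqrt_pos.2 hχ0
    generalize Real.sqrt χ = r at *
    have : 1 / s - s = (χ - c ^ 2) / χ * Real.sin x ^ 2 / s := by
      field_simp
      rw [hs]; field_simp; ring
    rw [this, ← hr]
    field_simp
  · apply Continuous.intervalIntegrable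
    exact continuous_const.div (by fun_prop) (fun x => (Real.sqrt_pos.2 (hpos x)).ne')
  · apply Continuous.intervalIntegrable
    fun_prop


theorem stmt11 (c χ : ℝ) (hc : 0 < c) (hχ : χ > c ^ 2) :
    (∫ x in (0 : ℝ)..(Real.sqrt (χ - c ^ 2) / 2), Real.log (gFun c χ x)) =
      (χ - c ^ 2) / c *
        ∫ θ in (0 : ℝ)..(π / 2),
          Real.sin θ ^ 2 / Real.sqrt (1 + (χ - c ^ 2) / c ^ 2 * Real.cos θ ^ 2) ∧
    (∫ x in (0 : ℝ)..(Real.sqrt (χ - c ^ 2) / 2), Real.log (gFun c χ x)) =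
      Real.sqrt χ *
        (EllipticF (Real.sqrt ((χ - c ^ 2) / χ)) -
          EllipticE (Real.sqrt ((χ - c ^ 2) / χ))) := by
  exact ⟨first_aux c χ hc hχ, (first_aux c χ hc hχ).trans (second_aux c χ hc hχ)⟩
end

section
/- Let c > 0 and χ be real numbers with χ > c², and suppose k₀ > 2, where k₀ is the largest integer k ≥ 1 with 2k·(2k+1) < χ − c². Then σ₂ · σ₃ · ⋯ · σ_{k₀−1} > g(0)^{−4} · exp( ∫_0^{√(χ − c²)/2} log(g(x)) dx ). -/
open Real

/-- `B^I_k`. -/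
noncomputable def BIseq (c χ : ℝ) (k : ℕ) : ℝ :=
  4 * (4 * (k : ℝ) + 1) * (4 * (k : ℝ) + 3) ^ 2 /
      (4 * (k : ℝ) * (4 * (k : ℝ) - 2) * (4 * (k : ℝ) + 7)) *
    ((χ - c ^ 2 - 2 * (k : ℝ) * (2 * (k : ℝ) + 1)) / c ^ 2)

/-- `B^{II}_k`. -/
noncomputable def BIIseq (k : ℕ) : ℝ :=
  2 + 60 / (32 * (k : ℝ) ^ 4 + 32 * (k : ℝ) ^ 3 - 38 * (k : ℝ) ^ 2 + 7 * (k : ℝ))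

/-- `σ_k`. -/
noncomputable def sigmaSeq (c χ : ℝ) (k : ℕ) : ℝ :=
  (BIseq c χ k + BIIseq k) / 2 +
    Real.sqrt (((BIseq c χ k + BIIseq k) / 2) ^ 2 - 1)


/-- Auxiliary monotone function `log (u + √(u² - 1))`, `u = max 1 t`. -/
noncomputable def HAux (t : ℝ) : ℝ :=
  Real.log (max 1 t + Real.sqrt ((max 1 t) ^ 2 - 1))

lemma HAux_mono : Monotone HAux := by
  intro a b hab
  unfold HAux
  have h1 : (1 : ℝ) ≤ max 1 a := le_max_left _ _
  have h2 : max 1 a ≤ max 1 b := max_le_max le_rfl hab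
  apply Real.log_le_log
  · have := Real.sqrt_nonneg ((max 1 a) ^ 2 - 1)
    linarith
  · have : Real.sqrt ((max 1 a) ^ 2 - 1) ≤ Real.sqrt ((max 1 b) ^ 2 - 1) := by
      apply Real.sqrt_le_sqrt
      nlinarith
    linarith

lemma HAux_nonneg (t : ℝ) : 0 ≤ HAux t := by
  unfold HAux
  have h1 : (1 : ℝ) ≤ max 1 t := le_max_left _ _
  have := Real.sqrt_nonneg ((max 1 t) ^ 2 - 1)
  exact Real.log_nonneg (by linarith)

lemma HAux_pos (t : ℝ) (ht : 1 < t) : 0 < HAux t := by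
  unfold HAux
  have h1 : t ≤ max 1 t := le_max_right _ _
  have := Real.sqrt_nonneg ((max 1 t) ^ 2 - 1)
  exact Real.log_pos (by linarith)

lemma HAux_eq (t : ℝ) (ht : 1 ≤ t) : HAux t = Real.log (t + Real.sqrt (t ^ 2 - 1)) := by
  unfold HAux
  rw [max_eq_right ht]

lemma exp_HAux (t : ℝ) (ht : 1 ≤ t) : Real.exp (HAux t) = t + Real.sqrt (t ^ 2 - 1) := by
  rw [HAux_eq t ht, Real.exp_log]
  have := Real.sqrt_nonneg (t ^ 2 - 1)
  linarith

/-- Argument of `g`. -/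
noncomputable def tAux (c χ x : ℝ) : ℝ := 1 + 2 * ((χ - c ^ 2) / c ^ 2 - (2 * x / c) ^ 2)

lemma tAux_anti (c χ : ℝ) (hc : 0 < c) {x y : ℝ} (hx : 0 ≤ x) (hxy : x ≤ y) :
    tAux c χ y ≤ tAux c χ x := by
  unfold tAux
  have h : 2 * x / c ≤ 2 * y / c := by gcongr
  have h0 : 0 ≤ 2 * x / c := by positivity
  nlinarith

lemma sigma_ge (c χ : ℝ) (hc : 0 < c) (k : ℕ) (hk : 1 ≤ k)
    (hM : 2 * (k : ℝ) * (2 * (k : ℝ) + 1) < χ - c ^ 2) :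
    Real.exp (HAux (tAux c χ (5 / 2 + ((k : ℝ) - 2)))) ≤ sigmaSeq c χ k := by
  have hk' : (1 : ℝ) ≤ k := by exact_mod_cast hk
  have hc2 : 0 < c ^ 2 := by positivity
  set D := (χ - c ^ 2 - 2 * (k : ℝ) * (2 * (k : ℝ) + 1)) / c ^ 2 with hD
  have hDpos : 0 < D := div_pos (by linarith) hc2
  have hI : 4 * D ≤ BIseq c χ k := by
    unfold BIseq
    rw [← hD]
    apply mul_le_mul_of_nonneg_right _ hDpos.le
    rw [le_div_iff₀ (by
      have : 0 < 4 * (k : ℝ) - 2 := by linarith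
      positivity)]
    nlinarith
  have hII : 2 ≤ BIIseq k := by
    unfold BIIseq
    have : 0 ≤ 60 / (32 * (k : ℝ) ^ 4 + 32 * (k : ℝ) ^ 3 - 38 * (k : ℝ) ^ 2 + 7 * (k : ℝ)) := by
      apply div_nonneg (by norm_num)
      have e : 32 * (k : ℝ) ^ 4 + 32 * (k : ℝ) ^ 3 - 38 * (k : ℝ) ^ 2 + 7 * (k : ℝ)
        = 32 * (k : ℝ) ^ 3 * (k - 1) + 64 * (k : ℝ) ^ 2 * (k - 1) + 26 * (k : ℝ) ^ 2 + 7 * k := by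
        ring
      rw [e]
      have : 0 ≤ (k : ℝ) - 1 := by linarith
      positivity
    linarith
  have ht : tAux c χ (5 / 2 + ((k : ℝ) - 2)) ≤ 1 + 2 * D := by
    have e : 1 + 2 * D - tAux c χ (5 / 2 + ((k : ℝ) - 2)) = 2 * (2 * k + 1) / c ^ 2 := by
      rw [hD]
      unfold tAux
      field_simp
      ring
    have : 0 ≤ 2 * (2 * (k : ℝ) + 1) / c ^ 2 := by positivity
    linarith
  have hb : tAux c χ (5 / 2 + ((k : ℝ) - 2)) ≤ (BIseq c χ k + BIIseq k) / 2 := by linarith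
  have hb1 : 1 ≤ (BIseq c χ k + BIIseq k) / 2 := by linarith
  unfold sigmaSeq
  rw [← exp_HAux _ hb1]
  exact Real.exp_le_exp.mpr (HAux_mono hb)

theorem stmt12 (c χ : ℝ) (hc : 0 < c) (hχ : χ > c ^ 2) (k₀ : ℕ)
    (hk₀ : IsGreatest {k : ℕ | 1 ≤ k ∧ 2 * (k : ℝ) * (2 * (k : ℝ) + 1) < χ - c ^ 2} k₀)
    (hk₀2 : 2 < k₀) :
    ∏ k ∈ Finset.Icc 2 (k₀ - 1), sigmaSeq c χ k >
      gFun c χ 0 ^ (-4 : ℤ) *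
        Real.exp (∫ x in (0 : ℝ)..(Real.sqrt (χ - c ^ 2) / 2), Real.log (gFun c χ x)) := by
  obtain ⟨⟨hk1, hkM⟩, hub⟩ := hk₀
  have hc2 : 0 < c ^ 2 := by positivity
  set M := χ - c ^ 2 with hMdef
  have hM : 0 < M := by rw [hMdef]; linarith
  set F : ℝ → ℝ := fun x => HAux (tAux c χ x) with hF
  have hanti : AntitoneOn F (Set.Ici 0) := by
    intro x hx y hy hxy
    exact HAux_mono (tAux_anti c χ hc hx hxy)
  have hnn : ∀ x, 0 ≤ F x := fun x => HAux_nonneg _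
  have hint : ∀ a b : ℝ, 0 ≤ a → 0 ≤ b → IntervalIntegrable F MeasureTheory.volume a b := by
    intro a b ha hb
    apply AntitoneOn.intervalIntegrable
    apply hanti.mono
    intro x hx
    exact le_trans (le_inf ha hb) hx.1
  have ht0 : 1 < tAux c χ 0 := by
    unfold tAux
    have : 0 < (χ - c ^ 2) / c ^ 2 := div_pos hM hc2
    simp only [mul_zero, zero_div]
    nlinarith
  have hF0 : 0 < F 0 := HAux_pos _ ht0
  have hg0 : gFun c χ 0 = Real.exp (F 0) := by
    rw [hF]
    simp only
    rw [exp_HAux _ ht0.le]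
    rfl
  have hS0 : 0 ≤ Real.sqrt M / 2 := by positivity
  -- the integral of log g
  have hI1 : (∫ x in (0 : ℝ)..(Real.sqrt M / 2), Real.log (gFun c χ x))
      = ∫ x in (0 : ℝ)..(Real.sqrt M / 2), F x := by
    apply intervalIntegral.integral_congr
    intro x hx
    rw [Set.uIcc_of_le hS0] at hx
    have hx2 : 4 * x ^ 2 ≤ M := by
      have := Real.sq_sqrt hM.le
      nlinarith [hx.1, hx.2]
    have h1 : 1 ≤ tAux c χ x := by
      have e : tAux c χ x = 1 + 2 * ((M - 4 * x ^ 2) / c ^ 2) := by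
        unfold tAux
        rw [hMdef]
        field_simp
        ring
      rw [e]
      have : 0 ≤ (M - 4 * x ^ 2) / c ^ 2 := div_nonneg (by linarith) hc2.le
      linarith
    simp only [hF]
    rw [HAux_eq _ h1]
    rfl
  have hMle : M ≤ 2 * ((k₀ : ℝ) + 1) * (2 * ((k₀ : ℝ) + 1) + 1) := by
    by_contra hcon
    push Not at hcon
    have : k₀ + 1 ≤ k₀ := hub ⟨by omega, by push_cast; exact hcon⟩
    omega
  have hk3 : (2 : ℝ) < k₀ := by exact_mod_cast hk₀2
  have hSle : Real.sqrt M / 2 ≤ 5 / 2 + ((k₀ - 1 : ℕ) : ℝ) := by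
    rw [Nat.cast_sub hk1]
    have : Real.sqrt M ≤ 2 * k₀ + 3 := by
      apply Real.sqrt_le_iff.mpr
      constructor
      · positivity
      · nlinarith
    push_cast
    linarith
  have hI2 : (∫ x in (0 : ℝ)..(Real.sqrt M / 2), F x)
      ≤ ∫ x in (0 : ℝ)..(5 / 2 + ((k₀ - 1 : ℕ) : ℝ)), F x := by
    apply intervalIntegral.integral_mono_interval le_rfl hS0 hSle
    · exact Filter.Eventually.of_forall hnn
    · exact hint _ _ le_rfl (by positivity)
  have hI3 : (∫ x in (0 : ℝ)..(5 / 2 + ((k₀ - 1 : ℕ) : ℝ)), F x)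
      = (∫ x in (0 : ℝ)..(5 / 2), F x) + ∫ x in (5 / 2 : ℝ)..(5 / 2 + ((k₀ - 1 : ℕ) : ℝ)), F x :=
    (intervalIntegral.integral_add_adjacent_intervals
      (hint _ _ le_rfl (by norm_num)) (hint _ _ (by norm_num) (by positivity))).symm
  have hI4 : (∫ x in (0 : ℝ)..(5 / 2), F x) ≤ 5 / 2 * F 0 := by
    have h : (∫ x in (0 : ℝ)..(5 / 2), F x) ≤ ∫ x in (0 : ℝ)..(5 / 2), F 0 := by
      apply intervalIntegral.integral_mono_on (by norm_num) (hint _ _ le_rfl (by norm_num))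
      · exact intervalIntegrable_const
      · intro x hx
        exact hanti (Set.mem_Ici.mpr le_rfl) hx.1 hx.1
    simpa using h
  have hI5 : (∫ x in (5 / 2 : ℝ)..(5 / 2 + ((k₀ - 1 : ℕ) : ℝ)), F x)
      ≤ ∑ i ∈ Finset.range (k₀ - 1), F (5 / 2 + (i : ℝ)) := by
    apply AntitoneOn.integral_le_sum
    apply hanti.mono
    intro x hx
    have := hx.1
    exact Set.mem_Ici.mpr (by linarith)
  obtain ⟨n, rfl⟩ : ∃ n, k₀ = n + 2 := ⟨k₀ - 2, by omega⟩
  have e1 : n + 2 - 1 = n + 1 := by omega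
  rw [e1, Finset.sum_range_succ] at hI5
  rw [e1] at hI2 hI3
  have hlast : F (5 / 2 + (n : ℝ)) ≤ F 0 :=
    hanti (Set.mem_Ici.mpr le_rfl) (Set.mem_Ici.mpr (by positivity)) (by positivity)
  have hprod : Real.exp (∑ i ∈ Finset.range n, F (5 / 2 + (i : ℝ)))
      ≤ ∏ k ∈ Finset.Icc 2 (n + 2 - 1), sigmaSeq c χ k := by
    have e2 : Finset.Icc 2 (n + 2 - 1) = Finset.Ico 2 (n + 2) := by
      ext k
      simp only [Finset.mem_Icc, Finset.mem_Ico]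
      omega
    rw [e2, Finset.prod_Ico_eq_prod_range, Real.exp_sum]
    have e3 : n + 2 - 2 = n := by omega
    rw [e3]
    apply Finset.prod_le_prod
    · intro i _
      positivity
    · intro i hi
      have hi' : i < n := Finset.mem_range.mp hi
      have hi2 : (i : ℝ) < n := by exact_mod_cast hi'
      have hi0 : (0 : ℝ) ≤ i := by positivity
      have h := sigma_ge c χ hc (2 + i) (by omega) (by
        push_cast at hkM ⊢
        nlinarith)
      have e4 : ((2 + i : ℕ) : ℝ) - 2 = i := by push_cast; ring
      rw [e4] at h
      exact h
  refine lt_of_lt_of_le ?_ hprod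
  have e5 : gFun c χ 0 ^ (-4 : ℤ) = Real.exp (-4 * F 0) := by
    have e6 : (-4 : ℤ) = -((4 : ℕ) : ℤ) := by norm_num
    rw [hg0, e6, zpow_neg, zpow_natCast, ← Real.exp_nat_mul, ← Real.exp_neg]
    congr 1
    push_cast
    ring
  rw [e5, ← Real.exp_add, hI1]
  apply Real.exp_lt_exp.mpr
  linarith
end

section
/- Let c > 0 and χ be real numbers with χ > c², and suppose k₀ > 2, where k₀ is the largest integer k ≥ 1 with 2k·(2k+1) < χ − c². Then: σ₁ > σ₂ > ⋯ > σ_{k₀} > 1; r₂ > r₃ > ⋯ > r_{k₀} > 1; and r_k > σ_k > 1 for every k with 2 ≤ k ≤ k₀. -/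
open Real

/-- The sequence `γ_k`. -/
noncomputable def gammaSeq (c χ : ℝ) : ℕ → ℝ
  | 0 => 0
  | 1 => Real.sqrt 2
  | 2 => 8 / (7 * Real.sqrt 2) * (2 + 3 * (χ - c ^ 2) / c ^ 2)
  | 3 => 16 * Real.sqrt 2 / 11 *
      (3 + 15 * (χ - c ^ 2) / c ^ 2 +
        105 / 8 * ((χ - c ^ 2) / c ^ 2) * ((χ - c ^ 2 - 6) / c ^ 2) - 105 / (2 * c ^ 2))
  | (k + 4) =>
      (BIseq c χ (k + 2) + BIIseq (k + 2)) * gammaSeq c χ (k + 3) - gammaSeq c χ (k + 2)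

/-- `r_k = γ_{k+1}/γ_k`. -/
noncomputable def rSeq (c χ : ℝ) (k : ℕ) : ℝ := gammaSeq c χ (k + 1) / gammaSeq c χ k

lemma coef_anti (s : ℝ) (hs : 0 ≤ s) :
    4 * (4 * (s + 2) + 1) * (4 * (s + 2) + 3) ^ 2 /
      (4 * (s + 2) * (4 * (s + 2) - 2) * (4 * (s + 2) + 7)) ≤
    4 * (4 * (s + 1) + 1) * (4 * (s + 1) + 3) ^ 2 /
      (4 * (s + 1) * (4 * (s + 1) - 2) * (4 * (s + 1) + 7)) := by
  have h1 : 0 < 4 * (s + 2) - 2 := by linarith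
  have h2 : 0 < 4 * (s + 1) - 2 := by linarith
  rw [div_le_div_iff₀ (by positivity) (by positivity), ← sub_nonneg]
  ring_nf
  positivity

lemma den_pos (s : ℝ) (hs : 0 ≤ s) :
    0 < 32 * (s + 1) ^ 4 + 32 * (s + 1) ^ 3 - 38 * (s + 1) ^ 2 + 7 * (s + 1) := by
  ring_nf
  positivity

lemma BII_anti (s : ℝ) (hs : 0 ≤ s) :
    60 / (32 * (s + 2) ^ 4 + 32 * (s + 2) ^ 3 - 38 * (s + 2) ^ 2 + 7 * (s + 2)) ≤
    60 / (32 * (s + 1) ^ 4 + 32 * (s + 1) ^ 3 - 38 * (s + 1) ^ 2 + 7 * (s + 1)) := by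
  apply div_le_div_of_nonneg_left (by norm_num) (den_pos s hs)
  rw [← sub_nonneg]
  ring_nf
  positivity

lemma coef_pos (s : ℝ) (hs : 0 ≤ s) :
    0 < 4 * (4 * (s + 1) + 1) * (4 * (s + 1) + 3) ^ 2 /
      (4 * (s + 1) * (4 * (s + 1) - 2) * (4 * (s + 1) + 7)) := by
  have h2 : 0 < 4 * (s + 1) - 2 := by linarith
  positivity

lemma B_gt_two (c χ : ℝ) (hc : 0 < c) (m : ℕ)
    (h : 2 * ((m + 1 : ℕ) : ℝ) * (2 * ((m + 1 : ℕ) : ℝ) + 1) < χ - c ^ 2) :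
    2 < BIseq c χ (m + 1) + BIIseq (m + 1) := by
  have hm : (0 : ℝ) ≤ m := Nat.cast_nonneg m
  unfold BIseq BIIseq
  have h1 := coef_pos m hm
  have h2 := den_pos m hm
  push_cast at h ⊢
  have h3 : 0 < (χ - c ^ 2 - 2 * ((m : ℝ) + 1) * (2 * ((m : ℝ) + 1) + 1)) / c ^ 2 :=
    div_pos (by linarith) (by positivity)
  have h4 := mul_pos h1 h3
  have h5 := div_pos (by norm_num : (0 : ℝ) < 60) h2
  linarith

lemma B_anti (c χ : ℝ) (hc : 0 < c) (m : ℕ)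
    (h : 2 * ((m + 2 : ℕ) : ℝ) * (2 * ((m + 2 : ℕ) : ℝ) + 1) < χ - c ^ 2) :
    BIseq c χ (m + 2) + BIIseq (m + 2) < BIseq c χ (m + 1) + BIIseq (m + 1) := by
  have hm : (0 : ℝ) ≤ m := Nat.cast_nonneg m
  unfold BIseq BIIseq
  have h1 := coef_pos m hm
  have h2 := coef_anti m hm
  have h5 := BII_anti m hm
  push_cast at h ⊢
  have h3 : 0 < (χ - c ^ 2 - 2 * ((m : ℝ) + 2) * (2 * ((m : ℝ) + 2) + 1)) / c ^ 2 :=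
    div_pos (by linarith) (by positivity)
  have h4 : (χ - c ^ 2 - 2 * ((m : ℝ) + 2) * (2 * ((m : ℝ) + 2) + 1)) / c ^ 2 <
      (χ - c ^ 2 - 2 * ((m : ℝ) + 1) * (2 * ((m : ℝ) + 1) + 1)) / c ^ 2 := by
    apply div_lt_div_of_pos_right _ (by positivity)
    nlinarith
  have h6 := mul_le_mul_of_nonneg_right h2 h3.le
  have h7 := mul_lt_mul_of_pos_left h4 h1
  linarith

lemma sigma_gt_one (c χ : ℝ) (k : ℕ) (h : 2 < BIseq c χ k + BIIseq k) :
    1 < sigmaSeq c χ k := by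
  unfold sigmaSeq
  have := Real.sqrt_nonneg (((BIseq c χ k + BIIseq k) / 2) ^ 2 - 1)
  linarith

lemma sigma_eq (c χ : ℝ) (k : ℕ) (h : 2 < BIseq c χ k + BIIseq k) :
    sigmaSeq c χ k + (sigmaSeq c χ k)⁻¹ = BIseq c χ k + BIIseq k := by
  have h1 := sigma_gt_one c χ k h
  have h0 : sigmaSeq c χ k ≠ 0 := by positivity
  have hs : sigmaSeq c χ k * sigmaSeq c χ k + 1 =
      (BIseq c χ k + BIIseq k) * sigmaSeq c χ k := by
    unfold sigmaSeq
    have := Real.mul_self_sqrt (show 0 ≤ ((BIseq c χ k + BIIseq k) / 2) ^ 2 - 1 by nlinarith)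
    linear_combination this
  field_simp
  linarith

lemma sigma_lt (c χ : ℝ) (k l : ℕ) (h : 2 < BIseq c χ k + BIIseq k)
    (h' : BIseq c χ k + BIIseq k < BIseq c χ l + BIIseq l) :
    sigmaSeq c χ k < sigmaSeq c χ l := by
  unfold sigmaSeq
  have : √(((BIseq c χ k + BIIseq k) / 2) ^ 2 - 1) ≤ √(((BIseq c χ l + BIIseq l) / 2) ^ 2 - 1) := by
    apply Real.sqrt_le_sqrt
    nlinarith
  linarith

lemma gamma_two_pos (c χ : ℝ) (hc : 0 < c) (hχ : χ > c ^ 2) : 0 < gammaSeq c χ 2 := by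
  have : 0 < χ - c ^ 2 := by linarith
  simp only [gammaSeq]
  positivity

lemma gamma_three (c χ : ℝ) (hc : 0 < c) :
    gammaSeq c χ 3 = (BIseq c χ 1 + BIIseq 1) * gammaSeq c χ 2 +
      28 * √2 / 11 * ((χ - c ^ 2) / c ^ 2) := by
  have h2 : √2 ≠ 0 := by positivity
  have h3 : √2 ^ 2 = 2 := Real.sq_sqrt (by norm_num)
  have h4 : 8 / (7 * √2) = 4 / 7 * √2 := by
    field_simp
    linarith
  simp only [gammaSeq, BIseq, BIIseq, h4]
  push_cast
  field_simp
  ring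

lemma r_two (c χ : ℝ) (hc : 0 < c) (hχ : χ > c ^ 2) :
    BIseq c χ 1 + BIIseq 1 < rSeq c χ 2 := by
  have hp := gamma_two_pos c χ hc hχ
  have : 0 < χ - c ^ 2 := by linarith
  have h3 : 0 < 28 * √2 / 11 * ((χ - c ^ 2) / c ^ 2) := by positivity
  unfold rSeq
  rw [lt_div_iff₀ hp, gamma_three c χ hc]
  linarith

lemma r_succ (c χ : ℝ) (k : ℕ) (h : 0 < gammaSeq c χ (k + 3)) :
    rSeq c χ (k + 3) = (BIseq c χ (k + 2) + BIIseq (k + 2)) - (rSeq c χ (k + 2))⁻¹ := by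
  have e : gammaSeq c χ (k + 4) =
    (BIseq c χ (k + 2) + BIIseq (k + 2)) * gammaSeq c χ (k + 3) - gammaSeq c χ (k + 2) := by
    simp only [gammaSeq]
  simp only [rSeq]
  rw [show k + 3 + 1 = k + 4 from rfl, show k + 2 + 1 = k + 3 from rfl, e, inv_div]
  field_simp

theorem stmt13 (c χ : ℝ) (hc : 0 < c) (hχ : χ > c ^ 2) (k₀ : ℕ)
    (hk₀ : IsGreatest {k : ℕ | 1 ≤ k ∧ 2 * (k : ℝ) * (2 * (k : ℝ) + 1) < χ - c ^ 2} k₀)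
    (hk₀2 : 2 < k₀) :
    ((∀ k : ℕ, 1 ≤ k → k < k₀ → sigmaSeq c χ (k + 1) < sigmaSeq c χ k) ∧
        1 < sigmaSeq c χ k₀) ∧
    ((∀ k : ℕ, 2 ≤ k → k < k₀ → rSeq c χ (k + 1) < rSeq c χ k) ∧
        1 < rSeq c χ k₀) ∧
    (∀ k : ℕ, 2 ≤ k → k ≤ k₀ → sigmaSeq c χ k < rSeq c χ k ∧ 1 < sigmaSeq c χ k) := by
  have hk : ∀ k : ℕ, k ≤ k₀ → 2 * (k : ℝ) * (2 * (k : ℝ) + 1) < χ - c ^ 2 := by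
    intro k hk
    have h1 := hk₀.1.2
    have h2 : (k : ℝ) ≤ k₀ := by exact_mod_cast hk
    have h3 : (0 : ℝ) ≤ k := Nat.cast_nonneg k
    nlinarith
  have hB : ∀ k : ℕ, 1 ≤ k → k ≤ k₀ → 2 < BIseq c χ k + BIIseq k := by
    intro k h1 h2
    obtain ⟨m, rfl⟩ := Nat.exists_eq_add_of_le' h1
    exact B_gt_two c χ hc m (hk _ h2)
  have hBa : ∀ k : ℕ, 1 ≤ k → k < k₀ →
      BIseq c χ (k + 1) + BIIseq (k + 1) < BIseq c χ k + BIIseq k := by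
    intro k h1 h2
    obtain ⟨m, rfl⟩ := Nat.exists_eq_add_of_le' h1
    exact B_anti c χ hc m (hk _ h2)
  have hs1 : ∀ k : ℕ, 1 ≤ k → k ≤ k₀ → 1 < sigmaSeq c χ k :=
    fun k h1 h2 => sigma_gt_one c χ k (hB k h1 h2)
  have hsa : ∀ k : ℕ, 1 ≤ k → k < k₀ → sigmaSeq c χ (k + 1) < sigmaSeq c χ k :=
    fun k h1 h2 => sigma_lt c χ _ _ (hB (k + 1) (by omega) h2) (hBa k h1 h2)
  have key : ∀ m : ℕ, m + 2 ≤ k₀ →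
      0 < gammaSeq c χ (m + 2) ∧ sigmaSeq c χ (m + 2) < rSeq c χ (m + 2) := by
    intro m
    induction m with
    | zero =>
      intro h
      refine ⟨gamma_two_pos c χ hc hχ, ?_⟩
      have h1 := r_two c χ hc hχ
      have h2 := hBa 1 le_rfl (by omega)
      have h3 := sigma_eq c χ 2 (hB 2 (by omega) h)
      have h4 : 0 < (sigmaSeq c χ 2)⁻¹ := by
        have := hs1 2 (by omega) h
        positivity
      norm_num at h2 ⊢
      linarith
    | succ m ih =>
      intro h
      obtain ⟨hg, hr⟩ := ih (by omega)
      have hs := hs1 (m + 2) (by omega) (by omega)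
      have hg' : 0 < gammaSeq c χ (m + 3) := by
        have h0 : 0 < rSeq c χ (m + 2) := by linarith
        have h1 : gammaSeq c χ (m + 3) = rSeq c χ (m + 2) * gammaSeq c χ (m + 2) := by
          unfold rSeq
          field_simp
        rw [h1]
        positivity
      refine ⟨hg', ?_⟩
      have e := r_succ c χ m hg'
      have e2 := sigma_eq c χ (m + 2) (hB _ (by omega) (by omega))
      have h5 : (rSeq c χ (m + 2))⁻¹ < (sigmaSeq c χ (m + 2))⁻¹ :=
        inv_strictAnti₀ (by linarith) hr
      have h6 : sigmaSeq c χ (m + 3) < sigmaSeq c χ (m + 2) := hsa (m + 2) (by omega) (by omega)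
      have h7 : sigmaSeq c χ (m + 3) < rSeq c χ (m + 3) := by linarith
      exact h7
  have key2 : ∀ k : ℕ, 2 ≤ k → k ≤ k₀ → sigmaSeq c χ k < rSeq c χ k := by
    intro k h1 h2
    obtain ⟨m, rfl⟩ := Nat.exists_eq_add_of_le' h1
    exact (key m h2).2
  refine ⟨⟨hsa, hs1 k₀ (by omega) le_rfl⟩, ⟨?_, ?_⟩, ?_⟩
  · intro k h1 h2
    obtain ⟨m, rfl⟩ := Nat.exists_eq_add_of_le' h1
    have hr := (key m h2.le).2
    have hg' : 0 < gammaSeq c χ (m + 3) := by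
      have h3 : m + 1 + 2 ≤ k₀ := by omega
      exact (key (m + 1) h3).1
    have hs := hs1 (m + 2) (by omega) (by omega)
    have e : rSeq c χ (m + 2 + 1) = _ := r_succ c χ m hg'
    have e2 := sigma_eq c χ (m + 2) (hB _ (by omega) (by omega))
    rw [e, ← e2]
    generalize sigmaSeq c χ (m + 2) = s at *
    generalize rSeq c χ (m + 2) = r at *
    have hr0 : 0 < r := by linarith
    have hs0 : 0 < s := by linarith
    have h8 : s⁻¹ - r⁻¹ < r - s := by
      rw [inv_sub_inv hs0.ne' hr0.ne', div_lt_iff₀ (by positivity)]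
      have : 1 < s * r := by nlinarith
      nlinarith
    linarith
  · have := key2 k₀ hk₀2.le le_rfl
    have := hs1 k₀ (by omega) le_rfl
    linarith
  · exact fun k h1 h2 => ⟨key2 k h1 h2, hs1 k (by omega) h2⟩
end

section
/- Let c > 0 and χ be real numbers with χ > c². Then r₂ > B^I₂ + B^{II}₂. Moreover, if B^I₂ + B^{II}₂ > 2, then σ₂ > 0 and r₂ > σ₂. -/
open Real

theorem stmt14 (c χ : ℝ) (hc : 0 < c) (hχ : χ > c ^ 2) :
    rSeq c χ 2 > BIseq c χ 2 + BIIseq 2 ∧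
    (BIseq c χ 2 + BIIseq 2 > 2 →
      0 < sigmaSeq c χ 2 ∧ rSeq c χ 2 > sigmaSeq c χ 2) := by
  have hc2 : 0 < c ^ 2 := by positivity
  obtain ⟨a, ha⟩ : ∃ a, a = (χ - c ^ 2) / c ^ 2 := ⟨_, rfl⟩
  obtain ⟨e, he⟩ : ∃ e, e = 1 / c ^ 2 := ⟨_, rfl⟩
  have ha0 : 0 < a := by rw [ha]; exact div_pos (by linarith) hc2
  have he0 : 0 < e := by rw [he]; positivity
  have hs : Real.sqrt 2 ^ 2 = 2 := Real.sq_sqrt (by norm_num)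
  have hs0 : 0 < Real.sqrt 2 := by positivity
  have hB : BIseq c χ 2 + BIIseq 2 = 121 / 20 * (a - 20 * e) + 44 / 21 := by
    rw [BIseq, BIIseq, ha, he]
    push_cast
    field_simp
    ring
  have g2 : gammaSeq c χ 2 = 8 / (7 * Real.sqrt 2) * (2 + 3 * a) := by
    rw [gammaSeq, ha]
    ring
  have g3 : gammaSeq c χ 3 = 16 * Real.sqrt 2 / 11 *
      (3 + 15 * a + 105 / 8 * a * (a - 6 * e) - 105 / 2 * e) := by
    rw [gammaSeq, ha, he]
    field_simp
  have h23 : 0 < 2 + 3 * a := by positivity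
  have hr : rSeq c χ 2 = 28 / 11 *
      (3 + 15 * a + 105 / 8 * a * (a - 6 * e) - 105 / 2 * e) / (2 + 3 * a) := by
    rw [rSeq, g2, g3]
    field_simp
    rw [hs]
    ring
  have h1 : rSeq c χ 2 > BIseq c χ 2 + BIIseq 2 := by
    rw [hB, hr, gt_iff_lt, lt_div_iff₀ h23]
    nlinarith [mul_pos ha0 he0, mul_pos ha0 ha0]
  refine ⟨h1, fun h2 => ?_⟩
  rw [sigmaSeq]
  generalize BIseq c χ 2 + BIIseq 2 = b at *
  have h3 : Real.sqrt ((b / 2) ^ 2 - 1) ≤ b / 2 := by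
    apply Real.sqrt_le_iff.mpr
    constructor <;> linarith
  have h4 := Real.sqrt_nonneg ((b / 2) ^ 2 - 1)
  constructor <;> linarith
end

section
/- Let c > 0 and χ be real numbers with χ > c² + 6, and let k₀ be the largest integer k ≥ 1 with 2k·(2k+1) < χ − c². Then √2 = β₁ < β₂ < ⋯ < β_{k₀} < β_{k₀+1} < β_{k₀+2}, and 1 = α₁ < α₂ < ⋯ < α_{k₀} < α_{k₀+1} < α_{k₀+2}. -/
open Real

/-- `A_k`. -/
noncomputable def ASeq (k : ℕ) : ℝ :=
  (k : ℝ) * (2 * (k : ℝ) - 1) * (4 * (k : ℝ) + 3) /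
      (((k : ℝ) + 1) * (2 * (k : ℝ) + 1) * (4 * (k : ℝ) - 1)) *
    Real.sqrt ((4 * (k : ℝ) + 5) / (4 * (k : ℝ) - 3))

/-- `B_k`. -/
noncomputable def BSeq (c χ : ℝ) (k : ℕ) : ℝ :=
  (χ - 2 * (k : ℝ) * (2 * (k : ℝ) + 1)) / c ^ 2 *
      ((4 * (k : ℝ) + 3) * Real.sqrt ((4 * (k : ℝ) + 1) * (4 * (k : ℝ) + 5))) /
      ((2 * (k : ℝ) + 1) * (2 * (k : ℝ) + 2)) -
    (4 * (k : ℝ) * (2 * (k : ℝ) + 1) - 1) * Real.sqrt ((4 * (k : ℝ) + 1) * (4 * (k : ℝ) + 5)) /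
      ((4 * (k : ℝ) - 1) * (2 * (k : ℝ) + 1) * (2 * (k : ℝ) + 2))

/-- The sequence `α_k`. -/
noncomputable def alphaSeq (c χ : ℝ) : ℕ → ℝ
  | 0 => 0
  | 1 => 1
  | 2 => BSeq c χ 0
  | (k + 3) => BSeq c χ (k + 1) * alphaSeq c χ (k + 2) - ASeq (k + 1) * alphaSeq c χ (k + 1)

/-- The sequence `β_k = α_k·√(2/(4k−3))`. -/
noncomputable def betaSeq (c χ : ℝ) (k : ℕ) : ℝ :=
  alphaSeq c χ k * Real.sqrt (2 / (4 * (k : ℝ) - 3))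

/-- One-step recursion for `β`: increments, for `k ≥ 1`. -/
theorem beta_step (c χ : ℝ) (hc : 0 < c) (n : ℕ) :
    betaSeq c χ (n + 3) - betaSeq c χ (n + 2) =
      ((n + 1 : ℝ) * (2 * (n + 1 : ℝ) - 1) * (4 * (n + 1 : ℝ) + 3) /
        (((n + 1 : ℝ) + 1) * (2 * (n + 1 : ℝ) + 1) * (4 * (n + 1 : ℝ) - 1))) *
        (betaSeq c χ (n + 2) - betaSeq c χ (n + 1)) +
      (χ - 2 * (n + 1 : ℝ) * (2 * (n + 1 : ℝ) + 1) - c ^ 2) / c ^ 2 *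
        ((4 * (n + 1 : ℝ) + 1) * (4 * (n + 1 : ℝ) + 3) /
          ((2 * (n + 1 : ℝ) + 1) * (2 * (n + 1 : ℝ) + 2))) * betaSeq c χ (n + 2) := by
  have hx : (0 : ℝ) ≤ n := Nat.cast_nonneg n
  have e3 : alphaSeq c χ (n + 3) =
      BSeq c χ (n + 1) * alphaSeq c χ (n + 2) - ASeq (n + 1) * alphaSeq c χ (n + 1) := rfl
  unfold betaSeq
  rw [e3]
  unfold BSeq ASeq
  push_cast
  generalize alphaSeq c χ (n + 2) = a2
  generalize alphaSeq c χ (n + 1) = a1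
  generalize (n : ℝ) = x at hx
  rw [show 4 * (x + 3) - 3 = 4 * x + 9 by ring, show 4 * (x + 2) - 3 = 4 * x + 5 by ring,
    show 4 * (x + 1) - 3 = 4 * x + 1 by ring, show 4 * (x + 1) + 5 = 4 * x + 9 by ring,
    show 4 * (x + 1) + 1 = 4 * x + 5 by ring, show 4 * (x + 1) - 1 = 4 * x + 3 by ring,
    show 2 * (x + 1) - 1 = 2 * x + 1 by ring]
  rw [Real.sqrt_div (by positivity), Real.sqrt_div (by positivity), Real.sqrt_div (by positivity),
    Real.sqrt_div (by positivity), Real.sqrt_mul (by positivity)]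
  have hp : 0 < √(4 * x + 1) := Real.sqrt_pos.2 (by positivity)
  have hq : 0 < √(4 * x + 5) := Real.sqrt_pos.2 (by positivity)
  have hr : 0 < √(4 * x + 9) := Real.sqrt_pos.2 (by positivity)
  have hq2 : √(4 * x + 5) ^ 2 = 4 * x + 5 := Real.sq_sqrt (by positivity)
  generalize √(4 * x + 1) = p at *
  generalize √(4 * x + 5) = q at *
  generalize √(4 * x + 9) = r at *
  generalize √2 = w at *
  obtain rfl : x = (q ^ 2 - 5) / 4 := by linarith
  have h1 : 0 < (q ^ 2 - 5) / 4 + 1 + 1 := by positivity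
  have h2 : 0 < 2 * ((q ^ 2 - 5) / 4 + 1) + 1 := by positivity
  have h3 : 0 < 4 * ((q ^ 2 - 5) / 4) + 3 := by positivity
  have h4 : 2 * ((q ^ 2 - 5) / 4 + 1) + 2 = 2 * ((q ^ 2 - 5) / 4 + 1 + 1) := by ring
  rw [h4]
  have g1 : q ^ 2 - 5 + 4 + 4 ≠ 0 := by intro h; linarith
  have g2 : 2 * (q ^ 2 - 5 + 4) + 4 ≠ 0 := by intro h; linarith
  have g3 : q ^ 2 - 5 + 3 ≠ 0 := by intro h; linarith
  field_simp
  ring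

theorem beta_one (c χ : ℝ) : betaSeq c χ 1 = √2 := by
  simp only [betaSeq, alphaSeq]; norm_num

theorem beta_two (c χ : ℝ) (hc : 0 < c) :
    betaSeq c χ 2 = √2 * (1 + 3 * (χ - c ^ 2) / (2 * c ^ 2)) := by
  have h5 : 0 < √(5 : ℝ) := Real.sqrt_pos.2 (by norm_num)
  simp only [betaSeq, alphaSeq, BSeq]
  norm_num
  field_simp
  ring

theorem alpha_eq (c χ : ℝ) (n : ℕ) :
    alphaSeq c χ (n + 1) = betaSeq c χ (n + 1) * √((4 * n + 1) / 2) := by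
  have hx : (0 : ℝ) ≤ n := Nat.cast_nonneg n
  unfold betaSeq
  push_cast
  rw [mul_assoc, ← Real.sqrt_mul (by rw [show 4 * ((n : ℝ) + 1) - 3 = 4 * n + 1 by ring]; positivity),
    show 2 / (4 * ((n : ℝ) + 1) - 3) * ((4 * n + 1) / 2) = 1 by
      rw [show 4 * ((n : ℝ) + 1) - 3 = 4 * n + 1 by ring]; field_simp]
  simp

theorem stmt16 (c χ : ℝ) (hc : 0 < c) (hχ : χ > c ^ 2 + 6) (k₀ : ℕ)
    (hk₀ : IsGreatest {k : ℕ | 1 ≤ k ∧ 2 * (k : ℝ) * (2 * (k : ℝ) + 1) < χ - c ^ 2} k₀) :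
    (betaSeq c χ 1 = Real.sqrt 2 ∧
      ∀ k : ℕ, 1 ≤ k → k ≤ k₀ + 1 → betaSeq c χ k < betaSeq c χ (k + 1)) ∧
    (alphaSeq c χ 1 = 1 ∧
      ∀ k : ℕ, 1 ≤ k → k ≤ k₀ + 1 → alphaSeq c χ k < alphaSeq c χ (k + 1)) := by
  have hc2 : 0 < c ^ 2 := by positivity
  have hs2 : 0 < √(2 : ℝ) := Real.sqrt_pos.2 (by norm_num)
  have key : ∀ n : ℕ, n ≤ k₀ →
      0 < betaSeq c χ (n + 1) ∧ betaSeq c χ (n + 1) < betaSeq c χ (n + 2) := by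
    intro n
    induction n with
    | zero =>
      intro _
      simp only [zero_add]
      rw [beta_one, beta_two c χ hc]
      refine ⟨hs2, ?_⟩
      have : 0 < 3 * (χ - c ^ 2) / (2 * c ^ 2) := div_pos (by linarith) (by linarith)
      nlinarith
    | succ n ih =>
      intro hn
      obtain ⟨i1, i2⟩ := ih (by omega)
      have hx : (0 : ℝ) ≤ n := Nat.cast_nonneg n
      have hnk : ((n : ℝ) + 1) ≤ k₀ := by exact_mod_cast hn
      have hk := hk₀.1.2
      have ht : 0 < χ - 2 * (n + 1 : ℝ) * (2 * (n + 1 : ℝ) + 1) - c ^ 2 := by nlinarith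
      have hb : 0 < betaSeq c χ (n + 2) := by linarith
      refine ⟨hb, ?_⟩
      have hs := beta_step c χ hc n
      have hd : 0 < betaSeq c χ (n + 2) - betaSeq c χ (n + 1) := by linarith
      have ha : 0 < ((n + 1 : ℝ) * (2 * (n + 1 : ℝ) - 1) * (4 * (n + 1 : ℝ) + 3) /
        (((n + 1 : ℝ) + 1) * (2 * (n + 1 : ℝ) + 1) * (4 * (n + 1 : ℝ) - 1))) := by
        rw [show 2 * (n + 1 : ℝ) - 1 = 2 * n + 1 by ring,
          show 4 * (n + 1 : ℝ) - 1 = 4 * n + 3 by ring]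
        positivity
      have h1 := mul_pos ha hd
      have h2 : 0 < (χ - 2 * (n + 1 : ℝ) * (2 * (n + 1 : ℝ) + 1) - c ^ 2) / c ^ 2 *
        ((4 * (n + 1 : ℝ) + 1) * (4 * (n + 1 : ℝ) + 3) /
          ((2 * (n + 1 : ℝ) + 1) * (2 * (n + 1 : ℝ) + 2))) * betaSeq c χ (n + 2) :=
        mul_pos (mul_pos (div_pos ht hc2) (by positivity)) hb
      change betaSeq c χ (n + 2) < betaSeq c χ (n + 3)
      linarith
  refine ⟨⟨beta_one c χ, ?_⟩, rfl, ?_⟩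
  · intro k h1 h2
    obtain ⟨n, rfl⟩ : ∃ n, k = n + 1 := ⟨k - 1, by omega⟩
    exact (key n (by omega)).2
  · intro k h1 h2
    obtain ⟨n, rfl⟩ : ∃ n, k = n + 1 := ⟨k - 1, by omega⟩
    obtain ⟨i1, i2⟩ := key n (by omega)
    have hx : (0 : ℝ) ≤ n := Nat.cast_nonneg n
    rw [alpha_eq c χ n, alpha_eq c χ (n + 1)]
    refine mul_lt_mul i2 (Real.sqrt_le_sqrt ?_) (Real.sqrt_pos.2 (by positivity)) (by
      change 0 ≤ betaSeq c χ (n + 2)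
      linarith)
    push_cast
    linarith
end

section
/- Let c > 0 be a real number, let n be a positive even integer, and let ψ be the n-th PSWF with band limit c, with ODE eigenvalue χ_n. For integers k ≥ 1, set a_k = ∫_{-1}^{1} ψ(t)·P̄_{2k−2}(t) dt, c_k = (2k·(2k−1))/((4k−1)·√((4k−3)·(4k+1))) · c², and b_k = 2·(k−1)·(2k−1) + ((2·(2k−1)·(2k−2) − 1)/((4k−1)·(4k−5)))·c² − χ_n. Then c₁·a₂ + b₁·a₁ = 0; c_{k+1}·a_{k+2} + b_{k+1}·a_{k+1} + c_k·a_k = 0 for every k ≥ 1; and ∑_{k=1}^{∞} a_k² = 1. -/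
open Real

/-- The Legendre polynomials, as functions `ℝ → ℝ`. -/
noncomputable def legendreP : ℕ → ℝ → ℝ
  | 0, _ => 1
  | 1, t => t
  | (m + 2), t =>
      ((2 * (m : ℝ) + 3) * t * legendreP (m + 1) t - ((m : ℝ) + 1) * legendreP m t) /
        ((m : ℝ) + 2)

/-- The normalized Legendre polynomials `P̄_m = √(m + 1/2)·P_m`. -/
noncomputable def legendreBar (m : ℕ) (t : ℝ) : ℝ :=
  Real.sqrt ((m : ℝ) + 1 / 2) * legendreP m t

open Filter Topology MeasureTheory

structure PSol_s19 (r : ℝ → ℝ) (f g : ℝ → ℝ) : Prop where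
  cont : ContinuousOn f (Set.Icc (-1) 1)
  df : ∀ x ∈ Set.Ioo (-1 : ℝ) 1, HasDerivAt f (g x / (1 - x ^ 2)) x
  dg : ∀ x ∈ Set.Ioo (-1 : ℝ) 1, HasDerivAt g (r x * f x) x

lemma PSol_s19.neg {r f g : ℝ → ℝ} (h : PSol_s19 r f g) :
    PSol_s19 r (fun x => - f x) (fun x => - g x) where
  cont := h.cont.neg
  df x hx := by
    have := (h.df x hx).neg
    refine this.congr_deriv ?_
    ring
  dg x hx := by
    have := (h.dg x hx).neg
    refine this.congr_deriv ?_
    ring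

lemma PSol_s19.lin {r f g f' g' : ℝ → ℝ} (h : PSol_s19 r f g) (h' : PSol_s19 r f' g') (s : ℝ) :
    PSol_s19 r (fun x => f x + s * f' x) (fun x => g x + s * g' x) where
  cont := h.cont.add (continuousOn_const.mul h'.cont)
  df x hx := by
    have := (h.df x hx).add ((h'.df x hx).const_mul s)
    refine this.congr_deriv ?_
    ring
  dg x hx := by
    have := (h.dg x hx).add ((h'.dg x hx).const_mul s)
    refine this.congr_deriv ?_
    ring

lemma PSol_s19.refl {r f g : ℝ → ℝ} (hr : ∀ x, r (-x) = r x) (h : PSol_s19 r f g) :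
    PSol_s19 r (fun x => f (-x)) (fun x => - g (-x)) where
  cont := by
    apply h.cont.comp continuous_neg.continuousOn
    intro x hx
    simp only [Set.mem_Icc] at hx ⊢
    constructor <;> linarith [hx.1, hx.2]
  df x hx := by
    have hx' : -x ∈ Set.Ioo (-1 : ℝ) 1 := by
      simp only [Set.mem_Ioo] at hx ⊢
      constructor <;> linarith [hx.1, hx.2]
    have := (h.df (-x) hx').scomp x (hasDerivAt_neg x)
    simp only [Function.comp_def] at this
    refine this.congr_deriv ?_
    simp only [smul_eq_mul]; ring
  dg x hx := by
    have hx' : -x ∈ Set.Ioo (-1 : ℝ) 1 := by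
      simp only [Set.mem_Ioo] at hx ⊢
      constructor <;> linarith [hx.1, hx.2]
    have := ((h.dg (-x) hx').scomp x (hasDerivAt_neg x)).neg
    simp only [Function.comp_def] at this
    refine this.congr_deriv ?_
    simp [hr]

/-- `g` has some limit at `1`. -/
lemma PSol_s19.exists_lim {r f g : ℝ → ℝ} (hr : Continuous r) (h : PSol_s19 r f g) :
    ∃ L, Tendsto g (𝓝[<] 1) (𝓝 L) := by
  have hc : ContinuousOn (fun x => r x * f x) (Set.Icc 0 1) :=
    (hr.continuousOn.mul h.cont).mono (Set.Icc_subset_Icc (by norm_num) le_rfl)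
  have hi : IntervalIntegrable (fun x => r x * f x) volume 0 1 :=
    ContinuousOn.intervalIntegrable (by rwa [Set.uIcc_of_le zero_le_one])
  have hp : ContinuousOn (fun x => g 0 + ∫ t in (0:ℝ)..x, r t * f t) (Set.Icc 0 1) := by
    apply continuousOn_const.add
    have := intervalIntegral.continuousOn_primitive_interval (a := (0:ℝ)) (b := 1)
      (f := fun x => r x * f x) (μ := volume) (by
        rw [Set.uIcc_of_le zero_le_one]
        exact hc.integrableOn_Icc)
    rwa [Set.uIcc_of_le zero_le_one] at this
  refine ⟨_, Tendsto.congr' ?_ (((hp 1 (by simp)).tendsto).mono_left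
    (nhdsWithin_le_iff.2 (?_ : Set.Icc (0:ℝ) 1 ∈ 𝓝[<] 1)))⟩
  · filter_upwards [Ioo_mem_nhdsLT (show (0:ℝ) < 1 by norm_num)] with x hx
    have hs : ∀ y ∈ Set.uIcc 0 x, y ∈ Set.Ioo (-1 : ℝ) 1 := by
      intro y hy
      rw [Set.uIcc_of_le hx.1.le] at hy
      exact ⟨by linarith [hy.1], by linarith [hy.2, hx.2]⟩
    rw [intervalIntegral.integral_eq_sub_of_hasDerivAt (fun y hy => h.dg y (hs y hy))]
    · ring
    · apply hi.mono_set
      rw [Set.uIcc_of_le hx.1.le, Set.uIcc_of_le zero_le_one]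
      exact Set.Icc_subset_Icc le_rfl hx.2.le
  · filter_upwards [Ioo_mem_nhdsLT (show (0:ℝ) < 1 by norm_num)] with x hx
    exact ⟨hx.1.le, hx.2.le⟩

lemma PSol_s19.lim_nonpos {r f g : ℝ → ℝ} (h : PSol_s19 r f g) {L : ℝ}
    (hL : Tendsto g (𝓝[<] 1) (𝓝 L)) : L ≤ 0 := by
  by_contra hpos
  push Not at hpos
  obtain ⟨M, hM⟩ := isCompact_Icc.exists_bound_of_continuousOn h.cont
  have h1 : ∀ᶠ x in 𝓝[<] (1:ℝ), L / 2 < g x := hL.eventually (lt_mem_nhds (by linarith))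
  obtain ⟨l, hl, hl2⟩ := (mem_nhdsLT_iff_exists_Ioo_subset' (show (0:ℝ) < 1 by norm_num)).1 h1
  simp only [Set.mem_Iio] at hl
  set y := max ((l + 1) / 2) (0:ℝ) with hy
  have hy1 : y < 1 := max_lt (by linarith) (by norm_num)
  have hy0 : 0 ≤ y := le_max_right _ _
  have hyl : l < y := lt_of_lt_of_le (by linarith) (le_max_left _ _)
  have hmono : MonotoneOn (fun x => f x + L / 4 * Real.log (1 - x)) (Set.Ico y 1) := by
    have hd : ∀ x ∈ Set.Ico y 1, HasDerivAt (fun x => f x + L / 4 * Real.log (1 - x))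
        (g x / (1 - x ^ 2) + L / 4 * (-1 / (1 - x))) x := by
      intro x hx
      refine (h.df x ⟨by linarith [hx.1], hx.2⟩).add (HasDerivAt.const_mul _ ?_)
      refine HasDerivAt.log ?_ (by linarith [hx.2])
      simpa using (hasDerivAt_id x).const_sub 1
    apply monotoneOn_of_deriv_nonneg (convex_Ico _ _)
    · exact fun x hx => (hd x hx).continuousAt.continuousWithinAt
    · intro x hx
      exact (hd x (interior_subset hx)).differentiableAt.differentiableWithinAt
    · intro x hx
      have hx := interior_subset hx
      rw [(hd x hx).deriv]
      have hg : L / 2 < g x := hl2 ⟨by linarith [hx.1], hx.2⟩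
      have e1 : 0 < 1 - x := by linarith [hx.2]
      have e2 : 0 < 1 + x := by linarith [hx.1]
      have : g x / (1 - x ^ 2) + L / 4 * (-1 / (1 - x)) =
          (g x - L / 4 * (1 + x)) / ((1 - x) * (1 + x)) := by
        rw [show 1 - x ^ 2 = (1 - x) * (1 + x) by ring]
        field_simp
        ring
      rw [this]
      apply div_nonneg _ (by positivity)
      nlinarith
  have hlim : Tendsto (fun x : ℝ => Real.log (1 - x)) (𝓝[<] 1) atBot := by
    apply Real.tendsto_log_nhdsGT_zero.comp
    rw [tendsto_nhdsWithin_iff]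
    constructor
    · have : Tendsto (fun x : ℝ => 1 - x) (𝓝 1) (𝓝 (1 - 1)) :=
        (continuous_const.sub continuous_id).tendsto 1
      rw [sub_self] at this
      exact this.mono_left nhdsWithin_le_nhds
    · filter_upwards [self_mem_nhdsWithin] with x hx
      simpa using hx
  have hev := hlim.eventually (eventually_lt_atBot
    ((f y + L / 4 * Real.log (1 - y) - M) / (L / 4)))
  obtain ⟨x, hx1, hx2⟩ := (hev.and (Ioo_mem_nhdsLT hy1)).exists
  have hm := hmono ⟨le_rfl, hy1⟩ ⟨hx2.1.le, hx2.2⟩ hx2.1.le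
  simp only at hm
  rw [lt_div_iff₀ (by linarith)] at hx1
  have hb := hM x ⟨by linarith [hx2.1], hx2.2.le⟩
  rw [Real.norm_eq_abs] at hb
  have := le_abs_self (f x)
  linarith

lemma PSol_s19.lim_one {r f g : ℝ → ℝ} (hr : Continuous r) (h : PSol_s19 r f g) :
    Tendsto g (𝓝[<] 1) (𝓝 0) := by
  obtain ⟨L, hL⟩ := h.exists_lim hr
  have h1 := h.lim_nonpos hL
  have h2 := h.neg.lim_nonpos hL.neg
  have : L = 0 := by linarith
  rwa [this] at hL

lemma PSol_s19.lim_neg_one {r f g : ℝ → ℝ} (hr : Continuous r) (hr' : ∀ x, r (-x) = r x)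
    (h : PSol_s19 r f g) : Tendsto g (𝓝[>] (-1)) (𝓝 0) := by
  have h1 := ((h.refl hr').lim_one hr).neg
  have h2 : Tendsto (fun x : ℝ => -x) (𝓝[>] (-1)) (𝓝[<] 1) := by
    have := tendsto_neg_nhdsGT (a := (-1:ℝ))
    simpa using this
  have := h1.comp h2
  simpa [Function.comp_def] using this

lemma PSol_s19.f_lim_one {r f g : ℝ → ℝ} (h : PSol_s19 r f g) : Tendsto f (𝓝[<] 1) (𝓝 (f 1)) := by
  refine ((h.cont 1 (by simp)).tendsto).mono_left (nhdsWithin_le_iff.2 ?_)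
  filter_upwards [Ioo_mem_nhdsLT (show (-1:ℝ) < 1 by norm_num)] with x hx
  exact ⟨hx.1.le, hx.2.le⟩

lemma PSol_s19.f_lim_neg_one {r f g : ℝ → ℝ} (h : PSol_s19 r f g) :
    Tendsto f (𝓝[>] (-1)) (𝓝 (f (-1))) := by
  refine ((h.cont (-1) (by simp)).tendsto).mono_left (nhdsWithin_le_iff.2 ?_)
  filter_upwards [Ioo_mem_nhdsGT (show (-1:ℝ) < 1 by norm_num)] with x hx
  exact ⟨hx.1.le, hx.2.le⟩

lemma PSol_s19.wronskian {r f g f' g' : ℝ → ℝ} (hr : Continuous r) (h : PSol_s19 r f g)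
    (h' : PSol_s19 r f' g') : f 0 * g' 0 - f' 0 * g 0 = 0 := by
  have hd : ∀ x ∈ Set.Ioo (-1 : ℝ) 1, HasDerivAt (fun x => f x * g' x - f' x * g x) 0 x := by
    intro x hx
    have := ((h.df x hx).mul (h'.dg x hx)).sub ((h'.df x hx).mul (h.dg x hx))
    refine this.congr_deriv ?_
    ring
  have hconst : ∀ x ∈ Set.Ioo (-1 : ℝ) 1,
      f x * g' x - f' x * g x = f 0 * g' 0 - f' 0 * g 0 := by
    intro x hx
    exact isOpen_Ioo.is_const_of_deriv_eq_zero isPreconnected_Ioo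
      (fun y hy => (hd y hy).differentiableAt.differentiableWithinAt)
      (fun y hy => (hd y hy).deriv) hx (by simp)
  have hl : Tendsto (fun x => f x * g' x - f' x * g x) (𝓝[<] 1) (𝓝 (f 1 * 0 - f' 1 * 0)) :=
    (h.f_lim_one.mul (h'.lim_one hr)).sub (h'.f_lim_one.mul (h.lim_one hr))
  have hl2 : Tendsto (fun x => f x * g' x - f' x * g x) (𝓝[<] 1)
      (𝓝 (f 0 * g' 0 - f' 0 * g 0)) := by
    apply Tendsto.congr' _ tendsto_const_nhds
    filter_upwards [Ioo_mem_nhdsLT (show (-1:ℝ) < 1 by norm_num)] with x hx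
    exact (hconst x hx).symm
  have := tendsto_nhds_unique hl2 hl
  simpa using this

lemma PSol_s19.unique {r f g : ℝ → ℝ} (hr : Continuous r) (h : PSol_s19 r f g)
    (h0 : f 0 = 0) (h1 : g 0 = 0) : ∀ x ∈ Set.Ioo (-1 : ℝ) 1, f x = 0 := by
  intro x hx
  obtain ⟨b, hb1, hb2⟩ := exists_between (abs_lt.2 hx)
  have hb0 : 0 < b := lt_of_le_of_lt (abs_nonneg _) hb1
  obtain ⟨M, hM⟩ := (isCompact_Icc (a := -b) (b := b)).exists_bound_of_continuousOn
    hr.continuousOn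
  set K : ℝ := max M (1 / (1 - b ^ 2)) with hK
  have hb3 : 0 < 1 - b ^ 2 := by nlinarith
  have hK0 : 0 ≤ K := le_trans (by positivity) (le_max_right _ _)
  have hsub : Set.Ioo (-b) b ⊆ Set.Ioo (-1 : ℝ) 1 :=
    Set.Ioo_subset_Ioo (by linarith) hb2.le
  have key := ODE_solution_unique_of_mem_Ioo (E := ℝ × ℝ)
    (v := fun t p => (p.2 / (1 - t ^ 2), r t * p.1)) (s := fun _ => Set.univ)
    (K := ⟨K, hK0⟩) (a := -b) (b := b) (t₀ := 0)
    (f := fun t => (f t, g t)) (g := fun _ => (0, 0)) ?_ ⟨by linarith, hb0⟩ ?_ ?_ ?_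
  · have := key (abs_lt.1 hb1)
    exact (Prod.mk.inj this).1
  · intro t ht
    apply LipschitzOnWith.of_dist_le_mul
    intro p _ q _
    have hq : 1 / (1 - t ^ 2) ≤ 1 / (1 - b ^ 2) := by
      apply one_div_le_one_div_of_le hb3
      nlinarith [ht.1, ht.2]
    have hrt : |r t| ≤ M := hM t ⟨ht.1.le, ht.2.le⟩
    have hpos : 0 < 1 - t ^ 2 := by nlinarith [ht.1, ht.2]
    simp only [Prod.dist_eq, Real.dist_eq]
    apply max_le
    · rw [← sub_div, abs_div, abs_of_pos hpos, div_eq_mul_one_div, mul_comm]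
      apply mul_le_mul (hq.trans (le_max_right _ _)) (le_max_right _ _) (abs_nonneg _) hK0
    · rw [← mul_sub, abs_mul]
      apply mul_le_mul (hrt.trans (le_max_left _ _)) (le_max_left _ _) (abs_nonneg _) hK0
  · intro t ht
    exact ⟨(h.df t (hsub ht)).prodMk (h.dg t (hsub ht)), trivial⟩
  · intro t ht
    refine ⟨?_, trivial⟩
    exact (hasDerivAt_const t ((0:ℝ), (0:ℝ))).congr_deriv (by simp; rfl)
  · simp [h0, h1]

lemma odd_ncard_of_neg {Z : Set ℝ} (hfin : Z.Finite) (h0 : (0:ℝ) ∈ Z)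
    (hneg : ∀ x ∈ Z, -x ∈ Z) : ¬ Even Z.ncard := by
  classical
  obtain ⟨s, rfl⟩ := hfin.exists_finset_coe
  rw [Set.ncard_coe_finset]
  have h2 : ∑ _x ∈ s.erase 0, (1 : ZMod 2) = 0 := by
    apply Finset.sum_involution (fun x _ => -x)
    · intro x hx; decide
    · intro x hx _ h
      have : x = 0 := by linarith
      simp [this] at hx
    · intro x hx; simp
    · intro x hx
      simp only [Finset.mem_erase, ne_eq, neg_eq_zero] at hx ⊢
      exact ⟨hx.1, hneg x hx.2⟩
  simp only [Finset.sum_const, nsmul_eq_mul, mul_one] at h2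
  have h3 : Even (s.erase 0).card := by
    rw [even_iff_two_dvd]
    exact (ZMod.natCast_eq_zero_iff _ _).1 h2
  have h4 := Finset.card_erase_add_one (s := s) (a := (0:ℝ)) h0
  rw [← h4]
  simp [Nat.even_add_one, h3]

lemma PSol_s19.even {r f g : ℝ → ℝ} (hr : Continuous r) (hr' : ∀ x, r (-x) = r x)
    (h : PSol_s19 r f g) (hfin : {x | x ∈ Set.Ioo (-1 : ℝ) 1 ∧ f x = 0}.Finite)
    (hev : Even {x | x ∈ Set.Ioo (-1 : ℝ) 1 ∧ f x = 0}.ncard) :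
    ∀ x ∈ Set.Ioo (-1 : ℝ) 1, f (-x) = f x := by
  have hw := h.wronskian hr (h.refl hr')
  simp only [neg_zero] at hw
  have hw : f 0 * g 0 = 0 := by linarith
  rcases mul_eq_zero.1 hw with h0 | h0
  · exfalso
    have hodd := (h.lin (h.refl hr') 1).unique hr (by simp [h0]) (by simp)
    refine odd_ncard_of_neg hfin ?_ ?_ hev
    · exact ⟨by simp, h0⟩
    · rintro x ⟨hx, hfx⟩
      refine ⟨⟨by linarith [hx.2], by linarith [hx.1]⟩, ?_⟩
      have := hodd x hx
      simp only [hfx] at this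
      linarith
  · intro x hx
    have := (h.lin (h.refl hr') (-1)).unique hr (by simp) (by simp [h0]) x hx
    linarith

lemma PSol_s19.of_pswf {c : ℝ} {n : ℕ} {ψ : ℝ → ℝ} {χ : ℝ} {lam : ℂ} (h : IsPSWF c n ψ χ lam) :
    PSol_s19 (fun x => c ^ 2 * x ^ 2 - χ) ψ (fun x => (1 - x ^ 2) * deriv ψ x) where
  cont := h.1
  df x hx := by
    have h1 := (h.2.1 x hx).1.hasDerivAt
    have : 0 < 1 - x ^ 2 := by nlinarith [hx.1, hx.2]
    refine h1.congr_deriv ?_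
    field_simp
  dg x hx := by
    have h1 := (h.2.1 x hx).2.hasDerivAt
    have h2 := h.2.2.1 x hx
    have h3 : HasDerivAt (fun x : ℝ => 1 - x ^ 2) (-(2 * x)) x := by
      simpa using ((hasDerivAt_id x).pow 2).const_sub 1
    refine (h3.mul h1).congr_deriv ?_
    linarith

/-- Derivative of the Legendre polynomial, recursively. -/
noncomputable def legD : ℕ → ℝ → ℝ
  | 0, _ => 0
  | 1, _ => 1
  | (m + 2), t =>
      ((2 * (m : ℝ) + 3) * (legendreP (m + 1) t + t * legD (m + 1) t) - ((m : ℝ) + 1) * legD m t) /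
        ((m : ℝ) + 2)

lemma legendreP_zero (t : ℝ) : legendreP 0 t = 1 := by simp [legendreP]
lemma legendreP_one (t : ℝ) : legendreP 1 t = t := by simp [legendreP]

lemma legendreP_rec (m : ℕ) (t : ℝ) :
    ((m : ℝ) + 2) * legendreP (m + 2) t =
      (2 * (m : ℝ) + 3) * t * legendreP (m + 1) t - ((m : ℝ) + 1) * legendreP m t := by
  rw [legendreP]; field_simp

lemma legD_rec (m : ℕ) (t : ℝ) :
    ((m : ℝ) + 2) * legD (m + 2) t =
      (2 * (m : ℝ) + 3) * (legendreP (m + 1) t + t * legD (m + 1) t)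
        - ((m : ℝ) + 1) * legD m t := by
  rw [legD]; field_simp

lemma hasDerivAt_legendreP (m : ℕ) (t : ℝ) : HasDerivAt (legendreP m) (legD m t) t := by
  induction m using Nat.twoStepInduction with
  | zero =>
    have : legendreP 0 = fun _ => 1 := by funext x; simp [legendreP]
    rw [this]; simpa [legD] using hasDerivAt_const t (1:ℝ)
  | one =>
    have : legendreP 1 = fun x => x := by funext x; simp [legendreP]
    rw [this]; simpa [legD] using hasDerivAt_id' t
  | more m h1 h2 =>
    have : legendreP (m + 2) = fun x => ((2 * (m : ℝ) + 3) * x * legendreP (m + 1) x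
        - ((m : ℝ) + 1) * legendreP m x) / ((m : ℝ) + 2) := by funext x; rw [legendreP]
    rw [this]
    have h3 := (((((hasDerivAt_id' t).const_mul (2 * (m : ℝ) + 3)).mul h2).sub
      (h1.const_mul ((m : ℝ) + 1))).div_const ((m : ℝ) + 2))
    refine h3.congr_deriv ?_
    rw [legD]; ring

lemma continuous_legendreP (m : ℕ) : Continuous (legendreP m) :=
  continuous_iff_continuousAt.2 fun t => (hasDerivAt_legendreP m t).continuousAt

lemma leg_AB (m : ℕ) (t : ℝ) :
    legD (m + 1) t = t * legD m t + ((m : ℝ) + 1) * legendreP m t ∧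
    t * legD (m + 1) t - legD m t = ((m : ℝ) + 1) * legendreP (m + 1) t := by
  induction m with
  | zero => simp [legD, legendreP]
  | succ m ih =>
    obtain ⟨A, B⟩ := ih
    have hm : (m : ℝ) + 2 ≠ 0 := by positivity
    have hR := legendreP_rec m t
    have hD := legD_rec m t
    have A' : legD (m + 2) t = t * legD (m + 1) t + ((m : ℝ) + 2) * legendreP (m + 1) t := by
      apply mul_left_cancel₀ hm
      linear_combination hD + ((m : ℝ) + 1) * B
    refine ⟨?_, ?_⟩
    · push_cast
      linear_combination A'
    · push_cast
      linear_combination t * A' - A + t * B - hR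

lemma leg_D (m : ℕ) (t : ℝ) :
    (1 - t ^ 2) * legD (m + 1) t = ((m : ℝ) + 1) * (legendreP m t - t * legendreP (m + 1) t) := by
  obtain ⟨A, B⟩ := leg_AB m t
  linear_combination A - t * B

/-- The Legendre equation in self-adjoint form. -/
lemma leg_ode (m : ℕ) (t : ℝ) :
    HasDerivAt (fun x => (1 - x ^ 2) * legD m x) (-((m : ℝ) * (m + 1)) * legendreP m t) t := by
  cases m with
  | zero =>
    have : (fun x : ℝ => (1 - x ^ 2) * legD 0 x) = fun _ => 0 := by funext x; simp [legD]
    rw [this]; simpa using hasDerivAt_const t (0:ℝ)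
  | succ m =>
    have : (fun x : ℝ => (1 - x ^ 2) * legD (m + 1) x) =
      fun x => ((m : ℝ) + 1) * (legendreP m x - x * legendreP (m + 1) x) := by
        funext x; exact leg_D m x
    rw [this]
    have h := ((hasDerivAt_legendreP m t).sub
      ((hasDerivAt_id' t).mul (hasDerivAt_legendreP (m + 1) t))).const_mul ((m : ℝ) + 1)
    refine h.congr_deriv ?_
    obtain ⟨A, B⟩ := leg_AB m t
    push_cast
    linear_combination -((m : ℝ) + 1) * B

lemma continuous_legD (m : ℕ) : Continuous (legD m) := by
  induction m using Nat.twoStepInduction with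
  | zero =>
    have : legD 0 = fun _ => 0 := by funext x; simp [legD]
    rw [this]; fun_prop
  | one =>
    have : legD 1 = fun x => 1 := by funext x; simp [legD]
    rw [this]; fun_prop
  | more m h1 h2 =>
    have : legD (m + 2) = fun t => ((2 * (m : ℝ) + 3) * (legendreP (m + 1) t + t * legD (m + 1) t)
        - ((m : ℝ) + 1) * legD m t) / ((m : ℝ) + 2) := by funext x; rw [legD]
    rw [this]
    have := continuous_legendreP (m + 1)
    fun_prop

/-- Green's identity with vanishing boundary terms. -/
lemma PSol_s19.green {r f g : ℝ → ℝ} (hr : Continuous r) (hr' : ∀ x, r (-x) = r x)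
    (h : PSol_s19 r f g) (m : ℕ) :
    ∫ t in (-1 : ℝ)..1, (r t + (m : ℝ) * (m + 1)) * f t * legendreP m t = 0 := by
  have hP := continuous_legendreP m
  have hD := continuous_legD m
  have hint : IntervalIntegrable (fun t => (r t + (m : ℝ) * (m + 1)) * f t * legendreP m t)
      volume (-1) 1 := by
    apply ContinuousOn.intervalIntegrable
    rw [Set.uIcc_of_le (by norm_num)]
    exact (((hr.add continuous_const).continuousOn).mul h.cont).mul hP.continuousOn
  have hQ : Continuous (fun x : ℝ => (1 - x ^ 2) * legD m x) := by fun_prop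
  have key := intervalIntegral.integral_eq_sub_of_hasDerivAt_of_tendsto
    (f := fun x => g x * legendreP m x - f x * ((1 - x ^ 2) * legD m x))
    (f' := fun t => (r t + (m : ℝ) * (m + 1)) * f t * legendreP m t)
    (a := -1) (b := 1) (fa := 0 * legendreP m (-1) - f (-1) * ((1 - (-1) ^ 2) * legD m (-1)))
    (fb := 0 * legendreP m 1 - f 1 * ((1 - 1 ^ 2) * legD m 1))
    (by norm_num) ?_ hint ?_ ?_
  · rw [key]; norm_num
  · intro x hx
    have h1 := ((h.dg x hx).mul (hasDerivAt_legendreP m x)).sub ((h.df x hx).mul (leg_ode m x))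
    refine h1.congr_deriv ?_
    have : 1 - x ^ 2 ≠ 0 := by nlinarith [hx.1, hx.2]
    field_simp
    ring
  · exact ((h.lim_neg_one hr hr').mul ((hP.tendsto _).mono_left nhdsWithin_le_nhds)).sub
      (h.f_lim_neg_one.mul ((hQ.tendsto _).mono_left nhdsWithin_le_nhds))
  · exact ((h.lim_one hr).mul ((hP.tendsto _).mono_left nhdsWithin_le_nhds)).sub
      (h.f_lim_one.mul ((hQ.tendsto _).mono_left nhdsWithin_le_nhds))

lemma leg_PSol (m : ℕ) :
    PSol_s19 (fun _ => -((m : ℝ) * (m + 1))) (legendreP m) (fun x => (1 - x ^ 2) * legD m x) where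
  cont := (continuous_legendreP m).continuousOn
  df x hx := by
    have : 1 - x ^ 2 ≠ 0 := by nlinarith [hx.1, hx.2]
    refine (hasDerivAt_legendreP m x).congr_deriv ?_
    field_simp
  dg x _ := leg_ode m x

lemma leg_orth {m n : ℕ} (hmn : m ≠ n) :
    ∫ t in (-1 : ℝ)..1, legendreP m t * legendreP n t = 0 := by
  have h := (leg_PSol m).green continuous_const (fun _ => rfl) n
  simp_rw [mul_assoc, intervalIntegral.integral_const_mul] at h
  rcases mul_eq_zero.1 h with h | h
  · exfalso
    have h' : ((n : ℝ) - m) * (n + m + 1) = 0 := by linear_combination h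
    rcases mul_eq_zero.1 h' with h' | h'
    · exact hmn (by exact_mod_cast (sub_eq_zero.1 h').symm)
    · have : (0:ℝ) < n + m + 1 := by positivity
      linarith
  · exact h

/-- Multiplication by `t`. -/
lemma leg_mul (m : ℕ) (t : ℝ) :
    (2 * (m : ℝ) + 3) * (t * legendreP (m + 1) t) =
      ((m : ℝ) + 2) * legendreP (m + 2) t + ((m : ℝ) + 1) * legendreP m t := by
  linear_combination - legendreP_rec m t

lemma leg_int (f : ℝ → ℝ) (hf : Continuous f) : IntervalIntegrable f volume (-1) 1 :=
  hf.intervalIntegrable _ _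

lemma leg_norm_succ (m : ℕ) :
    (2 * (m : ℝ) + 3) * ∫ t in (-1 : ℝ)..1, legendreP (m + 1) t * legendreP (m + 1) t =
    (2 * (m : ℝ) + 1) * ∫ t in (-1 : ℝ)..1, legendreP m t * legendreP m t := by
  have c0 := continuous_legendreP m
  have c1 := continuous_legendreP (m + 1)
  have c2 := continuous_legendreP (m + 2)
  -- cross term computed in two ways
  have e1 : (2 * (m : ℝ) + 3) * ∫ t in (-1 : ℝ)..1, t * legendreP (m + 1) t * legendreP m t =
      ((m : ℝ) + 1) * ∫ t in (-1 : ℝ)..1, legendreP m t * legendreP m t := by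
    have : ∀ t, (2 * (m : ℝ) + 3) * (t * legendreP (m + 1) t * legendreP m t) =
        ((m : ℝ) + 2) * (legendreP (m + 2) t * legendreP m t)
          + ((m : ℝ) + 1) * (legendreP m t * legendreP m t) := by
      intro t; linear_combination legendreP m t * leg_mul m t
    rw [← intervalIntegral.integral_const_mul]
    simp_rw [this]
    rw [intervalIntegral.integral_add (leg_int _ (by fun_prop)) (leg_int _ (by fun_prop)),
      intervalIntegral.integral_const_mul, intervalIntegral.integral_const_mul,
      leg_orth (by omega)]
    ring
  have e2 : (2 * (m : ℝ) + 1) * ∫ t in (-1 : ℝ)..1, t * legendreP (m + 1) t * legendreP m t =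
      ((m : ℝ) + 1) * ∫ t in (-1 : ℝ)..1, legendreP (m + 1) t * legendreP (m + 1) t := by
    cases m with
    | zero => simp [legendreP]
    | succ k =>
      have c3 := continuous_legendreP k
      have : ∀ t, (2 * ((k + 1 : ℕ) : ℝ) + 1) * (t * legendreP (k + 1 + 1) t * legendreP (k + 1) t)
          = ((k : ℝ) + 2) * (legendreP (k + 2) t * legendreP (k + 2) t)
          + ((k : ℝ) + 1) * (legendreP (k + 2) t * legendreP k t) := by
        intro t; push_cast; linear_combination legendreP (k + 2) t * leg_mul k t
      rw [← intervalIntegral.integral_const_mul]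
      simp_rw [this]
      rw [intervalIntegral.integral_add (leg_int _ (by fun_prop)) (leg_int _ (by fun_prop)),
        intervalIntegral.integral_const_mul, intervalIntegral.integral_const_mul,
        leg_orth (m := k + 2) (n := k) (by omega)]
      push_cast
      ring
  have hm : (m : ℝ) + 1 ≠ 0 := by positivity
  apply mul_left_cancel₀ hm
  linear_combination (2 * (m : ℝ) + 1) * e1 - (2 * (m : ℝ) + 3) * e2

lemma leg_norm (m : ℕ) :
    (2 * (m : ℝ) + 1) * ∫ t in (-1 : ℝ)..1, legendreP m t * legendreP m t = 2 := by
  induction m with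
  | zero => simp [legendreP]; norm_num
  | succ m ih =>
    rw [leg_norm_succ m |>.symm] at ih
    push_cast; linear_combination ih

lemma continuous_legendreBar (m : ℕ) : Continuous (legendreBar m) := by
  have := continuous_legendreP m
  unfold legendreBar
  fun_prop

lemma bar_orth (m n : ℕ) :
    ∫ t in (-1 : ℝ)..1, legendreBar m t * legendreBar n t = if m = n then 1 else 0 := by
  have e : ∀ t, legendreBar m t * legendreBar n t =
      (Real.sqrt ((m : ℝ) + 1 / 2) * Real.sqrt ((n : ℝ) + 1 / 2)) *
        (legendreP m t * legendreP n t) := by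
    intro t; unfold legendreBar; ring
  simp_rw [e]
  rw [intervalIntegral.integral_const_mul]
  split_ifs with h
  · subst h
    rw [Real.mul_self_sqrt (by positivity)]
    linear_combination (1/2) * leg_norm m
  · rw [leg_orth h, mul_zero]

/-- Every polynomial function is in the span of the normalized Legendre polynomials. -/
lemma poly_mem_span (p : Polynomial ℝ) :
    (fun x => p.eval x) ∈ Submodule.span ℝ (Set.range legendreBar) := by
  have hP : ∀ m, legendreP m ∈ Submodule.span ℝ (Set.range legendreBar) := by
    intro m
    have : legendreP m = (Real.sqrt ((m : ℝ) + 1 / 2))⁻¹ • legendreBar m := by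
      have : Real.sqrt ((m : ℝ) + 1 / 2) ≠ 0 := by positivity
      funext x
      simp only [Pi.smul_apply, smul_eq_mul, legendreBar]
      field_simp
    rw [this]
    exact Submodule.smul_mem _ _ (Submodule.subset_span ⟨m, rfl⟩)
  have hX : ∀ f ∈ Submodule.span ℝ (Set.range legendreBar),
      (fun x => x * f x) ∈ Submodule.span ℝ (Set.range legendreBar) := by
    intro f hf
    induction hf using Submodule.span_induction with
    | mem f hf =>
      obtain ⟨m, rfl⟩ := hf
      have : (fun x => x * legendreBar m x) =
          Real.sqrt ((m : ℝ) + 1 / 2) • (fun x => x * legendreP m x) := by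
        funext x; simp only [Pi.smul_apply, smul_eq_mul, legendreBar]; ring
      rw [this]
      apply Submodule.smul_mem
      cases m with
      | zero =>
        have : (fun x => x * legendreP 0 x) = legendreP 1 := by funext x; simp [legendreP]
        rw [this]; exact hP 1
      | succ k =>
        have : (fun x => x * legendreP (k + 1) x) =
            (((k : ℝ) + 2) / (2 * (k : ℝ) + 3)) • legendreP (k + 2)
            + (((k : ℝ) + 1) / (2 * (k : ℝ) + 3)) • legendreP k := by
          funext x
          have := leg_mul k x
          simp only [Pi.add_apply, Pi.smul_apply, smul_eq_mul]
          field_simp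
          linear_combination this
        rw [this]
        exact Submodule.add_mem _ (Submodule.smul_mem _ _ (hP _)) (Submodule.smul_mem _ _ (hP _))
    | zero =>
      have : (fun x : ℝ => x * (0 : ℝ → ℝ) x) = 0 := by funext x; simp
      rw [this]; exact Submodule.zero_mem _
    | add f g _ _ hf hg =>
      have : (fun x : ℝ => x * (f + g) x) = (fun x => x * f x) + (fun x => x * g x) := by
        funext x; simp [mul_add]
      rw [this]; exact Submodule.add_mem _ hf hg
    | smul a f _ hf =>
      have : (fun x : ℝ => x * (a • f) x) = a • (fun x => x * f x) := by
        funext x; simp; ring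
      rw [this]; exact Submodule.smul_mem _ _ hf
  induction p using Polynomial.induction_on' with
  | add p q hp hq =>
    have : (fun x => (p + q).eval x) = (fun x => p.eval x) + (fun x => q.eval x) := by
      funext x; simp
    rw [this]; exact Submodule.add_mem _ hp hq
  | monomial n a =>
    have hpow : (fun x : ℝ => x ^ n) ∈ Submodule.span ℝ (Set.range legendreBar) := by
      induction n with
      | zero =>
        have : (fun x : ℝ => x ^ 0) = legendreP 0 := by funext x; simp [legendreP]
        rw [this]; exact hP 0
      | succ n ih =>
        have : (fun x : ℝ => x ^ (n + 1)) = fun x => x * x ^ n := by funext x; ring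
        rw [this]; exact hX _ ih
    have : (fun x => (Polynomial.monomial n a).eval x) = a • (fun x : ℝ => x ^ n) := by
      funext x; simp
    rw [this]; exact Submodule.smul_mem _ _ hpow

lemma bessel_id {f : ℝ → ℝ} (hf : ContinuousOn f (Set.Icc (-1) 1))
    (h1 : ∫ t in (-1 : ℝ)..1, f t ^ 2 = 1) (s : Finset ℕ) (d : ℕ → ℝ) :
    ∫ t in (-1 : ℝ)..1, (f t - ∑ m ∈ s, d m * legendreBar m t) ^ 2 =
      1 - ∑ m ∈ s, (∫ t in (-1 : ℝ)..1, f t * legendreBar m t) ^ 2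
        + ∑ m ∈ s, ((∫ t in (-1 : ℝ)..1, f t * legendreBar m t) - d m) ^ 2 := by
  have cB := continuous_legendreBar
  have ci : ∀ h : ℝ → ℝ, ContinuousOn h (Set.Icc (-1) 1) → IntervalIntegrable h volume (-1) 1 := by
    intro h hh
    apply ContinuousOn.intervalIntegrable
    rwa [Set.uIcc_of_le (by norm_num)]
  have cS : Continuous (fun t => ∑ m ∈ s, d m * legendreBar m t) := by fun_prop
  set S : ℝ → ℝ := fun t => ∑ m ∈ s, d m * legendreBar m t with hS
  have e1 : ∫ t in (-1 : ℝ)..1, f t * S t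
      = ∑ m ∈ s, d m * ∫ t in (-1 : ℝ)..1, f t * legendreBar m t := by
    simp_rw [hS, Finset.mul_sum]
    rw [intervalIntegral.integral_finsetSum]
    · apply Finset.sum_congr rfl
      intro m _
      rw [← intervalIntegral.integral_const_mul]
      congr 1; funext t; ring
    · intro m _
      exact ci _ (hf.mul (continuous_const.mul (cB m)).continuousOn)
  have e2 : ∀ j ∈ s, ∫ t in (-1 : ℝ)..1, legendreBar j t * S t = d j := by
    intro j hj
    simp_rw [hS, Finset.mul_sum]
    rw [intervalIntegral.integral_finsetSum]
    · rw [Finset.sum_eq_single j]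
      · have : ∀ t, legendreBar j t * (d j * legendreBar j t)
          = d j * (legendreBar j t * legendreBar j t) := by intro t; ring
        simp_rw [this]
        rw [intervalIntegral.integral_const_mul, bar_orth]; simp
      · intro m _ hm
        have : ∀ t, legendreBar j t * (d m * legendreBar m t)
          = d m * (legendreBar j t * legendreBar m t) := by intro t; ring
        simp_rw [this]
        rw [intervalIntegral.integral_const_mul, bar_orth]; simp [hm.symm]
      · intro h; exact absurd hj h
    · intro m _
      exact leg_int _ ((cB j).mul (continuous_const.mul (cB m)))
  have e3 : ∫ t in (-1 : ℝ)..1, S t * S t = ∑ m ∈ s, d m ^ 2 := by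
    have : ∀ t, S t * S t = ∑ m ∈ s, d m * (legendreBar m t * S t) := by
      intro t
      conv_lhs => rw [hS]; simp only []
      rw [Finset.sum_mul]
      apply Finset.sum_congr rfl; intro m _; ring
    simp_rw [this]
    rw [intervalIntegral.integral_finsetSum]
    · apply Finset.sum_congr rfl
      intro m hm
      rw [intervalIntegral.integral_const_mul, e2 m hm]; ring
    · intro m _
      exact leg_int _ (continuous_const.mul ((cB m).mul cS))
  have e4 : ∀ t, (f t - S t) ^ 2 = (f t ^ 2 - 2 * (f t * S t)) + S t * S t := by
    intro t; ring
  have i1 : IntervalIntegrable (fun t => f t ^ 2) volume (-1) 1 := ci _ (hf.pow 2)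
  have i2 : IntervalIntegrable (fun t => 2 * (f t * S t)) volume (-1) 1 :=
    ci _ (continuousOn_const.mul (hf.mul cS.continuousOn))
  change ∫ t in (-1 : ℝ)..1, (f t - S t) ^ 2 = _
  simp_rw [e4]
  rw [intervalIntegral.integral_add (i1.sub i2) (leg_int (fun t => S t * S t) (cS.mul cS)),
    intervalIntegral.integral_sub i1 i2, intervalIntegral.integral_const_mul, h1, e1, e3]
  simp_rw [sub_sq]
  rw [Finset.sum_add_distrib, Finset.sum_sub_distrib, Finset.mul_sum]
  have : ∀ m, 2 * (d m * ∫ t in (-1 : ℝ)..1, f t * legendreBar m t)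
      = 2 * (∫ t in (-1 : ℝ)..1, f t * legendreBar m t) * d m := by intro m; ring
  simp_rw [this]
  ring

lemma parseval {f : ℝ → ℝ} (hf : ContinuousOn f (Set.Icc (-1) 1))
    (h1 : ∫ t in (-1 : ℝ)..1, f t ^ 2 = 1) :
    HasSum (fun m => (∫ t in (-1 : ℝ)..1, f t * legendreBar m t) ^ 2) 1 := by
  apply hasSum_of_isLUB_of_nonneg
  · intro m; positivity
  constructor
  · rintro _ ⟨s, rfl⟩
    have h := bessel_id hf h1 s (fun m => ∫ t in (-1 : ℝ)..1, f t * legendreBar m t)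
    have h0 : 0 ≤ ∫ t in (-1 : ℝ)..1, (f t - ∑ m ∈ s,
        (∫ t in (-1 : ℝ)..1, f t * legendreBar m t) * legendreBar m t) ^ 2 :=
      intervalIntegral.integral_nonneg (by norm_num) (fun t _ => sq_nonneg _)
    simp only [sub_self, ne_eq, OfNat.ofNat_ne_zero, not_false_eq_true, zero_pow,
      Finset.sum_const_zero, add_zero] at h
    simp only
    linarith
  · intro B hB
    apply le_of_forall_pos_le_add
    intro ε hε
    obtain ⟨p, hp⟩ := exists_polynomial_near_of_continuousOn (-1) 1 f hf (Real.sqrt (ε / 2))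
      (by positivity)
    obtain ⟨d, hd⟩ := Finsupp.mem_span_range_iff_exists_finsupp.1 (poly_mem_span p)
    have hd' : ∀ t, p.eval t = ∑ m ∈ d.support, d m * legendreBar m t := by
      intro t
      have := congrFun hd t
      rw [← this, Finsupp.sum, Finset.sum_apply]
      simp
    have h := bessel_id hf h1 d.support d
    have hle : ∫ t in (-1 : ℝ)..1, (f t - ∑ m ∈ d.support, d m * legendreBar m t) ^ 2 ≤ ε := by
      have hc : ContinuousOn (fun t => (f t - ∑ m ∈ d.support, d m * legendreBar m t) ^ 2)
          (Set.Icc (-1) 1) := by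
        have : Continuous (fun t => ∑ m ∈ d.support, d m * legendreBar m t) := by
          have cB := continuous_legendreBar
          fun_prop
        exact (hf.sub this.continuousOn).pow 2
      have := intervalIntegral.integral_mono_on (a := -1) (b := 1) (μ := volume)
        (f := fun t => (f t - ∑ m ∈ d.support, d m * legendreBar m t) ^ 2)
        (g := fun _ => ε / 2) (by norm_num)
        (ContinuousOn.intervalIntegrable (by rwa [Set.uIcc_of_le (by norm_num)]))
        (by simp) (by
          intro t ht
          have := hp t ht
          rw [hd'] at this
          rw [← Real.sq_sqrt (show 0 ≤ ε / 2 by positivity), ← sq_abs, abs_sub_comm]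
          exact pow_le_pow_left₀ (abs_nonneg _) this.le 2)
      refine this.trans ?_
      simp
      linarith
    have hs := hB ⟨d.support, rfl⟩
    simp only at hs
    have h0 : 0 ≤ ∑ m ∈ d.support, ((∫ t in (-1 : ℝ)..1, f t * legendreBar m t) - d m) ^ 2 :=
      Finset.sum_nonneg fun _ _ => sq_nonneg _
    linarith

lemma legendreP_neg (m : ℕ) (t : ℝ) : legendreP m (-t) = (-1) ^ m * legendreP m t := by
  induction m using Nat.twoStepInduction with
  | zero => simp [legendreP]
  | one => simp [legendreP]
  | more m h1 h2 =>
    rw [legendreP, h1, h2, legendreP, pow_succ, pow_succ]; ring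

lemma odd_coeff {f : ℝ → ℝ} (hf : ∀ x ∈ Set.Ioo (-1 : ℝ) 1, f (-x) = f x) (k : ℕ) :
    ∫ t in (-1 : ℝ)..1, f t * legendreBar (2 * k + 1) t = 0 := by
  have h1 := intervalIntegral.integral_comp_neg (a := -1) (b := 1)
    (fun t => f t * legendreBar (2 * k + 1) t)
  simp only [neg_neg] at h1
  have h2 : ∫ t in (-1 : ℝ)..1, f (-t) * legendreBar (2 * k + 1) (-t) =
      ∫ t in (-1 : ℝ)..1, -(f t * legendreBar (2 * k + 1) t) := by
    apply intervalIntegral.integral_congr_Ioo_of_le (by norm_num)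
    intro t ht
    simp only [legendreBar, legendreP_neg, hf t ht]
    rw [Odd.neg_one_pow ⟨k, rfl⟩]; ring
  rw [intervalIntegral.integral_neg] at h2
  linarith

lemma even_parseval {f : ℝ → ℝ} (hc : ContinuousOn f (Set.Icc (-1) 1))
    (h1 : ∫ t in (-1 : ℝ)..1, f t ^ 2 = 1) (hf : ∀ x ∈ Set.Ioo (-1 : ℝ) 1, f (-x) = f x) :
    ∑' k : ℕ, (∫ t in (-1 : ℝ)..1, f t * legendreBar (2 * k) t) ^ 2 = 1 := by
  have hinj : Function.Injective (fun k : ℕ => 2 * k) := fun a b h => by simpa using h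
  have h := (hinj.hasSum_iff (f := fun m => (∫ t in (-1 : ℝ)..1, f t * legendreBar m t) ^ 2)
    (a := 1) ?_).2 (parseval hc h1)
  · exact h.tsum_eq
  · intro m hm
    rcases Nat.even_or_odd' m with ⟨k, rfl | rfl⟩
    · exact absurd ⟨k, rfl⟩ hm
    · simp only [odd_coeff hf]; simp

lemma leg_sq (m : ℕ) (t : ℝ) :
    (2 * (m : ℝ) + 7) * (2 * m + 5) * (2 * m + 3) * (t ^ 2 * legendreP (m + 2) t) =
      ((m : ℝ) + 3) * (m + 4) * (2 * m + 3) * legendreP (m + 4) t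
      + (((m : ℝ) + 3) ^ 2 * (2 * m + 3) + ((m : ℝ) + 2) ^ 2 * (2 * m + 7)) * legendreP (m + 2) t
      + ((m : ℝ) + 2) * (m + 1) * (2 * m + 7) * legendreP m t := by
  have h0 := leg_mul m t
  have h1 := leg_mul (m + 1) t
  have h2 := leg_mul (m + 2) t
  push_cast at h1 h2
  linear_combination (2 * (m : ℝ) + 7) * (2 * m + 3) * t * h1
    + ((m : ℝ) + 3) * (2 * m + 3) * h2 + ((m : ℝ) + 2) * (2 * m + 7) * h0

lemma rec_I {c χ : ℝ} {f g : ℝ → ℝ} (h : PSol_s19 (fun x => c ^ 2 * x ^ 2 - χ) f g) (m : ℕ) :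
    c ^ 2 * (((m : ℝ) + 3) * (m + 4) * (2 * m + 3) *
        (∫ t in (-1 : ℝ)..1, f t * legendreP (m + 4) t)
      + (((m : ℝ) + 3) ^ 2 * (2 * m + 3) + ((m : ℝ) + 2) ^ 2 * (2 * m + 7)) *
        (∫ t in (-1 : ℝ)..1, f t * legendreP (m + 2) t)
      + ((m : ℝ) + 2) * (m + 1) * (2 * m + 7) * (∫ t in (-1 : ℝ)..1, f t * legendreP m t))
      + (2 * (m : ℝ) + 7) * (2 * m + 5) * (2 * m + 3) * ((m + 2) * (m + 3) - χ) *
        (∫ t in (-1 : ℝ)..1, f t * legendreP (m + 2) t) = 0 := by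
  have hg := h.green (by fun_prop) (fun x => by ring) (m + 2)
  have ci : ∀ j, IntervalIntegrable (fun t => f t * legendreP j t) volume (-1) 1 := by
    intro j
    apply ContinuousOn.intervalIntegrable
    rw [Set.uIcc_of_le (by norm_num)]
    exact h.cont.mul (continuous_legendreP j).continuousOn
  have hz := congrArg (fun z => (2 * (m : ℝ) + 7) * (2 * m + 5) * (2 * m + 3) * z) hg
  simp only [mul_zero] at hz
  rw [← intervalIntegral.integral_const_mul] at hz
  have e : ∀ t, (2 * (m : ℝ) + 7) * (2 * m + 5) * (2 * m + 3) *
      ((c ^ 2 * t ^ 2 - χ + ((m + 2 : ℕ) : ℝ) * (((m + 2 : ℕ) : ℝ) + 1)) * f t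
        * legendreP (m + 2) t) =
      (c ^ 2 * (((m : ℝ) + 3) * (m + 4) * (2 * m + 3))) * (f t * legendreP (m + 4) t)
      + (c ^ 2 * (((m : ℝ) + 3) ^ 2 * (2 * m + 3) + ((m : ℝ) + 2) ^ 2 * (2 * m + 7))
        + (2 * (m : ℝ) + 7) * (2 * m + 5) * (2 * m + 3) * ((m + 2) * (m + 3) - χ)) *
          (f t * legendreP (m + 2) t)
      + (c ^ 2 * (((m : ℝ) + 2) * (m + 1) * (2 * m + 7))) * (f t * legendreP m t) := by
    intro t
    push_cast
    linear_combination c ^ 2 * f t * leg_sq m t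
  simp_rw [e] at hz
  rw [intervalIntegral.integral_add (((ci _).const_mul _).add ((ci _).const_mul _))
    ((ci _).const_mul _), intervalIntegral.integral_add ((ci _).const_mul _) ((ci _).const_mul _),
    intervalIntegral.integral_const_mul, intervalIntegral.integral_const_mul,
    intervalIntegral.integral_const_mul] at hz
  linear_combination hz

lemma rec_I0 {c χ : ℝ} {f g : ℝ → ℝ} (h : PSol_s19 (fun x => c ^ 2 * x ^ 2 - χ) f g) :
    c ^ 2 * (2 * (∫ t in (-1 : ℝ)..1, f t * legendreP 2 t)
      + ∫ t in (-1 : ℝ)..1, f t * legendreP 0 t)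
      - 3 * χ * (∫ t in (-1 : ℝ)..1, f t * legendreP 0 t) = 0 := by
  have hg := h.green (by fun_prop) (fun x => by ring) 0
  have ci : ∀ j, IntervalIntegrable (fun t => f t * legendreP j t) volume (-1) 1 := by
    intro j
    apply ContinuousOn.intervalIntegrable
    rw [Set.uIcc_of_le (by norm_num)]
    exact h.cont.mul (continuous_legendreP j).continuousOn
  have e : ∀ t, ((c ^ 2 * t ^ 2 - χ + ((0 : ℕ) : ℝ) * (((0 : ℕ) : ℝ) + 1)) * f t
        * legendreP 0 t) =
      (c ^ 2 * (2 / 3)) * (f t * legendreP 2 t)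
      + (c ^ 2 / 3 - χ) * (f t * legendreP 0 t) := by
    intro t
    simp [legendreP]
    ring
  simp_rw [e] at hg
  rw [intervalIntegral.integral_add ((ci _).const_mul _) ((ci _).const_mul _),
    intervalIntegral.integral_const_mul, intervalIntegral.integral_const_mul] at hg
  linear_combination 3 * hg

lemma bar_coeff (f : ℝ → ℝ) (m : ℕ) : ∫ t in (-1 : ℝ)..1, f t * legendreBar m t =
    Real.sqrt (2 * (m : ℝ) + 1) / Real.sqrt 2 * ∫ t in (-1 : ℝ)..1, f t * legendreP m t := by
  rw [← Real.sqrt_div' _ (by norm_num), ← intervalIntegral.integral_const_mul]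
  congr 1
  funext t
  rw [legendreBar, show (2 * (m : ℝ) + 1) / 2 = m + 1 / 2 by ring]
  ring

theorem stmt19 (c : ℝ) (hc : 0 < c) (n : ℕ) (hn : 0 < n) (hev : Even n)
    (ψ : ℝ → ℝ) (χ : ℝ) (lam : ℂ)
    (hpswf : IsPSWF c n ψ χ lam)
    (a cs bs : ℕ → ℝ)
    (ha : ∀ k : ℕ, 1 ≤ k → a k = ∫ t in (-1 : ℝ)..1, ψ t * legendreBar (2 * (k - 1)) t)
    (hcs : ∀ k : ℕ, 1 ≤ k →
      cs k = 2 * (k : ℝ) * (2 * (k : ℝ) - 1) /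
          ((4 * (k : ℝ) - 1) * Real.sqrt ((4 * (k : ℝ) - 3) * (4 * (k : ℝ) + 1))) * c ^ 2)
    (hbs : ∀ k : ℕ, 1 ≤ k →
      bs k = 2 * ((k : ℝ) - 1) * (2 * (k : ℝ) - 1) +
          (2 * (2 * (k : ℝ) - 1) * (2 * (k : ℝ) - 2) - 1) /
            ((4 * (k : ℝ) - 1) * (4 * (k : ℝ) - 5)) * c ^ 2 - χ) :
    cs 1 * a 2 + bs 1 * a 1 = 0 ∧
    (∀ k : ℕ, 1 ≤ k → cs (k + 1) * a (k + 2) + bs (k + 1) * a (k + 1) + cs k * a k = 0) ∧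
    ∑' k : ℕ, a (k + 1) ^ 2 = 1 := by
  have hS := PSol_s19.of_pswf hpswf
  obtain ⟨hcont, -, -, hfin, hcard, hnorm, -⟩ := hpswf
  have hA : ∀ j : ℕ, a (j + 1) = Real.sqrt (4 * (j : ℝ) + 1) / Real.sqrt 2 *
      ∫ t in (-1 : ℝ)..1, ψ t * legendreP (2 * j) t := by
    intro j
    rw [ha (j + 1) (by omega), Nat.add_sub_cancel, bar_coeff]
    push_cast
    rw [show 2 * (2 * (j : ℝ)) + 1 = 4 * j + 1 by ring]
  refine ⟨?_, ?_, ?_⟩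
  · have h0 := rec_I0 hS
    have h1 := hA 0
    have h2 := hA 1
    norm_num at h1 h2
    rw [hcs 1 le_rfl, hbs 1 le_rfl, h1, h2]
    have h5 : Real.sqrt 5 ≠ 0 := by positivity
    have h22 : Real.sqrt 2 ≠ 0 := by positivity
    norm_num
    field_simp
    linear_combination h0
  · intro k hk
    obtain ⟨j, rfl⟩ : ∃ j, k = j + 1 := ⟨k - 1, by omega⟩
    have h0 := rec_I hS (2 * j)
    have h1 := hA j
    have h2 := hA (j + 1)
    have h3 := hA (j + 1 + 1)
    rw [show 2 * (j + 1 + 1) = 2 * j + 4 by ring] at h3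
    rw [show 2 * (j + 1) = 2 * j + 2 by ring] at h2
    push_cast at h0 h1 h2 h3
    rw [show 4 * ((j : ℝ) + 1) + 1 = 4 * j + 5 by ring] at h2
    rw [show 4 * ((j : ℝ) + 1 + 1) + 1 = 4 * j + 9 by ring] at h3
    rw [hcs _ hk, hcs _ (by omega), hbs _ (by omega), h1, h2, h3]
    push_cast
    rw [show 4 * ((j : ℝ) + 1 + 1) - 3 = 4 * j + 5 by ring,
      show 4 * ((j : ℝ) + 1 + 1) + 1 = 4 * j + 9 by ring,
      show 4 * ((j : ℝ) + 1) - 3 = 4 * j + 1 by ring,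
      show 4 * ((j : ℝ) + 1) + 1 = 4 * j + 5 by ring,
      show 4 * ((j : ℝ) + 1 + 1) - 1 = 4 * j + 7 by ring,
      show 4 * ((j : ℝ) + 1 + 1) - 5 = 4 * j + 3 by ring,
      show 4 * ((j : ℝ) + 1) - 1 = 4 * j + 3 by ring,
      Real.sqrt_mul (by positivity), Real.sqrt_mul (by positivity)]
    generalize (∫ t in (-1 : ℝ)..1, ψ t * legendreP (2 * j) t) = I0 at h0 ⊢
    generalize (∫ t in (-1 : ℝ)..1, ψ t * legendreP (2 * j + 2) t) = I1 at h0 ⊢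
    generalize (∫ t in (-1 : ℝ)..1, ψ t * legendreP (2 * j + 4) t) = I2 at h0 ⊢
    have q1 : Real.sqrt (4 * (j : ℝ) + 1) ≠ 0 := by positivity
    have q5 : Real.sqrt (4 * (j : ℝ) + 5) ≠ 0 := by positivity
    have q9 : Real.sqrt (4 * (j : ℝ) + 9) ≠ 0 := by positivity
    have q2 : Real.sqrt 2 ≠ 0 := by positivity
    have s5 : Real.sqrt (4 * (j : ℝ) + 5) ^ 2 = 4 * j + 5 := Real.sq_sqrt (by positivity)
    have p3 : 4 * (j : ℝ) + 3 ≠ 0 := by positivity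
    have p7 : 4 * (j : ℝ) + 7 ≠ 0 := by positivity
    generalize Real.sqrt (4 * (j : ℝ) + 1) = s1 at *
    generalize Real.sqrt (4 * (j : ℝ) + 5) = r5 at *
    generalize Real.sqrt (4 * (j : ℝ) + 9) = s9 at *
    field_simp
    rw [s5]
    linear_combination h0
  · have hev' := hS.even (by fun_prop) (fun x => by ring) hfin (by rw [hcard]; exact hev)
    have := even_parseval hcont hnorm hev'
    rw [← this]
    congr 1
    funext k
    rw [ha (k + 1) (by omega), Nat.add_sub_cancel]
end
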